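/- arXiv:2311.06173 — 2 statements merged into one kernel-verified Lean document; each statement's English description precedes it below -/
import Mathlib

section
/- Let k be an algebraically closed field, m ≥ 2 and n ≥ 1. Then the algebra A(n,m,m−1) is geometrically irreducible; concretely, for all d, e ∈ ℕ the Zariski-closed subset of M_{d×d}(k) × M_{e×e}(k) × M_{d×e}(k)^n consisting of all tuples (V, U, Z_1, …, Z_n) with V^m = 0, U^m = 0 and Σ_{i=0}^{m−1} V^{m−1−i} Z_1 U^{i} = 0 is an irreducible topological space. -/
/-!
Formalization of a statement from:
"Algebras with irreducible module varieties: two-vertex case completed"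
-/

universe u v

open Quiver

noncomputable section

/-- The Zariski topology on the affine coordinate space `ι → k`: it is generated by the
basic open sets `{x | p(x) ≠ 0}` for multivariate polynomials `p`. -/
def zariskiTop (k : Type u) [CommSemiring k] (ι : Type v) : TopologicalSpace (ι → k) :=
  TopologicalSpace.generateFrom
    {U | ∃ p : MvPolynomial ι k, U = {x | MvPolynomial.eval x p ≠ 0}}

/-- The ambient affine space for the representation varieties of `A(n, m, m-1)` with
dimension vector `(d, e)`: a `d × d` matrix (the value at the loop `ε₀`), an `e × e`
matrix (the value at the loop `ε₁`) and `n` matrices of size `d × e` (the values at the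
arrows `α_1, …, α_n`). -/
def ASpace (k : Type u) [Field k] (n d e : ℕ) : Type u :=
  Matrix (Fin d) (Fin d) k × Matrix (Fin e) (Fin e) k × (Fin n → Matrix (Fin d) (Fin e) k)

/-- The index type for the affine coordinates on `ASpace`. -/
def AIdx (n d e : ℕ) : Type := (Fin d × Fin d) ⊕ (Fin e × Fin e) ⊕ (Fin n × Fin d × Fin e)

/-- The affine coordinates on `ASpace`. -/
def aCoords {k : Type u} [Field k] {n d e : ℕ} (x : ASpace k n d e) : AIdx n d e → k
  | Sum.inl i => x.1 i.1 i.2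
  | Sum.inr (Sum.inl i) => x.2.1 i.1 i.2
  | Sum.inr (Sum.inr i) => x.2.2 i.1 i.2.1 i.2.2

/-- The Zariski topology on `ASpace`. -/
def aTop (k : Type u) [Field k] (n d e : ℕ) : TopologicalSpace (ASpace k n d e) :=
  (zariskiTop k (AIdx n d e)).induced aCoords

/-!
The part `(V, U, Z₁)` of a tuple is a block triangular endomorphism `W` of `M = k ^ (d + e)`
stabilizing `N = k ^ d`, the defining equations say that `W ^ m = 0`, and the other `Zᵢ` are free.
So it suffices to see that the set of `W` with `W ^ m = 0` and `W N ≤ N` is irreducible. This is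
done by induction, passing from `m + 1` to `m + 2`.

For a subspace `F`, the `W` with `range W ≤ F ≤ ker (W ^ (m + 1))` form a stratum, which is a linear
image of the product of a vector space and the set for `N ⊓ F ≤ F` and the exponent `m + 1`, hence
irreducible. The `W` for which `W ^ (m + 1)` has the maximal possible rank `dim N / (m + 2)` on `N`
lie in strata for which `dim F` and `dim (N ⊓ F)` do not depend on `W`. These strata are conjugate
under the stabilizer of `N` in `GL(M)`, so their union is irreducible, and it remains to see that
these `W` are dense, that is, that the rank on `N` can be increased unless it is maximal.

To this end let `W` be generic in its stratum with `F = ker (W ^ (m + 1))`. If `N ⊓ F` is not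
contained in `range W`, then `W` also lies in a stratum attached to a smaller subspace, whose
generic elements have larger rank. Otherwise `N = M` is impossible, and for `N ≠ M` genericity under
rank one perturbations gives `range W = F`; that is, `M` is free over `k[X] ⧸ (X ^ (m + 2))`. By
Higman's criterion the identity of `M` is then a norm sum `∑ i, W ^ (m + 1 - i) * ψ * W ^ i`, and
norm sums extend deformations of `W|N`, up to conjugation, to deformations of `W`. This reduces the
claim to the case `N = M`.
-/

namespace GeometricIrreducibility

open Module Submodule TopologicalSpace
open scoped Topology

variable {k : Type*} [Field k]
variable {V : Type*} [AddCommGroup V] [Module k V]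
variable {V' : Type*} [AddCommGroup V'] [Module k V']
variable {V'' : Type*} [AddCommGroup V''] [Module k V'']

/-! ### Polynomial maps -/

section PolynomialMaps

variable (k) in
/-- The algebra of polynomial functions on a vector space, generated by the linear forms. -/
def polyFun (V : Type*) [AddCommGroup V] [Module k V] : Subalgebra k (V → k) :=
  Algebra.adjoin k (Set.range fun (φ : Dual k V) (x : V) => φ x)

variable (k) in
/-- A map of vector spaces is polynomial if all its coordinates, that is, its composites with
linear forms, are polynomial functions. -/
def IsPolyMap (f : V → V') : Prop :=
  ∀ φ : Dual k V', (fun x => φ (f x)) ∈ polyFun k V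

lemma dual_mem_polyFun (φ : Dual k V) : (fun x => φ x) ∈ polyFun k V :=
  Algebra.subset_adjoin ⟨φ, rfl⟩

lemma const_mem_polyFun (c : k) : (fun _ : V => c) ∈ polyFun k V :=
  (polyFun k V).algebraMap_mem c

lemma isPolyMap_linear (f : V →ₗ[k] V') : IsPolyMap k f :=
  fun φ => dual_mem_polyFun (φ ∘ₗ f)

lemma isPolyMap_const (c : V') : IsPolyMap k fun _ : V => c :=
  fun φ => const_mem_polyFun (φ c)

namespace IsPolyMap

lemma comp_mem_polyFun {f : V → V'} (hf : IsPolyMap k f) {p : V' → k} (hp : p ∈ polyFun k V') :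
    (fun x => p (f x)) ∈ polyFun k V := by
  induction hp using Algebra.adjoin_induction with
  | mem p hp =>
    obtain ⟨φ, rfl⟩ := hp
    exact hf φ
  | algebraMap c => exact const_mem_polyFun c
  | add p q _ _ hp hq => exact add_mem hp hq
  | mul p q _ _ hp hq => exact mul_mem hp hq

lemma comp {g : V' → V''} (hg : IsPolyMap k g) {f : V → V'} (hf : IsPolyMap k f) :
    IsPolyMap k fun x => g (f x) :=
  fun φ => hf.comp_mem_polyFun (hg φ)

lemma add {f g : V → V'} (hf : IsPolyMap k f) (hg : IsPolyMap k g) :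
    IsPolyMap k fun x => f x + g x := fun φ => by
  simp only [map_add]
  exact add_mem (hf φ) (hg φ)

lemma sum {ι : Type*} {s : Finset ι} {f : ι → V → V'} (hf : ∀ i ∈ s, IsPolyMap k (f i)) :
    IsPolyMap k fun x => ∑ i ∈ s, f i x := fun φ => by
  have h : ∑ i ∈ s, (fun x => φ (f i x)) ∈ polyFun k V := sum_mem fun i hi => hf i hi φ
  simpa only [map_sum, Finset.sum_fn] using h

lemma smul {p : V → k} (hp : p ∈ polyFun k V) {f : V → V'} (hf : IsPolyMap k f) :
    IsPolyMap k fun x => p x • f x := fun φ => by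
  simp only [map_smul]
  exact mul_mem hp (hf φ)

/-- Expanding the first argument in a basis writes the form as a sum of products of polynomial
functions with polynomial maps. -/
lemma bilin {V₁ V₂ : Type*} [AddCommGroup V₁] [Module k V₁] [FiniteDimensional k V₁]
    [AddCommGroup V₂] [Module k V₂] (B : V₁ →ₗ[k] V₂ →ₗ[k] V'')
    {f : V → V₁} {g : V → V₂} (hf : IsPolyMap k f) (hg : IsPolyMap k g) :
    IsPolyMap k fun x => B (f x) (g x) := by
  let b := finBasis k V₁
  have h (x : V) : B (f x) (g x) = ∑ i, b.coord i (f x) • B (b i) (g x) := by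
    conv_lhs => rw [← b.sum_repr (f x)]
    simp only [map_sum, map_smul, LinearMap.sum_apply, LinearMap.smul_apply, Basis.coord_apply]
  simp only [h]
  exact sum fun i _ => smul (hf _) ((isPolyMap_linear (B (b i))).comp hg)

variable {M : Type*} [AddCommGroup M] [Module k M] [FiniteDimensional k M]

lemma mul {f g : V → End k M} (hf : IsPolyMap k f) (hg : IsPolyMap k g) :
    IsPolyMap k fun x => f x * g x :=
  bilin (LinearMap.mul k (End k M)) hf hg

lemma pow {f : V → End k M} (hf : IsPolyMap k f) (n : ℕ) : IsPolyMap k fun x => f x ^ n := by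
  induction n with
  | zero => simpa only [pow_zero] using isPolyMap_const 1
  | succ n ih => simpa only [pow_succ] using ih.mul hf

end IsPolyMap

/-- A family of matrices with polynomial entries is a matrix over the ring of polynomial functions,
so that every polynomial matrix invariant of it is computed there. -/
lemma det_mem_polyFun {ι : Type*} [Fintype ι] [DecidableEq ι] {A : V → Matrix ι ι k}
    (hA : ∀ i j, (fun x => A x i j) ∈ polyFun k V) : (fun x => (A x).det) ∈ polyFun k V := by
  let B : Matrix ι ι (polyFun k V) := Matrix.of fun i j => ⟨_, hA i j⟩
  convert B.det.2 using 1
  ext x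
  exact (((Pi.evalRingHom (fun _ : V => k) x).comp (polyFun k V).val.toRingHom).map_det B).symm

lemma adjugate_mem_polyFun {ι : Type*} [Fintype ι] [DecidableEq ι] {A : V → Matrix ι ι k}
    (hA : ∀ i j, (fun x => A x i j) ∈ polyFun k V) (i j : ι) :
    (fun x => (A x).adjugate i j) ∈ polyFun k V := by
  simp only [Matrix.adjugate_apply]
  refine det_mem_polyFun fun i' j' => ?_
  obtain rfl | h := eq_or_ne i' j
  · simpa only [Matrix.updateRow_self] using const_mem_polyFun _
  · simpa only [Matrix.updateRow_ne h] using hA i' j'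

end PolynomialMaps

/-! ### The adjugate of an endomorphism -/

section Adjugate

variable {M : Type*} [AddCommGroup M] [Module k M] [FiniteDimensional k M]

/-- The adjugate of an endomorphism, computed in a fixed basis. It replaces the inverse in order to
make conjugation a polynomial map. -/
def endAdjugate (T : End k M) : End k M :=
  Matrix.toLinAlgEquiv (finBasis k M) (LinearMap.toMatrixAlgEquiv (finBasis k M) T).adjugate

lemma endAdjugate_mul (T : End k M) : endAdjugate T * T = LinearMap.det T • 1 := by
  apply (LinearMap.toMatrixAlgEquiv (finBasis k M)).injective
  rw [map_mul, map_smul, map_one, endAdjugate, LinearMap.toMatrixAlgEquiv_toLinAlgEquiv,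
    Matrix.adjugate_mul, ← LinearMap.det_toMatrix (finBasis k M)]
  rfl

lemma endAdjugate_eq_det_smul_symm (g : M ≃ₗ[k] M) :
    endAdjugate (g : End k M) = LinearMap.det (g : End k M) • (g.symm : End k M) := by
  have h : (g : End k M) * (g.symm : End k M) = 1 := by ext; simp
  rw [← mul_one (endAdjugate _), ← h, ← mul_assoc, endAdjugate_mul, smul_one_mul]

lemma toMatrix_entry_mem_polyFun {f : V → End k M} (hf : IsPolyMap k f)
    (i j : Fin (finrank k M)) :
    (fun x => LinearMap.toMatrixAlgEquiv (finBasis k M) (f x) i j) ∈ polyFun k V :=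
  hf (Matrix.entryLinearMap k k i j ∘ₗ
    (LinearMap.toMatrixAlgEquiv (finBasis k M)).toLinearMap)

lemma IsPolyMap.det_mem_polyFun {f : V → End k M} (hf : IsPolyMap k f) :
    (fun x => LinearMap.det (f x)) ∈ polyFun k V := by
  simp only [← LinearMap.det_toMatrix (finBasis k M)]
  exact GeometricIrreducibility.det_mem_polyFun (toMatrix_entry_mem_polyFun hf)

lemma IsPolyMap.endAdjugate {f : V → End k M} (hf : IsPolyMap k f) :
    IsPolyMap k fun x => endAdjugate (f x) := fun φ => by
  have h (T : End k M) : GeometricIrreducibility.endAdjugate T = ∑ i, ∑ j,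
      (LinearMap.toMatrixAlgEquiv (finBasis k M) T).adjugate i j •
        Matrix.toLinAlgEquiv (finBasis k M) (Matrix.single i j 1) := by
    conv_lhs => rw [GeometricIrreducibility.endAdjugate, Matrix.matrix_eq_sum_single
      (LinearMap.toMatrixAlgEquiv (finBasis k M) T).adjugate]
    simp only [map_sum, ← map_smul, Matrix.smul_single, smul_eq_mul, mul_one]
  simp only [h]
  exact IsPolyMap.sum (fun i _ => IsPolyMap.sum fun j _ => IsPolyMap.smul
    (adjugate_mem_polyFun (toMatrix_entry_mem_polyFun hf) i j) (isPolyMap_const _)) φ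

end Adjugate

/-! ### Irreducible subsets of topological spaces -/

section Irreducible

variable {X : Type*} [TopologicalSpace X] {S T U : Set X}

lemma isIrreducible_inter_of_isOpen (hT : IsIrreducible T) (hU : IsOpen U)
    (h : (T ∩ U).Nonempty) : IsIrreducible (T ∩ U) := by
  refine ⟨h, ?_⟩
  rintro u v hu hv ⟨x, ⟨hxT, hxU⟩, hxu⟩ ⟨y, ⟨hyT, hyU⟩, hyv⟩
  obtain ⟨z, hzT, ⟨hzU, hzu⟩, -, hzv⟩ :=
    hT.2 _ _ (hU.inter hu) (hU.inter hv) ⟨x, hxT, hxU, hxu⟩ ⟨y, hyT, hyU, hyv⟩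
  exact ⟨z, ⟨hzT, hzU⟩, hzu, hzv⟩

lemma subset_closure_of_inter_isOpen_subset_closure (hT : IsIrreducible T) (hU : IsOpen U)
    (h : (T ∩ U).Nonempty) (hS : T ∩ U ⊆ closure S) : T ⊆ closure S :=
  (subset_closure_inter_of_isPreirreducible_of_isOpen hT.2 hU h).trans
    (closure_minimal hS isClosed_closure)

lemma isIrreducible_of_subset_of_subset_closure (hS : IsIrreducible S) (hST : S ⊆ T)
    (hTS : T ⊆ closure S) : IsIrreducible T := by
  rw [← isIrreducible_iff_closure] at hS ⊢
  rwa [(closure_minimal hTS isClosed_closure).antisymm (closure_mono hST)]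

end Irreducible

/-! ### The Zariski topology of a vector space -/

section Zariski

variable (k) in
/-- The Zariski topology on a vector space, generated by the nonvanishing loci of polynomial
functions. -/
abbrev zariski (V : Type*) [AddCommGroup V] [Module k V] : TopologicalSpace V :=
  generateFrom {U | ∃ f ∈ polyFun k V, U = {x | f x ≠ 0}}

/-- The Zariski topology on an endomorphism algebra, as an instance for local use. -/
abbrev zariskiEnd {V : Type*} [AddCommGroup V] [Module k V] : TopologicalSpace (End k V) :=
  zariski k (End k V)

variable (k) in
/-- Irreducibility of a subset of a vector space in the Zariski topology. -/
abbrev IsZariskiIrreducible (T : Set V) : Prop :=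
  @IsIrreducible V (zariski k V) T

lemma isOpen_setOf_ne_zero {f : V → k} (hf : f ∈ polyFun k V) :
    IsOpen[zariski k V] {x | f x ≠ 0} :=
  isOpen_generateFrom_of_mem ⟨f, hf, rfl⟩

lemma exists_polyFun_of_mem_isOpen {U : Set V} (hU : IsOpen[zariski k V] U) {x : V} (hx : x ∈ U) :
    ∃ f ∈ polyFun k V, f x ≠ 0 ∧ {y | f y ≠ 0} ⊆ U := by
  have hinter : ∀ ⦃s⦄, s ∈ {U : Set V | ∃ f ∈ polyFun k V, U = {x | f x ≠ 0}} →
      ∀ ⦃t⦄, t ∈ {U : Set V | ∃ f ∈ polyFun k V, U = {x | f x ≠ 0}} →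
      s ∩ t ∈ {U : Set V | ∃ f ∈ polyFun k V, U = {x | f x ≠ 0}} := by
    rintro _ ⟨f, hf, rfl⟩ _ ⟨g, hg, rfl⟩
    exact ⟨f * g, mul_mem hf hg, Set.ext fun _ => mul_ne_zero_iff.symm⟩
  let _ := zariski k V
  obtain ⟨_, rfl | ⟨f, hf, rfl⟩, hxf, hfU⟩ :=
    (isTopologicalBasis_of_subbasis_of_inter rfl hinter).exists_subset_of_mem_open hx hU
  · exact ⟨1, one_mem _, one_ne_zero, fun y _ => hfU trivial⟩
  · exact ⟨f, hf, hxf, hfU⟩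

lemma IsPolyMap.continuous {f : V → V'} (hf : IsPolyMap k f) :
    Continuous[zariski k V, zariski k V'] f := by
  let _ := zariski k V
  refine continuous_generateFrom_iff.2 ?_
  rintro _ ⟨p, hp, rfl⟩
  exact isOpen_setOf_ne_zero (hf.comp_mem_polyFun hp)

namespace IsZariskiIrreducible

lemma image {T : Set V} (hT : IsZariskiIrreducible k T) {f : V → V'} (hf : IsPolyMap k f) :
    IsZariskiIrreducible k (f '' T) := by
  let _ := zariski k V
  let _ := zariski k V'
  exact IsIrreducible.image hT f hf.continuous.continuousOn

/-- An open subset of the product has open slices: irreducibility of `T` provides a common first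
coordinate `a`, and irreducibility of `T'` a common point of the two slices over `a`. -/
lemma prod {T : Set V} {T' : Set V'} (hT : IsZariskiIrreducible k T)
    (hT' : IsZariskiIrreducible k T') : IsZariskiIrreducible k (T ×ˢ T') := by
  let _ := zariski k V
  let _ := zariski k V'
  let _ := zariski k (V × V')
  have hleft (y : V') : Continuous fun x : V => (x, y) := by
    have h : IsPolyMap k fun x : V => LinearMap.inl k V V' x + (0, y) :=
      (isPolyMap_linear _).add (isPolyMap_const _)
    simpa using h.continuous
  have hright (x : V) : Continuous fun y : V' => (x, y) := by
    have h : IsPolyMap k fun y : V' => LinearMap.inr k V V' y + (x, 0) :=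
      (isPolyMap_linear _).add (isPolyMap_const _)
    simpa using h.continuous
  refine ⟨hT.nonempty.prod hT'.nonempty, ?_⟩
  rintro u v hu hv ⟨⟨x, y⟩, ⟨hx, hy⟩, hxy⟩ ⟨⟨x', y'⟩, ⟨hx', hy'⟩, hxy'⟩
  obtain ⟨a, ha, hau, hav⟩ := hT.2 _ _ (hu.preimage (hleft y)) (hv.preimage (hleft y'))
    ⟨x, hx, hxy⟩ ⟨x', hx', hxy'⟩
  obtain ⟨b, hb, hbu, hbv⟩ := hT'.2 _ _ (hu.preimage (hright a)) (hv.preimage (hright a))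
    ⟨y, hy, hau⟩ ⟨y', hy', hav⟩
  exact ⟨(a, b), ⟨ha, hb⟩, hbu, hbv⟩

end IsZariskiIrreducible

lemma exists_polynomial_eval_eq {f : V → k} (hf : f ∈ polyFun k V) (x y : V) :
    ∃ p : Polynomial k, ∀ t, p.eval t = f (x + t • y) := by
  induction hf using Algebra.adjoin_induction with
  | mem f hf =>
    obtain ⟨φ, rfl⟩ := hf
    refine ⟨.C (φ x) + .X * .C (φ y), fun t => ?_⟩
    simp only [Polynomial.eval_add, Polynomial.eval_mul, Polynomial.eval_C, Polynomial.eval_X,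
      map_add, map_smul, smul_eq_mul]
  | algebraMap c => exact ⟨.C c, fun t => Polynomial.eval_C⟩
  | add f g _ _ hf hg =>
    obtain ⟨p, hp⟩ := hf
    obtain ⟨q, hq⟩ := hg
    exact ⟨p + q, fun t => by simp [hp, hq]⟩
  | mul f g _ _ hf hg =>
    obtain ⟨p, hp⟩ := hf
    obtain ⟨q, hq⟩ := hg
    exact ⟨p * q, fun t => by simp [hp, hq]⟩

/-- Two polynomial functions that do not vanish at `x` and `y` respectively do not vanish
simultaneously at some point of the line through `x` and `y`. -/
lemma isZariskiIrreducible_univ [Infinite k] : IsZariskiIrreducible k (Set.univ : Set V) := by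
  refine ⟨⟨0, trivial⟩, ?_⟩
  rintro u v hu hv ⟨x, -, hx⟩ ⟨y, -, hy⟩
  obtain ⟨f, hf, hfx, hfu⟩ := exists_polyFun_of_mem_isOpen hu hx
  obtain ⟨g, hg, hgy, hgv⟩ := exists_polyFun_of_mem_isOpen hv hy
  obtain ⟨p, hp⟩ := exists_polynomial_eval_eq hf x (y - x)
  obtain ⟨q, hq⟩ := exists_polynomial_eval_eq hg x (y - x)
  have hp0 : p ≠ 0 := fun h => hfx (by simpa [h] using (hp 0).symm)
  have hq0 : q ≠ 0 := fun h => hgy (by simpa [h] using (hq 1).symm)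
  obtain ⟨t, ht⟩ : ∃ t, (p * q).eval t ≠ 0 := by
    by_contra! h
    exact mul_ne_zero hp0 hq0 (Polynomial.funext fun t => by simp [h t])
  rw [Polynomial.eval_mul, hp, hq] at ht
  exact ⟨_, trivial, hfu (left_ne_zero_of_mul ht), hgv (right_ne_zero_of_mul ht)⟩

lemma isZariskiIrreducible_submodule [Infinite k] (L : Submodule k V) :
    IsZariskiIrreducible k (L : Set V) := by
  simpa using isZariskiIrreducible_univ.image (isPolyMap_linear L.subtype)

end Zariski

/-! ### Semicontinuity of the rank -/

section Rank

variable {M₁ M₂ : Type*} [AddCommGroup M₁] [Module k M₁] [AddCommGroup M₂] [Module k M₂]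

lemma exists_comp_comp_eq_id {r : ℕ} (f : M₁ →ₗ[k] M₂)
    (h : r ≤ finrank k (LinearMap.range f)) :
    ∃ (p : M₂ →ₗ[k] Fin r → k) (q : (Fin r → k) →ₗ[k] M₁), p ∘ₗ f ∘ₗ q = LinearMap.id := by
  obtain ⟨w, hw⟩ := exists_linearIndependent_of_le_finrank h
  choose y hy using fun i => (w i).2
  have hy' : LinearIndependent k (f ∘ y) := by
    simpa only [Function.comp_def, hy, subtype_apply] using hw.map' _ (ker_subtype _)
  have hinj : LinearMap.ker (f ∘ₗ Fintype.linearCombination k y) = ⊥ := by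
    refine LinearMap.ker_eq_bot'.2 fun c hc => funext (Fintype.linearIndependent_iff.1 hy' c ?_)
    simpa [Fintype.linearCombination_apply] using hc
  obtain ⟨p, hp⟩ := LinearMap.exists_leftInverse_of_injective _ hinj
  exact ⟨p, _, hp⟩

lemma le_finrank_range_of_det_comp_ne_zero [FiniteDimensional k M₂] {r : ℕ} {f : M₁ →ₗ[k] M₂}
    {p : M₂ →ₗ[k] Fin r → k} {q : (Fin r → k) →ₗ[k] M₁}
    (h : LinearMap.det (p ∘ₗ f ∘ₗ q) ≠ 0) : r ≤ finrank k (LinearMap.range f) := by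
  have hinj : Function.Injective (f ∘ₗ q) := by
    have : Function.Injective (p ∘ₗ f ∘ₗ q) := (LinearMap.equivOfDetNeZero _ h).injective
    exact Function.Injective.of_comp (f := p) (by simpa only [LinearMap.coe_comp] using this)
  calc r = finrank k (LinearMap.range (f ∘ₗ q)) := by
        rw [LinearMap.finrank_range_of_inj hinj, finrank_fin_fun]
    _ ≤ finrank k (LinearMap.range f) := finrank_mono (LinearMap.range_comp_le_range q f)

lemma isOpen_setOf_le_finrank_range [FiniteDimensional k M₂] {A : V → M₁ →ₗ[k] M₂}
    (hA : IsPolyMap k A) (r : ℕ) :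
    IsOpen[zariski k V] {x | r ≤ finrank k (LinearMap.range (A x))} := by
  let _ := zariski k V
  refine isOpen_iff_forall_mem_open.2 fun x hx => ?_
  obtain ⟨p, q, hpq⟩ := exists_comp_comp_eq_id (A x) hx
  have hpoly : IsPolyMap k fun y => p ∘ₗ A y ∘ₗ q :=
    (isPolyMap_linear (LinearMap.compRight k p ∘ₗ LinearMap.lcomp k M₂ q)).comp hA
  exact ⟨{y | LinearMap.det (p ∘ₗ A y ∘ₗ q) ≠ 0},
    fun y hy => le_finrank_range_of_det_comp_ne_zero hy,
    isOpen_setOf_ne_zero hpoly.det_mem_polyFun, by simp [hpq]⟩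

end Rank

/-! ### Subspaces -/

section Subspaces

variable {M M' : Type*} [AddCommGroup M] [Module k M] [AddCommGroup M'] [Module k M']

lemma exists_isCompl_inf_sup_inf_eq (N F : Submodule k M) :
    ∃ G, IsCompl F G ∧ N ⊓ F ⊔ N ⊓ G = N := by
  obtain ⟨C, hC⟩ := (N ⊓ F).exists_isCompl
  have hdisj : Disjoint F (C ⊓ N) := by
    rw [disjoint_iff, inf_comm C, ← inf_assoc, inf_comm F, hC.inf_eq_bot]
  obtain ⟨G, hG, hFG⟩ := hdisj.symm.exists_isCompl
  refine ⟨G, hFG.symm, le_antisymm (sup_le inf_le_left inf_le_left) ?_⟩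
  calc N = (N ⊓ F ⊔ C) ⊓ N := by rw [hC.sup_eq_top, top_inf_eq]
    _ = N ⊓ F ⊔ C ⊓ N := (sup_inf_assoc_of_le C inf_le_left)
    _ ≤ N ⊓ F ⊔ N ⊓ G := sup_le_sup_left (le_inf inf_le_right hG) _

lemma exists_retraction_preserving (N F : Submodule k M) :
    ∃ π : M →ₗ[k] F, (∀ x : F, π x = x) ∧ N ≤ (N.comap F.subtype).comap π := by
  obtain ⟨G, hG, hN⟩ := exists_isCompl_inf_sup_inf_eq N F
  refine ⟨F.projectionOnto G hG, F.projectionOnto_apply_left hG, ?_⟩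
  conv_lhs => rw [← hN]
  refine sup_le (fun x hx => ?_) (fun x hx => ?_)
  · simpa [projectionOnto_apply_of_mem_left hG hx.2] using hx.1
  · simp [projectionOnto_apply_of_mem_right hG hx.2]

lemma finrank_comap_subtype (N F : Submodule k M) :
    finrank k (N.comap F.subtype) = finrank k (N ⊓ F : Submodule k M) := by
  rw [← finrank_map_subtype_eq, map_comap_subtype, inf_comm]

lemma exists_le_finrank_eq (N : Submodule k M) {c : ℕ} (hc : c ≤ finrank k N) :
    ∃ F ≤ N, finrank k F = c := by
  obtain ⟨w, hw⟩ := exists_linearIndependent_of_le_finrank hc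
  refine ⟨(span k (Set.range w)).map N.subtype, map_subtype_le _ _, ?_⟩
  rw [finrank_map_subtype_eq, finrank_span_eq_card hw, Fintype.card_fin]

variable [FiniteDimensional k M]

lemma finrank_map_add_finrank_inf_ker (N : Submodule k M) (f : M →ₗ[k] M') :
    finrank k (N.map f) + finrank k (N ⊓ LinearMap.ker f : Submodule k M) = finrank k N := by
  have h := LinearMap.finrank_range_add_finrank_ker (f ∘ₗ N.subtype)
  rwa [LinearMap.range_comp, range_subtype, LinearMap.ker_comp, finrank_comap_subtype,
    inf_comm] at h

lemma finrank_map_mkQ_add_finrank (N S : Submodule k M) :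
    finrank k (S.map N.mkQ) + finrank k N = finrank k (S ⊔ N : Submodule k M) := by
  have h := finrank_map_add_finrank_inf_ker (S ⊔ N) N.mkQ
  rwa [ker_mkQ, inf_eq_right.2 le_sup_right, Submodule.map_sup, mkQ_map_self, sup_bot_eq] at h

lemma finrank_inf_ker_add_one {N : Submodule k M} {φ : Dual k M} {x : M} (hx : x ∈ N)
    (h : φ x ≠ 0) : finrank k (N ⊓ LinearMap.ker φ : Submodule k M) + 1 = finrank k N := by
  have htop : N.map φ = ⊤ := eq_top_iff.2 fun c _ =>
    ⟨(c / φ x) • x, N.smul_mem _ hx, by rw [map_smul, smul_eq_mul, div_mul_cancel₀ c h]⟩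
  rw [← finrank_map_add_finrank_inf_ker N φ, htop, finrank_top, finrank_self, add_comm]

lemma exists_le_le_finrank_eq {R K : Submodule k M} (hRK : R ≤ K) {c : ℕ} (hR : finrank k R ≤ c)
    (hK : c ≤ finrank k K) : ∃ F, R ≤ F ∧ F ≤ K ∧ finrank k F = c := by
  have hquot := finrank_map_mkQ_add_finrank R K
  rw [sup_eq_left.2 hRK] at hquot
  obtain ⟨D, hD, hDc⟩ := exists_le_finrank_eq (K.map R.mkQ) (c := c - finrank k R) (by omega)
  refine ⟨D.comap R.mkQ, le_comap_mkQ R D, ?_, ?_⟩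
  · calc D.comap R.mkQ ≤ (K.map R.mkQ).comap R.mkQ := comap_mono hD
      _ = K := by rw [comap_map_mkQ, sup_eq_right.2 hRK]
  · rw [← finrank_map_add_finrank_inf_ker _ R.mkQ, map_comap_eq_of_surjective R.mkQ_surjective,
      ker_mkQ, inf_eq_right.2 (le_comap_mkQ R D), hDc]
    omega

lemma exists_linearEquiv_map_eq [FiniteDimensional k M'] (N : Submodule k M) (N' : Submodule k M')
    (hM : finrank k M = finrank k M') (hN : finrank k N = finrank k N') :
    ∃ f : M ≃ₗ[k] M', N.map (f : M →ₗ[k] M') = N' := by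
  obtain ⟨G, hG⟩ := N.exists_isCompl
  obtain ⟨G', hG'⟩ := N'.exists_isCompl
  have hfinrank := finrank_add_eq_of_isCompl hG
  have hfinrank' := finrank_add_eq_of_isCompl hG'
  let a : N ≃ₗ[k] N' := .ofFinrankEq _ _ hN
  let b : G ≃ₗ[k] G' := .ofFinrankEq _ _ (by omega)
  let f := (prodEquivOfIsCompl N G hG).symm.trans
    ((a.prodCongr b).trans (prodEquivOfIsCompl N' G' hG'))
  refine ⟨f, eq_of_le_of_finrank_eq (map_le_iff_le_comap.2 fun x hx => ?_) ?_⟩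
  · have hfx : f x = a ⟨x, hx⟩ := by
      simp [f, prodEquivOfIsCompl_symm_apply_left N G hG ⟨x, hx⟩]
    exact mem_comap.2 (hfx ▸ (a ⟨x, hx⟩).2)
  · rw [LinearEquiv.finrank_map_eq, hN]

lemma finrank_inf_add_finrank_inf {N F G : Submodule k M} (hFG : IsCompl F G)
    (hN : N ⊓ F ⊔ N ⊓ G = N) :
    finrank k (N ⊓ F : Submodule k M) + finrank k (N ⊓ G : Submodule k M) = finrank k N := by
  have hbot : (N ⊓ F) ⊓ (N ⊓ G) = ⊥ := (hFG.disjoint.mono inf_le_right inf_le_right).eq_bot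
  rw [← finrank_sup_add_finrank_inf_eq, hbot, finrank_bot, add_zero, hN]

lemma exists_linearEquiv_map_eq_map_eq (N F F' : Submodule k M)
    (hF : finrank k F = finrank k F')
    (hN : finrank k (N ⊓ F : Submodule k M) = finrank k (N ⊓ F' : Submodule k M)) :
    ∃ f : M ≃ₗ[k] M, N.map (f : M →ₗ[k] M) = N ∧ F.map (f : M →ₗ[k] M) = F' := by
  obtain ⟨G, hG, hNG⟩ := exists_isCompl_inf_sup_inf_eq N F
  obtain ⟨G', hG', hNG'⟩ := exists_isCompl_inf_sup_inf_eq N F'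
  have hfinrank := finrank_add_eq_of_isCompl hG
  have hfinrank' := finrank_add_eq_of_isCompl hG'
  have hsplit := finrank_inf_add_finrank_inf hG hNG
  have hsplit' := finrank_inf_add_finrank_inf hG' hNG'
  obtain ⟨a, ha⟩ := exists_linearEquiv_map_eq (N.comap F.subtype) (N.comap F'.subtype) hF
    (by rwa [finrank_comap_subtype, finrank_comap_subtype])
  obtain ⟨b, hb⟩ := exists_linearEquiv_map_eq (N.comap G.subtype) (N.comap G'.subtype) (by omega)
    (by rw [finrank_comap_subtype, finrank_comap_subtype]; omega)
  let f := (prodEquivOfIsCompl F G hG).symm.trans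
    ((a.prodCongr b).trans (prodEquivOfIsCompl F' G' hG'))
  have hfa (x : F) : f x = a x := by simp [f]
  have hfb (x : G) : f x = b x := by simp [f]
  refine ⟨f, eq_of_le_of_finrank_eq (map_le_iff_le_comap.2 ?_) (LinearEquiv.finrank_map_eq f N),
    eq_of_le_of_finrank_eq (map_le_iff_le_comap.2 fun x hx => ?_) ?_⟩
  · conv_lhs => rw [← hNG]
    refine sup_le (fun x hx => ?_) (fun x hx => ?_)
    · have : a ⟨x, hx.2⟩ ∈ N.comap F'.subtype := ha ▸ mem_map_of_mem hx.1
      exact mem_comap.2 (hfa ⟨x, hx.2⟩ ▸ this)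
    · have : b ⟨x, hx.2⟩ ∈ N.comap G'.subtype := hb ▸ mem_map_of_mem hx.1
      exact mem_comap.2 (hfb ⟨x, hx.2⟩ ▸ this)
  · exact mem_comap.2 (hfa ⟨x, hx⟩ ▸ (a ⟨x, hx⟩).2)
  · rw [LinearEquiv.finrank_map_eq, hF]

end Subspaces

/-! ### Nilpotent endomorphisms -/

section Nilpotent

variable {M : Type*} [AddCommGroup M] [Module k M] {N : Submodule k M} {W : End k M} {m : ℕ}

lemma restrict_pow_eq_zero (hN : N ≤ N.comap W) (hW : W ^ m = 0) : W.restrict hN ^ m = 0 := by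
  ext x
  rw [End.pow_restrict]
  simp [hW]

lemma finrank_map_pow_eq {V : End k N} (hV : W ∘ₗ N.subtype = N.subtype ∘ₗ V) (j : ℕ) :
    finrank k (N.map (W ^ j)) = finrank k (LinearMap.range (V ^ j)) := by
  rw [← finrank_map_subtype_eq N, ← LinearMap.range_comp, ← End.commute_pow_left_of_commute hV,
    LinearMap.range_comp, range_subtype]

lemma range_le_ker_pow (hW : W ^ (m + 1) = 0) : LinearMap.range W ≤ LinearMap.ker (W ^ m) := by
  rw [LinearMap.range_le_ker_iff, ← End.mul_eq_comp, ← pow_succ, hW]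

lemma pow_succ_eq_zero_of_range_le_of_le_ker (hrange : LinearMap.range W ≤ N)
    (hker : N ≤ LinearMap.ker (W ^ m)) : W ^ (m + 1) = 0 := by
  rw [pow_succ, End.mul_eq_comp, ← LinearMap.range_le_ker_iff]
  exact hrange.trans hker

variable [FiniteDimensional k M]

lemma finrank_ker_pow_le (W : End k M) (j : ℕ) :
    finrank k (LinearMap.ker (W ^ j)) ≤ j * finrank k (LinearMap.ker W) := by
  induction j with
  | zero => simp [End.one_eq_id]
  | succ j ih =>
    have hmap : (LinearMap.ker (W ^ (j + 1))).map W ≤ LinearMap.ker (W ^ j) := by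
      rw [map_le_iff_le_comap, ← LinearMap.ker_comp, ← End.mul_eq_comp, pow_succ]
    calc finrank k (LinearMap.ker (W ^ (j + 1)))
        = finrank k ((LinearMap.ker (W ^ (j + 1))).map W)
          + finrank k (LinearMap.ker (W ^ (j + 1)) ⊓ LinearMap.ker W : Submodule k M) :=
          (finrank_map_add_finrank_inf_ker _ W).symm
      _ ≤ j * finrank k (LinearMap.ker W) + finrank k (LinearMap.ker W) :=
          add_le_add ((finrank_mono hmap).trans ih) (finrank_mono inf_le_right)
      _ = (j + 1) * finrank k (LinearMap.ker W) := (add_one_mul _ _).symm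

lemma finrank_le_mul_finrank_ker (hW : W ^ m = 0) :
    finrank k M ≤ m * finrank k (LinearMap.ker W) := by
  have h := finrank_ker_pow_le W m
  rwa [hW, LinearMap.ker_zero, finrank_top] at h

/-- The subspace `range (W ^ m)` lies in the kernel of each restriction
`range (W ^ j) → range (W ^ (j + 1))` with `j ≤ m`. -/
lemma mul_finrank_range_pow_le (hW : W ^ (m + 1) = 0) :
    (m + 1) * finrank k (LinearMap.range (W ^ m)) ≤ finrank k M := by
  have hchain (j : ℕ) (hj : j ≤ m + 1) :
      j * finrank k (LinearMap.range (W ^ m)) + finrank k (LinearMap.range (W ^ j)) ≤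
        finrank k M := by
    induction j with
    | zero => simpa using finrank_le _
    | succ j ih =>
      have hmap : (LinearMap.range (W ^ j)).map W = LinearMap.range (W ^ (j + 1)) := by
        rw [← LinearMap.range_comp, ← End.mul_eq_comp, pow_succ']
      have hinf : LinearMap.range (W ^ m) ≤ LinearMap.range (W ^ j) ⊓ LinearMap.ker W := by
        refine le_inf (W.iterateRange.monotone (by omega)) ?_
        rw [LinearMap.range_le_ker_iff, ← End.mul_eq_comp, ← pow_succ', hW]
      have hsplit := finrank_map_add_finrank_inf_ker (LinearMap.range (W ^ j)) W
      rw [hmap] at hsplit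
      have hle := finrank_mono hinf
      have := ih (by omega)
      rw [add_one_mul]
      omega
  exact (Nat.le_add_right _ _).trans (hchain (m + 1) le_rfl)

lemma mul_finrank_map_pow_le (hN : N ≤ N.comap W) (hW : W ^ (m + 1) = 0) :
    (m + 1) * finrank k (N.map (W ^ m)) ≤ finrank k N := by
  rw [finrank_map_pow_eq (V := W.restrict hN) (LinearMap.subtype_comp_restrict hN).symm]
  exact mul_finrank_range_pow_le (restrict_pow_eq_zero hN hW)

/-- This bounds the dimension of `M ⧸ N` by `m` times that of the cokernel of the induced nilpotent
endomorphism of `M ⧸ N`, written without subtractions. -/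
lemma finrank_add_mul_finrank_range_sup_le (hN : N ≤ N.comap W) (hW : W ^ m = 0) :
    finrank k M + m * finrank k (LinearMap.range W ⊔ N : Submodule k M) ≤
      finrank k N + m * finrank k M := by
  let Q : End k (M ⧸ N) := N.mapQ N W hN
  have hQ : Q ^ m = 0 := by
    rw [← mapQ_pow N hN]
    ext x
    simp [hW]
  have hker := finrank_le_mul_finrank_ker hQ
  have hrange := LinearMap.finrank_range_add_finrank_ker Q
  rw [range_mapQ] at hrange
  have hsup := finrank_map_mkQ_add_finrank N (LinearMap.range W)
  have hquot := N.finrank_quotient_add_finrank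
  calc finrank k M + m * finrank k (LinearMap.range W ⊔ N : Submodule k M)
      ≤ finrank k N + m * (finrank k (LinearMap.ker Q)
          + finrank k (LinearMap.range W ⊔ N : Submodule k M)) := by rw [mul_add]; omega
    _ = finrank k N + m * finrank k M := by congr 2; omega

/-- A complement `C` of `N` is mapped into `N` injectively, onto lifts of elements of
`range (V ^ m)`. -/
lemma exists_extension_pow_eq_zero {V : End k N} (hV : V ^ (m + 1) = 0) {c : ℕ}
    (hc : finrank k N + c = finrank k M) (hrange : c ≤ finrank k (LinearMap.range (V ^ m))) :
    ∃ W : End k M, LinearMap.range W ≤ N ∧ N ≤ LinearMap.ker (W ^ (m + 1)) ∧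
      c ≤ finrank k (LinearMap.range (W ^ (m + 1))) := by
  obtain ⟨C, hC⟩ := N.exists_isCompl
  have hfinrank := finrank_add_eq_of_isCompl hC
  obtain ⟨s, hs⟩ := finrank_le_iff_exists_linearMap.1
    (show finrank k C ≤ finrank k (LinearMap.range (V ^ m)) by omega)
  obtain ⟨t, ht⟩ := (V ^ m).rangeRestrict.exists_rightInverse_of_surjective
    (V ^ m).range_rangeRestrict
  let W : End k M := LinearMap.ofIsCompl hC (N.subtype ∘ₗ V) (N.subtype ∘ₗ t ∘ₗ s)
  have hWN : W ∘ₗ N.subtype = N.subtype ∘ₗ V := LinearMap.ext fun x => by simp [W]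
  have hWC : W ∘ₗ C.subtype = N.subtype ∘ₗ t ∘ₗ s := LinearMap.ext fun x => by simp [W]
  have hpowC : (W ^ (m + 1)) ∘ₗ C.subtype =
      N.subtype ∘ₗ (LinearMap.range (V ^ m)).subtype ∘ₗ s := by
    have hts : (V ^ m) ∘ₗ t ∘ₗ s = (LinearMap.range (V ^ m)).subtype ∘ₗ s :=
      LinearMap.ext fun x => congrArg Subtype.val (LinearMap.congr_fun ht (s x))
    rw [pow_succ, End.mul_eq_comp, LinearMap.comp_assoc, hWC, ← hts, ← LinearMap.comp_assoc,
      End.commute_pow_left_of_commute hWN, LinearMap.comp_assoc]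
  refine ⟨W, ?_, ?_, ?_⟩
  · rw [LinearMap.range_ofIsCompl]
    exact sup_le ((LinearMap.range_comp_le_range _ _).trans_eq N.range_subtype)
      ((LinearMap.range_comp_le_range _ _).trans_eq N.range_subtype)
  · rw [← N.range_subtype, LinearMap.range_le_ker_iff, End.commute_pow_left_of_commute hWN, hV,
      LinearMap.comp_zero]
  · have hinj : Function.Injective ((W ^ (m + 1)) ∘ₗ C.subtype) := by
      rw [hpowC]
      exact N.injective_subtype.comp ((injective_subtype _).comp hs)
    calc c = finrank k C := by omega
      _ = finrank k (LinearMap.range ((W ^ (m + 1)) ∘ₗ C.subtype)) :=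
          (LinearMap.finrank_range_of_inj hinj).symm
      _ ≤ _ := finrank_mono (LinearMap.range_comp_le_range _ _)

lemma exists_pow_eq_zero_le_finrank_range (m : ℕ) {c : ℕ} (hc : (m + 1) * c ≤ finrank k M) :
    ∃ W : End k M, W ^ (m + 1) = 0 ∧ c ≤ finrank k (LinearMap.range (W ^ m)) := by
  induction m generalizing M with
  | zero => exact ⟨0, zero_pow one_ne_zero, by
      rwa [pow_zero, End.one_eq_id, LinearMap.range_id, finrank_top, ← one_mul c, ← zero_add 1]⟩
  | succ m ih =>
    obtain ⟨N, -, hN⟩ := exists_le_finrank_eq (⊤ : Submodule k M) (c := finrank k M - c)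
      (by simp)
    have hcM : finrank k N + c = finrank k M := by
      have : 1 * c ≤ (m + 1 + 1) * c := Nat.mul_le_mul_right c (by omega)
      omega
    obtain ⟨V, hV, hcV⟩ := ih (M := N) (by rw [add_one_mul] at hc; omega)
    obtain ⟨W, hrange, hker, hcW⟩ := exists_extension_pow_eq_zero hV hcM hcV
    exact ⟨W, pow_succ_eq_zero_of_range_le_of_le_ker hrange hker, hcW⟩

lemma exists_range_le_le_ker_le_finrank_range {c : ℕ} (hN : finrank k N + c = finrank k M)
    (hc : (m + 2) * c ≤ finrank k M) :
    ∃ W : End k M, LinearMap.range W ≤ N ∧ N ≤ LinearMap.ker (W ^ (m + 1)) ∧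
      c ≤ finrank k (LinearMap.range (W ^ (m + 1))) := by
  obtain ⟨V, hV, hcV⟩ := exists_pow_eq_zero_le_finrank_range (k := k) (M := N) m (c := c)
    (by rw [show m + 2 = m + 1 + 1 from rfl, add_one_mul] at hc; omega)
  exact exists_extension_pow_eq_zero hV hN hcV

end Nilpotent

/-! ### Norm sums and Higman's criterion -/

section NormSum

variable {P Q : Type*} [AddCommGroup P] [Module k P] [AddCommGroup Q] [Module k Q]

/-- The value `∑ i < m, A ^ (m - 1 - i) ∘ C ∘ B ^ i` of the relation `ρ^{(m-1)}`. It is the trace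
map of `k[x] ⧸ (x ^ m)` applied to `C`, which makes it a homomorphism of modules over this ring. -/
def normSum (m : ℕ) (A : End k P) (B : End k Q) (C : Q →ₗ[k] P) : Q →ₗ[k] P :=
  ∑ i ∈ Finset.range m, (A ^ (m - 1 - i)) ∘ₗ C ∘ₗ (B ^ i)

lemma comp_normSum {m : ℕ} {A : End k P} {B : End k Q} (hA : A ^ m = 0) (hB : B ^ m = 0)
    (C : Q →ₗ[k] P) : A ∘ₗ normSum m A B C = normSum m A B C ∘ₗ B := by
  have htelescope := Finset.sum_range_sub' (fun i => (A ^ (m - i)) ∘ₗ C ∘ₗ (B ^ i)) m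
  rw [Nat.sub_zero, hA, hB, LinearMap.zero_comp, LinearMap.comp_zero, LinearMap.comp_zero,
    sub_zero, Finset.sum_sub_distrib, sub_eq_zero] at htelescope
  ext x
  replace htelescope := LinearMap.congr_fun htelescope x
  simp only [LinearMap.sum_apply] at htelescope
  simp only [normSum, LinearMap.comp_apply, LinearMap.sum_apply, map_sum]
  convert htelescope using 1 <;> refine Finset.sum_congr rfl fun i hi => ?_
  · rw [← End.mul_apply A, ← pow_succ', LinearMap.comp_apply, LinearMap.comp_apply]
    congr 2
    have := Finset.mem_range.1 hi
    omega
  · rw [← End.mul_apply (B ^ i), ← pow_succ, Nat.sub_right_comm, Nat.sub_sub]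
    rfl

lemma normSum_comp {P' : Type*} [AddCommGroup P'] [Module k P'] {m : ℕ} {A : End k P} {B : End k Q}
    {B' : End k P'} {C : Q →ₗ[k] P} {f : P' →ₗ[k] Q} (hB : B ∘ₗ f = f ∘ₗ B') :
    normSum m A B C ∘ₗ f = normSum m A B' (C ∘ₗ f) := by
  ext x
  have hBf (i : ℕ) : (B ^ i) (f x) = f ((B' ^ i) x) :=
    LinearMap.congr_fun (End.commute_pow_left_of_commute hB i) x
  simp [normSum, LinearMap.sum_apply, hBf]

variable {M : Type*} [AddCommGroup M] [Module k M]

lemma exists_mul_mul_eq_self (T : End k M) : ∃ σ : End k M, T * σ * T = T := by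
  obtain ⟨t, ht⟩ := T.rangeRestrict.exists_rightInverse_of_surjective T.range_rangeRestrict
  obtain ⟨p, hp⟩ := (LinearMap.range T).subtype.exists_leftInverse_of_injective (ker_subtype _)
  refine ⟨t ∘ₗ p, LinearMap.ext fun x => ?_⟩
  have hpx : p (T x) = T.rangeRestrict x := LinearMap.congr_fun hp (T.rangeRestrict x)
  calc T (t (p (T x))) = T.rangeRestrict (t (T.rangeRestrict x)) := by rw [hpx]; rfl
    _ = T x := congrArg Subtype.val (LinearMap.congr_fun ht _)

lemma isNilpotent_of_commute_of_range_le {W c : End k M} (hW : IsNilpotent W) (hc : Commute c W)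
    (h : LinearMap.range c ≤ LinearMap.range W) : IsNilpotent c := by
  obtain ⟨n, hn⟩ := hW
  have hle (j : ℕ) : LinearMap.range (c ^ j) ≤ LinearMap.range (W ^ j) := by
    induction j with
    | zero => rw [pow_zero, pow_zero]
    | succ j ih =>
      calc LinearMap.range (c ^ (j + 1)) = (LinearMap.range c).map (c ^ j) := by
            rw [pow_succ, End.mul_eq_comp, LinearMap.range_comp]
        _ ≤ (LinearMap.range W).map (c ^ j) := map_mono h
        _ = (LinearMap.range (c ^ j)).map W := by
            rw [← LinearMap.range_comp, ← LinearMap.range_comp, ← End.mul_eq_comp,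
              ← End.mul_eq_comp, (hc.pow_left j).eq]
        _ ≤ (LinearMap.range (W ^ j)).map W := map_mono ih
        _ = LinearMap.range (W ^ (j + 1)) := by
            rw [pow_succ', End.mul_eq_comp, LinearMap.range_comp]
  refine ⟨n, LinearMap.range_eq_bot.1 (eq_bot_iff.2 ?_)⟩
  simpa only [hn, LinearMap.range_zero] using hle n

/-- Modulo the range of `W`, the trace of a generalized inverse `σ` of `W ^ m` is the identity, so
it is an automorphism by which `σ` can be corrected. -/
lemma exists_normSum_eq_one {W : End k M} {m : ℕ} (hW : W ^ (m + 1) = 0)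
    (hrange : LinearMap.ker (W ^ m) ≤ LinearMap.range W) :
    ∃ ψ : End k M, normSum (m + 1) W W ψ = 1 := by
  obtain ⟨σ, hσ⟩ := exists_mul_mul_eq_self (W ^ m)
  set c : End k M := normSum (m + 1) W W σ with hc
  have hcomm : Commute c W := (comp_normSum hW hW σ).symm
  have hsub : LinearMap.range (c - 1) ≤ LinearMap.range W := by
    rintro _ ⟨x, rfl⟩
    have hlast : σ ((W ^ m) x) - x ∈ LinearMap.range W := hrange <| by
      rw [LinearMap.mem_ker, map_sub, sub_eq_zero]
      exact LinearMap.congr_fun hσ x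
    have hsum : (∑ i ∈ Finset.range m, (W ^ (m - i)) ∘ₗ σ ∘ₗ (W ^ i)) x ∈ LinearMap.range W := by
      rw [LinearMap.sum_apply]
      refine sum_mem fun i hi => ⟨(W ^ (m - i - 1)) (σ ((W ^ i) x)), ?_⟩
      have hmi : m - i = m - i - 1 + 1 := by have := Finset.mem_range.1 hi; omega
      rw [← End.mul_apply, ← pow_succ', ← hmi]
      rfl
    have hcx : (c - 1) x =
        (∑ i ∈ Finset.range m, (W ^ (m - i)) ∘ₗ σ ∘ₗ (W ^ i)) x + (σ ((W ^ m) x) - x) := by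
      simp [hc, normSum, Finset.sum_range_succ, add_sub_assoc]
    exact hcx ▸ add_mem hsum hlast
  have hunit : IsUnit c := by
    have hnil := isNilpotent_of_commute_of_range_le ⟨_, hW⟩ (hcomm.sub_left (.one_left W)) hsub
    simpa using hnil.isUnit_one_add
  obtain ⟨u, hu⟩ := hunit
  have hinv : Commute (↑u⁻¹ : End k M) W := (hu ▸ hcomm).units_inv_left
  refine ⟨σ * ↑u⁻¹, ?_⟩
  calc normSum (m + 1) W W (σ * ↑u⁻¹) = c * ↑u⁻¹ := by
        simp only [hc, normSum, Finset.sum_mul, ← End.mul_eq_comp, mul_assoc,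
          (hinv.pow_right _).eq]
    _ = 1 := by rw [← hu, Units.mul_inv]

end NormSum

/-! ### Strata of the nilpotent endomorphisms stabilizing a subspace -/

section Strata

variable {M : Type*} [AddCommGroup M] [Module k M] {N F F' : Submodule k M} {W : End k M} {m : ℕ}

/-- The set of nilpotent endomorphisms of exponent at most `m` that stabilize `N`, that is, of the
representations of dimension `(dim N, dim (M ⧸ N))` of `A(1, m, m - 1)` up to a change of basis. -/
def nilpotentStabilizer (m : ℕ) (N : Submodule k M) : Set (End k M) :=
  {W | W ^ m = 0 ∧ N ≤ N.comap W}

/-- The stratum of `nilpotentStabilizer (m + 1) N` attached to a subspace `F`, which lies between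
the range and the kernel of the `m`-th power. -/
def stratum (m : ℕ) (N F : Submodule k M) : Set (End k M) :=
  {W | N ≤ N.comap W ∧ LinearMap.range W ≤ F ∧ F ≤ LinearMap.ker (W ^ m)}

lemma stratum_subset_nilpotentStabilizer : stratum m N F ⊆ nilpotentStabilizer (m + 1) N :=
  fun _ ⟨hN, hrange, hker⟩ => ⟨pow_succ_eq_zero_of_range_le_of_le_ker hrange hker, hN⟩

lemma smul_mem_stratum (hW : W ∈ stratum m N F) (c : k) : c • W ∈ stratum m N F := by
  refine ⟨fun x hx => N.smul_mem c (hW.1 hx), ?_, fun x hx => ?_⟩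
  · rintro _ ⟨x, rfl⟩
    exact F.smul_mem c (hW.2.1 ⟨x, rfl⟩)
  · rw [LinearMap.mem_ker, smul_pow, LinearMap.smul_apply, hW.2.2 hx, smul_zero]

lemma conj_pow (f : M ≃ₗ[k] M) (W : End k M) (j : ℕ) : f.conj W ^ j = f.conj (W ^ j) :=
  (map_pow (f.conjAlgEquiv k) W j).symm

lemma map_le_comap_conj (f : M ≃ₗ[k] M) (hW : N ≤ N.comap W) :
    N.map (f : M →ₗ[k] M) ≤ (N.map (f : M →ₗ[k] M)).comap (f.conj W) := by
  rintro _ ⟨x, hx, rfl⟩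
  exact ⟨W x, hW hx, by simp [LinearEquiv.conj_apply_apply]⟩

lemma conj_mem_nilpotentStabilizer (f : M ≃ₗ[k] M) (hW : W ∈ nilpotentStabilizer m N) :
    f.conj W ∈ nilpotentStabilizer m (N.map (f : M →ₗ[k] M)) :=
  ⟨by rw [conj_pow, hW.1, map_zero], map_le_comap_conj f hW.2⟩

lemma conj_mem_stratum (f : M ≃ₗ[k] M) (hW : W ∈ stratum m N F) :
    f.conj W ∈ stratum m (N.map (f : M →ₗ[k] M)) (F.map (f : M →ₗ[k] M)) := by
  refine ⟨map_le_comap_conj f hW.1, ?_, ?_⟩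
  · rintro _ ⟨x, rfl⟩
    exact ⟨W (f.symm x), hW.2.1 ⟨_, rfl⟩, rfl⟩
  · rintro _ ⟨x, hx, rfl⟩
    rw [LinearMap.mem_ker, conj_pow, LinearEquiv.conj_apply_apply]
    simpa using hW.2.2 hx

lemma exists_stratum_eq_image : ∃ (L : Submodule k (End k M)) (θ : End k F × End k M →ₗ[k] End k M),
    stratum m N F = θ '' (nilpotentStabilizer m (N.comap F.subtype) ×ˢ (L : Set _)) := by
  obtain ⟨π, hπ, hπN⟩ := exists_retraction_preserving N F
  let θ : End k F × End k M →ₗ[k] End k M :=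
    (LinearMap.compRight k F.subtype ∘ₗ LinearMap.lcomp k F π).coprod LinearMap.id
  have hθ (w : End k F) (z : End k M) (x : M) : θ (w, z) x = w (π x) + z x := rfl
  refine ⟨N.compatibleMaps N ⊓ (⊤ : Submodule k M).compatibleMaps F ⊓ F.compatibleMaps ⊥, θ,
    Set.Subset.antisymm (fun W ⟨hN, hrange, hker⟩ => ?_) ?_⟩
  · have hF : ∀ x ∈ F, W x ∈ F := fun x _ => hrange ⟨x, rfl⟩
    have hwN (x : M) (hx : x ∈ N) : ((W.restrict hF (π x) : F) : M) ∈ N := hN (hπN hx)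
    refine ⟨(W.restrict hF, W - F.subtype ∘ₗ W.restrict hF ∘ₗ π),
      ⟨⟨?_, fun x hx => hN hx⟩, ⟨fun x hx => ?_, fun x _ => ?_⟩, fun x hx => ?_⟩, ?_⟩
    · ext x
      rw [End.pow_restrict]
      exact hker x.2
    · exact N.sub_mem (hN hx) (hwN x hx)
    · exact F.sub_mem (hrange ⟨x, rfl⟩) (W.restrict hF (π x)).2
    · have hπx : π x = ⟨x, hx⟩ := hπ ⟨x, hx⟩
      simp [hπx]
    · ext x
      simp [hθ]
  · rintro _ ⟨⟨w, z⟩, ⟨⟨hw, hwN⟩, ⟨hzN, hzF⟩, hz⟩, rfl⟩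
    have hcomp : θ (w, z) ∘ₗ F.subtype = F.subtype ∘ₗ w := by
      ext x
      have hzx : z x = 0 := hz x.2
      simp [hθ, hπ, hzx]
    refine ⟨fun x hx => N.add_mem (hwN (hπN hx)) (hzN hx), ?_, fun x hx => ?_⟩
    · rintro _ ⟨x, rfl⟩
      exact F.add_mem (w (π x)).2 (hzF trivial)
    · have hpow := LinearMap.congr_fun (End.commute_pow_left_of_commute hcomp m) ⟨x, hx⟩
      simpa [hw] using hpow

lemma isZariskiIrreducible_stratum [Infinite k]
    (h : IsZariskiIrreducible k (nilpotentStabilizer m (N.comap F.subtype))) :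
    IsZariskiIrreducible k (stratum m N F) := by
  obtain ⟨L, θ, hθ⟩ := exists_stratum_eq_image (m := m) (N := N) (F := F)
  rw [hθ]
  exact (h.prod (isZariskiIrreducible_submodule L)).image (isPolyMap_linear θ)

/-- The union of the conjugates of `stratum m N F` under the stabilizer of `N` in the general
linear group. -/
def conjStratum (m : ℕ) (N F : Submodule k M) : Set (End k M) :=
  {W | ∃ g : M ≃ₗ[k] M, N.map (g : M →ₗ[k] M) = N ∧ g.conj W ∈ stratum m N F}

lemma conjStratum_subset_nilpotentStabilizer :
    conjStratum m N F ⊆ nilpotentStabilizer (m + 1) N := by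
  rintro W ⟨g, hg, hW⟩
  have h := conj_mem_nilpotentStabilizer g.symm (stratum_subset_nilpotentStabilizer hW)
  rwa [LinearEquiv.conj_symm_conj, ← hg, ← map_comp, LinearEquiv.comp_coe,
    g.self_trans_symm, LinearEquiv.refl_toLinearMap, map_id] at h

variable [FiniteDimensional k M]

lemma endAdjugate_mul_mul (g : M ≃ₗ[k] M) (W : End k M) :
    endAdjugate (g : End k M) * W * g = LinearMap.det (g : End k M) • g.symm.conj W := by
  rw [endAdjugate_eq_det_smul_symm, smul_mul_assoc, smul_mul_assoc]
  rfl

lemma stratum_subset_conjStratum (hF : finrank k F' = finrank k F)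
    (hN : finrank k (N ⊓ F' : Submodule k M) = finrank k (N ⊓ F : Submodule k M)) :
    stratum m N F' ⊆ conjStratum m N F := fun W hW => by
  obtain ⟨g, hg, hgF⟩ := exists_linearEquiv_map_eq_map_eq N F' F hF hN
  have h := conj_mem_stratum g hW
  rw [hg, hgF] at h
  exact ⟨g, hg, h⟩

lemma conjStratum_eq_image :
    conjStratum m N F = (fun p : End k M × End k M => endAdjugate p.1 * p.2 * p.1) ''
      ({h | N ≤ N.comap h} ×ˢ stratum m N F ∩ {p | LinearMap.det p.1 ≠ 0}) := by
  refine Set.Subset.antisymm ?_ ?_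
  · rintro W ⟨g, hg, hW⟩
    have hg0 : LinearMap.det (g : End k M) ≠ 0 := g.isUnit_det'.ne_zero
    refine ⟨(g, (LinearMap.det (g : End k M))⁻¹ • g.conj W),
      ⟨⟨map_le_iff_le_comap.1 hg.le, smul_mem_stratum hW _⟩, hg0⟩, ?_⟩
    beta_reduce
    rw [endAdjugate_mul_mul, map_smul, smul_inv_smul₀ hg0, LinearEquiv.conj_symm_conj]
  · rintro _ ⟨⟨h, w⟩, ⟨⟨hN, hw⟩, h0⟩, rfl⟩
    obtain ⟨g, rfl⟩ : ∃ g : M ≃ₗ[k] M, (g : End k M) = h :=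
      ⟨LinearMap.equivOfDetNeZero h h0, rfl⟩
    refine ⟨g, eq_of_le_of_finrank_eq (map_le_iff_le_comap.2 hN) (g.finrank_map_eq N), ?_⟩
    beta_reduce
    rw [endAdjugate_mul_mul, map_smul, LinearEquiv.conj_conj_symm]
    exact smul_mem_stratum hw _

lemma isZariskiIrreducible_conjStratum [Infinite k] (h : IsZariskiIrreducible k (stratum m N F)) :
    IsZariskiIrreducible k (conjStratum m N F) := by
  let _ := zariski k (End k M × End k M)
  have hfst : IsPolyMap k (Prod.fst : End k M × End k M → End k M) :=
    isPolyMap_linear (LinearMap.fst k (End k M) (End k M))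
  have hsnd : IsPolyMap k (Prod.snd : End k M × End k M → End k M) :=
    isPolyMap_linear (LinearMap.snd k (End k M) (End k M))
  have hstab : IsZariskiIrreducible k {h : End k M | N ≤ N.comap h} :=
    isZariskiIrreducible_submodule (N.compatibleMaps N)
  obtain ⟨W, hW⟩ := h.1
  rw [conjStratum_eq_image]
  refine IsZariskiIrreducible.image (isIrreducible_inter_of_isOpen (hstab.prod h)
    (isOpen_setOf_ne_zero hfst.det_mem_polyFun) ⟨(1, W), ⟨fun _ hx => hx, hW⟩, ?_⟩)
    ((hfst.endAdjugate.mul hsnd).mul hfst)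
  simp

end Strata

/-! ### Density of the locus of large rank -/

section Density

variable {M : Type*} [AddCommGroup M] [Module k M] {N F : Submodule k M} {W : End k M} {m c : ℕ}

attribute [local instance] zariskiEnd

/-- The elements `W` of `nilpotentStabilizer (m + 1) N` for which `W ^ m` has rank at least `c` on
`N`. -/
def rankLocus (m : ℕ) (N : Submodule k M) (c : ℕ) : Set (End k M) :=
  {W | W ∈ nilpotentStabilizer (m + 1) N ∧ c ≤ finrank k (N.map (W ^ m))}

lemma subtype_comp_comp_pow_succ {π : M →ₗ[k] N} (hπ : ∀ x : N, π x = x) (w : End k N) (j : ℕ) :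
    (N.subtype ∘ₗ w ∘ₗ π) ^ (j + 1) = N.subtype ∘ₗ (w ^ (j + 1)) ∘ₗ π := by
  induction j with
  | zero => rw [zero_add, pow_one, pow_one]
  | succ j ih =>
    ext x
    rw [pow_succ, ih, pow_succ w (j + 1)]
    simp only [End.mul_apply, LinearMap.comp_apply, subtype_apply, hπ]

lemma finrank_map_subtype_comp_comp_pow {π : M →ₗ[k] N} (hπ : ∀ x : N, π x = x) (w : End k N)
    (j : ℕ) : finrank k (N.map ((N.subtype ∘ₗ w ∘ₗ π) ^ j)) =
      finrank k (LinearMap.range (w ^ j)) :=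
  finrank_map_pow_eq (by ext x; simp [hπ]) j

lemma restrict_mem_nilpotentStabilizer_top (hN : N ≤ N.comap W) (hW : W ^ m = 0) :
    W.restrict hN ∈ nilpotentStabilizer m (⊤ : Submodule k N) :=
  ⟨restrict_pow_eq_zero hN hW, fun _ _ => trivial⟩

variable [FiniteDimensional k M]

lemma isOpen_setOf_le_finrank_map_pow (N : Submodule k M) (j c : ℕ) :
    IsOpen {W : End k M | c ≤ finrank k (N.map (W ^ j))} := by
  have hpow : IsPolyMap k fun W : End k M => W ^ j := (isPolyMap_linear LinearMap.id).pow j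
  have hmap (W : End k M) : finrank k (N.map (W ^ j)) =
      finrank k (LinearMap.range (LinearMap.lcomp k M N.subtype (W ^ j))) := by
    rw [LinearMap.lcomp_apply', LinearMap.range_comp, range_subtype]
  simpa only [hmap] using isOpen_setOf_le_finrank_range
    ((isPolyMap_linear (LinearMap.lcomp k M N.subtype)).comp hpow) c

lemma exists_mem_stratum_le_finrank_map (hF : finrank k (N ⊓ F : Submodule k M) + c = finrank k N)
    (hc : (m + 2) * c ≤ finrank k N) :
    ∃ W ∈ stratum (m + 1) N F, c ≤ finrank k (N.map (W ^ (m + 1))) := by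
  obtain ⟨π, hπ, hπF⟩ := exists_retraction_preserving F N
  obtain ⟨w, hrange, hker, hrank⟩ := exists_range_le_le_ker_le_finrank_range (m := m)
    (N := F.comap N.subtype) (c := c) (by rwa [finrank_comap_subtype, inf_comm]) hc
  refine ⟨N.subtype ∘ₗ w ∘ₗ π, ⟨fun x _ => (w (π x)).2, ?_, fun x hx => ?_⟩, ?_⟩
  · rintro _ ⟨x, rfl⟩
    exact hrange ⟨π x, rfl⟩
  · have hwx : (w ^ (m + 1)) (π x) = 0 := hker (hπF hx)
    rw [LinearMap.mem_ker, subtype_comp_comp_pow_succ hπ]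
    simp [hwx]
  · rwa [finrank_map_subtype_comp_comp_pow hπ]

lemma exists_mem_stratum_le_finrank_map_inf
    (hc : (m + 1) * c ≤ finrank k (N ⊓ F : Submodule k M)) :
    ∃ W ∈ stratum (m + 1) N F, c ≤ finrank k ((N ⊓ F).map (W ^ m)) := by
  obtain ⟨π, hπ, -⟩ := exists_retraction_preserving ⊥ (N ⊓ F)
  obtain ⟨w, hw, hrank⟩ := exists_pow_eq_zero_le_finrank_range m hc
  refine ⟨(N ⊓ F).subtype ∘ₗ w ∘ₗ π, ⟨fun x _ => (w (π x)).2.1, ?_, fun x _ => ?_⟩, ?_⟩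
  · rintro _ ⟨x, rfl⟩
    exact (w (π x)).2.2
  · rw [LinearMap.mem_ker, subtype_comp_comp_pow_succ hπ, hw]
    rfl
  · rwa [finrank_map_subtype_comp_comp_pow hπ]

lemma stratum_subset_closure_rankLocus (h : IsZariskiIrreducible k (stratum (m + 1) N F))
    (hF : finrank k (N ⊓ F : Submodule k M) + c = finrank k N) (hc : (m + 2) * c ≤ finrank k N) :
    stratum (m + 1) N F ⊆ closure (rankLocus (m + 1) N c) := by
  obtain ⟨W, hW, hrank⟩ := exists_mem_stratum_le_finrank_map hF hc
  exact subset_closure_of_inter_isOpen_subset_closure h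
    (isOpen_setOf_le_finrank_map_pow N (m + 1) c) ⟨W, hW, hrank⟩ fun V hV =>
      subset_closure ⟨stratum_subset_nilpotentStabilizer hV.1, hV.2⟩

lemma isPolyMap_normSum {P Q : Type*} [AddCommGroup P] [Module k P] [AddCommGroup Q] [Module k Q]
    [FiniteDimensional k Q] (m : ℕ) (A : End k P) (C : Q →ₗ[k] P) :
    IsPolyMap k fun B : End k Q => normSum m A B C :=
  .sum fun i _ => (isPolyMap_linear (LinearMap.compRight k ((A ^ (m - 1 - i)) ∘ₗ C))).comp
    ((isPolyMap_linear LinearMap.id).pow i)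

/-- If `h` is invertible, the hypothesis says that the conjugate of `W` by `h` restricts to `V`. -/
lemma endAdjugate_mul_mul_mem_rankLocus {V : End k N} {h : End k M} (hdet : LinearMap.det h ≠ 0)
    (hW : W ^ (m + 1) = 0) (hV : V ∈ rankLocus m (⊤ : Submodule k N) c)
    (hWV : W ∘ₗ h ∘ₗ N.subtype = h ∘ₗ N.subtype ∘ₗ V) :
    endAdjugate h * W * h ∈ rankLocus m N c := by
  obtain ⟨g, rfl⟩ : ∃ g : M ≃ₗ[k] M, (g : End k M) = h :=
    ⟨LinearMap.equivOfDetNeZero h hdet, rfl⟩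
  set δ := LinearMap.det (g : End k M)
  have hcomp : (endAdjugate (g : End k M) * W * (g : End k M)) ∘ₗ N.subtype =
      N.subtype ∘ₗ (δ • V) :=
    LinearMap.ext fun x => by
      calc endAdjugate (g : End k M) (W (g x)) = endAdjugate (g : End k M) (g (V x)) :=
            congrArg _ (LinearMap.congr_fun hWV x)
        _ = δ • (V x : M) := LinearMap.congr_fun (endAdjugate_mul (g : End k M)) (V x : M)
  have hrange : LinearMap.range ((δ • V) ^ m) = LinearMap.range (V ^ m) := by
    rw [smul_pow, LinearMap.range_smul _ _ (pow_ne_zero m hdet)]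
  refine ⟨⟨?_, fun x hx => ?_⟩, ?_⟩
  · rw [endAdjugate_mul_mul, smul_pow, conj_pow, hW, map_zero, smul_zero]
  · have hx' := LinearMap.congr_fun hcomp ⟨x, hx⟩
    exact mem_comap.2 (hx' ▸ ((δ • V) ⟨x, hx⟩).2)
  · rw [finrank_map_pow_eq hcomp, hrange, LinearMap.range_eq_map]
    exact hV.2

/-- `h V` extends a norm sum with respect to `W` and `V`. If `V = W|N`, this is the restriction to
`N` of the norm sum that equals the identity of `M`. -/
lemma exists_isPolyMap_intertwining (hN : N ≤ N.comap W) (hW : W ^ (m + 1) = 0)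
    (hker : LinearMap.ker (W ^ m) ≤ LinearMap.range W) :
    ∃ h : End k N → End k M, IsPolyMap k h ∧ h (W.restrict hN) = 1 ∧
      ∀ V, V ^ (m + 1) = 0 → W ∘ₗ h V ∘ₗ N.subtype = h V ∘ₗ N.subtype ∘ₗ V := by
  obtain ⟨ψ, hψ⟩ := exists_normSum_eq_one hW hker
  obtain ⟨π, hπ⟩ := N.subtype.exists_leftInverse_of_injective (ker_subtype _)
  let s (V : End k N) : N →ₗ[k] M := normSum (m + 1) W V (ψ ∘ₗ N.subtype)
  let h (V : End k N) : End k M := s V ∘ₗ π + (1 - N.subtype ∘ₗ π)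
  have hπN (x : N) : π x = x := LinearMap.congr_fun hπ x
  have hsN (V : End k N) : h V ∘ₗ N.subtype = s V := by
    ext x
    simp [h, hπN]
  have hs : s (W.restrict hN) = N.subtype := by
    calc s (W.restrict hN) = normSum (m + 1) W W ψ ∘ₗ N.subtype :=
          (normSum_comp (LinearMap.subtype_comp_restrict hN).symm).symm
      _ = N.subtype := by rw [hψ, End.one_eq_id, LinearMap.id_comp]
  refine ⟨h, ?_, ?_, fun V hV => ?_⟩
  · exact ((isPolyMap_linear (LinearMap.lcomp k M π)).comp (isPolyMap_normSum _ _ _)).add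
      (isPolyMap_const _)
  · simp only [h, hs, add_sub_cancel]
  · rw [hsN, ← LinearMap.comp_assoc, hsN]
    exact comp_normSum hW hV _

lemma mem_closure_rankLocus_of_restrict (hN : N ≤ N.comap W) (hW : W ^ (m + 1) = 0)
    (hker : LinearMap.ker (W ^ m) ≤ LinearMap.range W)
    (hV : W.restrict hN ∈ closure (rankLocus m (⊤ : Submodule k N) c)) :
    W ∈ closure (rankLocus m N c) := by
  obtain ⟨h, hh, hone, hcomp⟩ := exists_isPolyMap_intertwining hN hW hker
  have hcont : Continuous fun V => endAdjugate (h V) * W * h V :=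
    ((hh.endAdjugate.mul (isPolyMap_const W)).mul hh).continuous
  have hdet : IsOpen {V | LinearMap.det (h V) ≠ 0} := isOpen_setOf_ne_zero hh.det_mem_polyFun
  have hmem : W.restrict hN ∈ closure ({V | LinearMap.det (h V) ≠ 0} ∩ rankLocus m ⊤ c) :=
    hdet.inter_closure ⟨by simp [hone], hV⟩
  have hconj : endAdjugate (h (W.restrict hN)) * W * h (W.restrict hN) = W := by
    have hadj := endAdjugate_mul (1 : End k M)
    rw [mul_one, map_one, one_smul] at hadj
    rw [hone, hadj, one_mul, mul_one]
  rw [← hconj]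
  exact map_mem_closure (f := fun V => endAdjugate (h V) * W * h V) hcont hmem
    fun V ⟨hV0, hV⟩ => endAdjugate_mul_mul_mem_rankLocus hV0 hW hV (hcomp V hV.1.1)

end Density

section Step

variable {M : Type*} [AddCommGroup M] [Module k M] {N F : Submodule k M}
  {W : End k M} {m c : ℕ}

attribute [local instance] zariskiEnd

lemma add_smulRight_mem_stratum (hW : W ∈ stratum m N F) {γ : Dual k M}
    (hγ : N ⊔ F ≤ LinearMap.ker γ) {f : M} (hf : f ∈ F) : W + γ.smulRight f ∈ stratum m N F := by
  have hγN {x : M} (hx : x ∈ N) : γ x = 0 := hγ (mem_sup_left hx)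
  have hγF {x : M} (hx : x ∈ F) : γ x = 0 := hγ (mem_sup_right hx)
  have hcomp : (W + γ.smulRight f) ∘ₗ F.subtype =
      F.subtype ∘ₗ W.restrict fun x _ => hW.2.1 ⟨x, rfl⟩ := by
    ext x
    simp [hγF x.2]
  have hcomp' : W ∘ₗ F.subtype = F.subtype ∘ₗ W.restrict fun x _ => hW.2.1 ⟨x, rfl⟩ := rfl
  refine ⟨fun x hx => ?_, ?_, fun x hx => ?_⟩
  · simpa [hγN hx] using hW.1 hx
  · rintro _ ⟨x, rfl⟩
    exact F.add_mem (hW.2.1 ⟨x, rfl⟩) (F.smul_mem _ hf)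
  · have h : ((W + γ.smulRight f) ^ m) ∘ₗ F.subtype = (W ^ m) ∘ₗ F.subtype :=
      (End.commute_pow_left_of_commute hcomp m).trans
        (End.commute_pow_left_of_commute hcomp' m).symm
    exact (LinearMap.congr_fun h ⟨x, hx⟩).trans (hW.2.2 hx)

lemma exists_forall_finrank_range_comp_le {M' : Type*} [AddCommGroup M'] [Module k M']
    [FiniteDimensional k M'] {T : Set (End k M)} (hT : T.Nonempty) (q : M →ₗ[k] M') :
    ∃ W ∈ T, ∀ W' ∈ T,
      finrank k (LinearMap.range (q ∘ₗ W')) ≤ finrank k (LinearMap.range (q ∘ₗ W)) := by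
  have hbdd : BddAbove ((fun W => finrank k (LinearMap.range (q ∘ₗ W))) '' T) :=
    ⟨finrank k M', by rintro _ ⟨W, -, rfl⟩; exact finrank_le _⟩
  obtain ⟨_, ⟨W, hW, rfl⟩, hmax⟩ := hbdd.exists_isGreatest_of_nonempty (hT.image _)
  exact ⟨W, hW, fun W' hW' => hmax ⟨W', hW', rfl⟩⟩

variable [FiniteDimensional k M]

lemma exists_mem_stratum_finrank_inf_add_one (hW : W ∈ stratum m N F)
    (h : ¬ N ⊓ F ≤ LinearMap.range W) :
    ∃ F', W ∈ stratum m N F' ∧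
      finrank k (N ⊓ F' : Submodule k M) + 1 = finrank k (N ⊓ F : Submodule k M) := by
  obtain ⟨n, hn, hnW⟩ := Set.not_subset.1 h
  obtain ⟨φ, hφn, hφW⟩ := Submodule.exists_le_ker_of_notMem hnW
  refine ⟨F ⊓ LinearMap.ker φ, ⟨hW.1, le_inf hW.2.1 hφW, inf_le_left.trans hW.2.2⟩, ?_⟩
  rw [← inf_assoc]
  exact finrank_inf_ker_add_one hn hφn

lemma exists_notMem_sup_mem_inf (hker : F ≤ LinearMap.ker (W ^ (m + 1)))
    (hrange : N ⊓ F ≤ LinearMap.range W)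
    (hlt : finrank k (N.map (W ^ (m + 1))) < finrank k ((N ⊓ F).map (W ^ m))) :
    ∃ g, g ∉ N ⊔ F ∧ W g ∈ N ⊓ F := by
  obtain ⟨_, ⟨n, hn, rfl⟩, hWn⟩ := Set.not_subset.1 fun h => (finrank_mono h).not_gt hlt
  obtain ⟨g, rfl⟩ := hrange hn
  refine ⟨g, fun hg => hWn ?_, hn⟩
  obtain ⟨x, hx, y, hy, rfl⟩ := Submodule.mem_sup.1 hg
  have hWy : (W ^ (m + 1)) y = 0 := hker hy
  exact ⟨x, hx, by rw [← End.mul_apply, ← pow_succ, map_add, hWy, add_zero]⟩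

/-- Otherwise the rank of `W` modulo `N ⊓ F` could be increased by a rank one perturbation. -/
lemma range_eq_of_forall_finrank_le (hW : W ∈ stratum m N F) (hrange : N ⊓ F ≤ LinearMap.range W)
    (hmax : ∀ W' ∈ stratum m N F, finrank k (LinearMap.range ((N ⊓ F).mkQ ∘ₗ W')) ≤
      finrank k (LinearMap.range ((N ⊓ F).mkQ ∘ₗ W)))
    {g : M} (hg : g ∉ N ⊔ F) (hWg : W g ∈ N ⊓ F) : LinearMap.range W = F := by
  refine le_antisymm hW.2.1 fun f hf => ?_
  obtain ⟨γ, hγg, hγ⟩ := Submodule.exists_le_ker_of_notMem hg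
  set q := (N ⊓ F).mkQ with hq
  set W' := W + γ.smulRight f with hW'
  have hqf : q f ∈ LinearMap.range (q ∘ₗ W') := by
    have hqWg : q (W g) = 0 := by rwa [hq, ← LinearMap.mem_ker, ker_mkQ]
    refine ⟨(γ g)⁻¹ • g, ?_⟩
    simp [hW', hqWg, smul_smul, inv_mul_cancel₀ hγg]
  have hle : LinearMap.range (q ∘ₗ W) ≤ LinearMap.range (q ∘ₗ W') := by
    rintro _ ⟨x, rfl⟩
    have hx : (q ∘ₗ W) x = (q ∘ₗ W') x - γ x • q f := by simp [hW']
    rw [hx]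
    exact sub_mem ⟨x, rfl⟩ (smul_mem _ _ hqf)
  have heq := eq_of_le_of_finrank_le hle (hmax _ (add_smulRight_mem_stratum hW hγ hf))
  rw [← heq, LinearMap.range_comp] at hqf
  have hmem : f ∈ ((LinearMap.range W).map q).comap q := hqf
  rwa [hq, comap_map_mkQ, sup_eq_right.2 hrange] at hmem

lemma mem_closure_rankLocus_of_forall_finrank_le
    (hstratum : ∀ F, IsZariskiIrreducible k (stratum (m + 1) N F))
    (hN : N = ⊤ ∨ nilpotentStabilizer (m + 2) (⊤ : Submodule k N) ⊆
      closure (rankLocus (m + 1) (⊤ : Submodule k N) c))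
    (hc : (m + 2) * c ≤ finrank k N)
    (hF : finrank k (N ⊓ F : Submodule k M) + c = finrank k N + 1)
    (hW : W ∈ stratum (m + 1) N F) (hker : LinearMap.ker (W ^ (m + 1)) = F)
    (hrank : c ≤ finrank k ((N ⊓ F).map (W ^ m)))
    (hmax : ∀ W' ∈ stratum (m + 1) N F, finrank k (LinearMap.range ((N ⊓ F).mkQ ∘ₗ W')) ≤
      finrank k (LinearMap.range ((N ⊓ F).mkQ ∘ₗ W))) :
    W ∈ closure (rankLocus (m + 1) N c) := by
  by_cases hrange : N ⊓ F ≤ LinearMap.range W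
  · have hlt : finrank k (N.map (W ^ (m + 1))) < finrank k ((N ⊓ F).map (W ^ m)) := by
      have h := finrank_map_add_finrank_inf_ker N (W ^ (m + 1))
      rw [hker] at h
      omega
    obtain ⟨g, hg, hWg⟩ := exists_notMem_sup_mem_inf hker.ge hrange hlt
    obtain rfl | hN := hN
    · simp at hg
    · have hWF := range_eq_of_forall_finrank_le hW hrange hmax hg hWg
      have hW0 : W ^ (m + 2) = 0 := (stratum_subset_nilpotentStabilizer hW).1
      exact mem_closure_rankLocus_of_restrict hW.1 hW0 (hker.trans hWF.symm).le
        (hN (restrict_mem_nilpotentStabilizer_top hW.1 hW0))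
  · obtain ⟨F', hWF', hF'⟩ := exists_mem_stratum_finrank_inf_add_one hW hrange
    exact stratum_subset_closure_rankLocus (hstratum F') (by omega) hc hWF'

lemma ker_eq_of_ker_le_of_finrank_range_le {V W : End k M}
    (hker : LinearMap.ker W ≤ LinearMap.ker V)
    (hrange : finrank k (LinearMap.range W) ≤ finrank k (LinearMap.range V)) :
    LinearMap.ker V = LinearMap.ker W := by
  refine (eq_of_le_of_finrank_le hker ?_).symm
  have hV := LinearMap.finrank_range_add_finrank_ker V
  have hW := LinearMap.finrank_range_add_finrank_ker W
  omega

/-- The hypotheses of `mem_closure_rankLocus_of_forall_finrank_le` hold for generic elements of the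
stratum of `W` attached to the kernel of `W ^ (m + 1)`. -/
lemma mem_closure_rankLocus_succ
    (hstratum : ∀ F, IsZariskiIrreducible k (stratum (m + 1) N F))
    (hN : N = ⊤ ∨ nilpotentStabilizer (m + 2) (⊤ : Submodule k N) ⊆
      closure (rankLocus (m + 1) (⊤ : Submodule k N) (c + 1)))
    (hc : (m + 2) * (c + 1) ≤ finrank k N) (hW : W ∈ nilpotentStabilizer (m + 2) N)
    (hWc : finrank k (N.map (W ^ (m + 1))) = c) : W ∈ closure (rankLocus (m + 1) N (c + 1)) := by
  set F := LinearMap.ker (W ^ (m + 1)) with hF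
  set q := (N ⊓ F).mkQ
  have hinf : c + finrank k (N ⊓ F : Submodule k M) = finrank k N :=
    hWc ▸ finrank_map_add_finrank_inf_ker N (W ^ (m + 1))
  have hWF : W ∈ stratum (m + 1) N F := ⟨hW.2, range_le_ker_pow hW.1, le_rfl⟩
  obtain ⟨W₁, hW₁, hmax⟩ := exists_forall_finrank_range_comp_le ⟨W, hWF⟩ q
  obtain ⟨W₂, hW₂, hrank⟩ := exists_mem_stratum_le_finrank_map_inf (N := N) (F := F) (m := m)
    (c := c + 1) (by rw [show m + 2 = m + 1 + 1 from rfl, add_one_mul] at hc; omega)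
  have hU₁ := isOpen_setOf_le_finrank_range
    (isPolyMap_linear (LinearMap.compRight k q : End k M →ₗ[k] _))
    (finrank k (LinearMap.range (q ∘ₗ W₁)))
  have hU₂ := isOpen_setOf_le_finrank_map_pow (N ⊓ F) m (c + 1)
  have hU₃ := isOpen_setOf_le_finrank_range
    ((isPolyMap_linear (LinearMap.id : End k M →ₗ[k] End k M)).pow (m + 1))
    (finrank k (LinearMap.range (W ^ (m + 1))))
  refine subset_closure_of_inter_isOpen_subset_closure (hstratum F) ((hU₁.inter hU₂).inter hU₃)
    ((hstratum F).2 _ _ (hU₁.inter hU₂) hU₃ ((hstratum F).2 _ _ hU₁ hU₂ ⟨W₁, hW₁, Nat.le_refl _⟩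
      ⟨W₂, hW₂, hrank⟩) ⟨W, hWF, Nat.le_refl _⟩) ?_ hWF
  rintro V ⟨hV, ⟨hV₁, hV₂⟩, hV₃⟩
  exact mem_closure_rankLocus_of_forall_finrank_le hstratum hN hc (by omega) hV
    (ker_eq_of_ker_le_of_finrank_range_le hV.2.2 hV₃) hV₂
    fun W' hW' => (hmax W' hW').trans hV₁

lemma nilpotentStabilizer_subset_closure_rankLocus
    (hstratum : ∀ F, IsZariskiIrreducible k (stratum (m + 1) N F))
    (hN : N = ⊤ ∨ ∀ c, (m + 2) * c ≤ finrank k N →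
      nilpotentStabilizer (m + 2) (⊤ : Submodule k N) ⊆
        closure (rankLocus (m + 1) (⊤ : Submodule k N) c))
    (hc : (m + 2) * c ≤ finrank k N) :
    nilpotentStabilizer (m + 2) N ⊆ closure (rankLocus (m + 1) N c) := by
  induction c with
  | zero => exact fun W hW => subset_closure ⟨hW, Nat.zero_le _⟩
  | succ c ih =>
    refine (ih (le_trans (Nat.mul_le_mul_left _ c.le_succ) hc)).trans
      (closure_minimal (fun W hW => ?_) isClosed_closure)
    obtain h | h := hW.2.eq_or_lt
    · exact mem_closure_rankLocus_succ hstratum (hN.imp_right fun h => h _ hc) hc hW.1 h.symm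
    · exact subset_closure ⟨hW.1, h⟩

end Step

/-! ### Irreducibility -/

section Irreducibility

variable {M : Type*} [AddCommGroup M] [Module k M] {N : Submodule k M} {W : End k M} {m : ℕ}

lemma nilpotentStabilizer_one : nilpotentStabilizer 1 N = {0} := by
  ext W
  simp only [nilpotentStabilizer, pow_one, Set.mem_ofPred_eq, Set.mem_singleton_iff,
    and_iff_left_iff_imp]
  rintro rfl
  exact fun x _ => N.zero_mem

lemma add_div_le_div_add_ceilDiv (a b : ℕ) {c : ℕ} (hc : 0 < c) :
    (a + b) / c ≤ a / c + b ⌈/⌉ c := by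
  rw [← Nat.add_mul_div_left _ _ hc]
  refine Nat.div_le_div_right (Nat.add_le_add_left ?_ a)
  exact le_smul_ceilDiv hc

variable [FiniteDimensional k M]

lemma finrank_range_sup_add_ceilDiv_le (hN : N ≤ N.comap W) (hW : W ^ (m + 1) = 0) :
    finrank k (LinearMap.range W ⊔ N : Submodule k M) + finrank k (M ⧸ N) ⌈/⌉ (m + 1) ≤
      finrank k M := by
  have hle := finrank_add_mul_finrank_range_sup_le hN hW
  have hM : finrank k (M ⧸ N) + finrank k N = finrank k M := N.finrank_quotient_add_finrank
  have hsub := (LinearMap.range W ⊔ N).finrank_le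
  have hceil : finrank k (M ⧸ N) ⌈/⌉ (m + 1) ≤
      finrank k M - finrank k (LinearMap.range W ⊔ N : Submodule k M) := by
    rw [ceilDiv_le_iff_le_smul (by positivity : 0 < m + 1), smul_eq_mul, Nat.mul_sub]
    omega
  omega

lemma finrank_inf_ker_add (hW : W ∈ rankLocus m N (finrank k N / (m + 1))) :
    finrank k (N ⊓ LinearMap.ker (W ^ m) : Submodule k M) + finrank k N / (m + 1) =
      finrank k N := by
  obtain ⟨⟨hW, hN⟩, hrank⟩ := hW
  have hadd := finrank_map_add_finrank_inf_ker N (W ^ m)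
  have hle : finrank k (N.map (W ^ m)) ≤ finrank k N / (m + 1) :=
    (Nat.le_div_iff_mul_le m.succ_pos).2 ((mul_comm _ _).trans_le (mul_finrank_map_pow_le hN hW))
  omega

lemma finrank_range_sup_inf_ker_add_le (hW : W ∈ rankLocus m N (finrank k N / (m + 1))) :
    finrank k (LinearMap.range W ⊔ N ⊓ LinearMap.ker (W ^ m) : Submodule k M) +
      (finrank k N / (m + 1) + finrank k (M ⧸ N) ⌈/⌉ (m + 1)) ≤ finrank k M := by
  have hrange := range_le_ker_pow hW.1.1
  set K := LinearMap.ker (W ^ m)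
  set R := LinearMap.range W ⊔ N ⊓ K
  have hsup : R ⊔ N = LinearMap.range W ⊔ N := by
    rw [sup_assoc, sup_eq_right.2 (inf_le_left : N ⊓ K ≤ N)]
  have hinf : R ⊓ N = N ⊓ K :=
    le_antisymm (le_inf inf_le_right (inf_le_left.trans (sup_le hrange inf_le_right)))
      (le_inf le_sup_right inf_le_left)
  have hadd := Submodule.finrank_sup_add_finrank_inf_eq R N
  have hle := finrank_range_sup_add_ceilDiv_le hW.1.2 hW.1.1
  have hNK : finrank k (N ⊓ K : Submodule k M) + finrank k N / (m + 1) = finrank k N :=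
    finrank_inf_ker_add hW
  rw [hsup, hinf] at hadd
  omega

lemma finrank_le_finrank_ker_add (N : Submodule k M) (hW : W ^ (m + 1) = 0) :
    finrank k M ≤ finrank k (LinearMap.ker (W ^ m)) +
      (finrank k N / (m + 1) + finrank k (M ⧸ N) ⌈/⌉ (m + 1)) := by
  have hadd := LinearMap.finrank_range_add_finrank_ker (W ^ m)
  have hle : finrank k (LinearMap.range (W ^ m)) ≤ finrank k M / (m + 1) :=
    (Nat.le_div_iff_mul_le m.succ_pos).2 ((mul_comm _ _).trans_le (mul_finrank_range_pow_le hW))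
  have hdiv := add_div_le_div_add_ceilDiv (finrank k N) (finrank k (M ⧸ N)) m.succ_pos
  rw [add_comm (finrank k N), N.finrank_quotient_add_finrank] at hdiv
  exact hadd.symm.trans_le ((add_le_add_left (hle.trans hdiv) _).trans_eq (add_comm _ _))

/-- The dimensions of `N ⊓ F` and `F` do not depend on `W`. -/
lemma exists_mem_stratum_of_mem_rankLocus (hW : W ∈ rankLocus m N (finrank k N / (m + 1))) :
    ∃ F, W ∈ stratum m N F ∧
      finrank k (N ⊓ F : Submodule k M) + finrank k N / (m + 1) = finrank k N ∧
      finrank k F + (finrank k N / (m + 1) + finrank k (M ⧸ N) ⌈/⌉ (m + 1)) = finrank k M := by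
  have hR := finrank_range_sup_inf_ker_add_le hW
  obtain ⟨F, hRF, hFK, hF⟩ := exists_le_le_finrank_eq
    (sup_le (range_le_ker_pow hW.1.1) inf_le_right) (Nat.le_sub_of_add_le hR)
    (Nat.sub_le_of_le_add (finrank_le_finrank_ker_add N hW.1.1))
  have hNF : N ⊓ F = N ⊓ LinearMap.ker (W ^ m) :=
    le_antisymm (inf_le_inf_left N hFK) (le_inf inf_le_left (le_sup_right.trans hRF))
  exact ⟨F, ⟨hW.1.2, le_sup_left.trans hRF, hFK⟩, hNF ▸ finrank_inf_ker_add hW, by omega⟩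

attribute [local instance] zariskiEnd

lemma isZariskiIrreducible_nilpotentStabilizer_of_subset_closure [Infinite k]
    (hstratum : ∀ F, IsZariskiIrreducible k (stratum (m + 1) N F))
    (hclosure : nilpotentStabilizer (m + 2) N ⊆
      closure (rankLocus (m + 1) N (finrank k N / (m + 2)))) :
    IsZariskiIrreducible k (nilpotentStabilizer (m + 2) N) := by
  have hzero : (0 : End k M) ∈ nilpotentStabilizer (m + 2) N := ⟨by simp, fun x _ => N.zero_mem⟩
  obtain ⟨W, hW⟩ := closure_nonempty_iff.1 ⟨0, hclosure hzero⟩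
  obtain ⟨F, -, hNF, hF⟩ := exists_mem_stratum_of_mem_rankLocus hW
  refine isIrreducible_of_subset_of_subset_closure
    (isZariskiIrreducible_conjStratum (hstratum F)) conjStratum_subset_nilpotentStabilizer
    (hclosure.trans (closure_mono fun W' hW' => ?_))
  obtain ⟨F', hWF', hNF', hF'⟩ := exists_mem_stratum_of_mem_rankLocus hW'
  exact stratum_subset_conjStratum (by omega) (by omega) hWF'

theorem isZariskiIrreducible_nilpotentStabilizer [Infinite k] {M : Type v} [AddCommGroup M]
    [Module k M] [FiniteDimensional k M] (hm : m ≠ 0) (N : Submodule k M) :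
    IsZariskiIrreducible k (nilpotentStabilizer m N) := by
  obtain ⟨m, rfl⟩ := Nat.exists_eq_add_one_of_ne_zero hm
  clear hm
  induction m generalizing M with
  | zero => exact nilpotentStabilizer_one (N := N) ▸ isIrreducible_singleton
  | succ m ih =>
    have hstratum {M : Type v} [AddCommGroup M] [Module k M] [FiniteDimensional k M]
        (N F : Submodule k M) : IsZariskiIrreducible k (stratum (m + 1) N F) :=
      isZariskiIrreducible_stratum (ih _)
    exact isZariskiIrreducible_nilpotentStabilizer_of_subset_closure (hstratum N)
      (nilpotentStabilizer_subset_closure_rankLocus (hstratum N)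
        (Or.inr fun c hc => nilpotentStabilizer_subset_closure_rankLocus (hstratum ⊤) (Or.inl rfl)
          (by rwa [finrank_top])) (Nat.mul_div_le _ _))

end Irreducibility

/-! ### Matrices -/

section Matrices

variable {ι κ : Type*} [Fintype ι] [Fintype κ] [DecidableEq ι] [DecidableEq κ]

lemma fromBlocks_zero₂₁_pow {R : Type*} [Semiring R] (A : Matrix ι ι R) (C : Matrix ι κ R)
    (B : Matrix κ κ R) (m : ℕ) :
    Matrix.fromBlocks A C 0 B ^ m = Matrix.fromBlocks (A ^ m)
      (∑ i ∈ Finset.range m, A ^ (m - 1 - i) * C * B ^ i) 0 (B ^ m) := by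
  induction m with
  | zero => simp
  | succ m ih =>
    have hsum : ∑ i ∈ Finset.range m, A ^ (m - i) * C * B ^ i =
        A * ∑ i ∈ Finset.range m, A ^ (m - 1 - i) * C * B ^ i := by
      rw [Matrix.mul_sum]
      refine Finset.sum_congr rfl fun i hi => ?_
      rw [← Matrix.mul_assoc, ← Matrix.mul_assoc, ← pow_succ', show m - i = m - 1 - i + 1 by grind]
    rw [pow_succ', ih, Matrix.fromBlocks_multiply, Finset.sum_range_succ, add_tsub_cancel_right,
      hsum]
    simp [pow_succ']

lemma ker_funLeft_inr_le_comap_iff (W : End k (ι ⊕ κ → k)) :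
    LinearMap.ker (LinearMap.funLeft k k Sum.inr) ≤
        (LinearMap.ker (LinearMap.funLeft k k Sum.inr)).comap W ↔
      (LinearMap.toMatrix' W).toBlocks₂₁ = 0 := by
  constructor
  · intro h
    ext i j
    have hsingle : (Pi.single (Sum.inl j) 1 : ι ⊕ κ → k) ∈
        LinearMap.ker (LinearMap.funLeft k k Sum.inr) := by
      ext l
      simp [LinearMap.funLeft_apply]
    simpa [Matrix.toBlocks₂₁, LinearMap.toMatrix'_apply] using congr_fun (h hsingle) i
  · intro h x hx
    ext i
    have hxr (l : κ) : x (Sum.inr l) = 0 := congr_fun hx l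
    have hWl (l : ι) : LinearMap.toMatrix' W (Sum.inr i) (Sum.inl l) = 0 := congr_fun₂ h i l
    rw [← LinearMap.toMatrix'_mulVec W x]
    simp only [LinearMap.funLeft_apply, Matrix.mulVec, dotProduct, Fintype.sum_sum_type, hxr, hWl,
      zero_mul, mul_zero, Finset.sum_const_zero, add_zero, Pi.zero_apply]

lemma isZariskiIrreducible_blockTriangular [Infinite k] {m : ℕ} (hm : m ≠ 0) :
    IsZariskiIrreducible k {X : Matrix (ι ⊕ κ) (ι ⊕ κ) k | X ^ m = 0 ∧ X.toBlocks₂₁ = 0} := by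
  let N := LinearMap.ker (LinearMap.funLeft k k (Sum.inr : κ → ι ⊕ κ))
  convert (isZariskiIrreducible_nilpotentStabilizer hm N).image
    (isPolyMap_linear (LinearMap.toMatrix' : End k (ι ⊕ κ → k) ≃ₗ[k] _).toLinearMap) using 1
  refine Set.Subset.antisymm (fun X ⟨hX, hX₂₁⟩ => ?_) ?_
  · refine ⟨Matrix.toLin' X, ⟨by rw [← Matrix.toLin'_pow, hX, map_zero], ?_⟩,
      LinearMap.toMatrix'_toLin' X⟩
    rwa [ker_funLeft_inr_le_comap_iff, LinearMap.toMatrix'_toLin']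
  · rintro _ ⟨W, ⟨hW, hWN⟩, rfl⟩
    refine ⟨?_, (ker_funLeft_inr_le_comap_iff W).1 hWN⟩
    exact (map_pow LinearMap.toMatrixAlgEquiv' W m).symm.trans (by rw [hW, map_zero])

/-- The ambient space of the representations of `A(n, m, l)`, with arbitrary index types. -/
abbrev RepSpace (k ι κ n : Type*) : Type _ :=
  Matrix ι ι k × Matrix κ κ k × (n → Matrix ι κ k)

/-- The tuple formed by the diagonal blocks of a block triangular matrix and a family of matrices,
whose `i₀`-th member is replaced by the off-diagonal block. -/
def blockTuple {n : Type*} [DecidableEq n] (i₀ : n) :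
    Matrix (ι ⊕ κ) (ι ⊕ κ) k × (n → Matrix ι κ k) →ₗ[k] RepSpace k ι κ n where
  toFun p := (p.1.toBlocks₁₁, p.1.toBlocks₂₂, Function.update p.2 i₀ p.1.toBlocks₁₂)
  map_add' _ _ := Prod.ext rfl (Prod.ext rfl (Function.update_add ..))
  map_smul' _ _ := Prod.ext rfl (Prod.ext rfl (Function.update_smul ..))

theorem isZariskiIrreducible_representations [Infinite k] {m : ℕ} (hm : m ≠ 0) {n : Type*}
    (i₀ : n) :
    IsZariskiIrreducible k {x : RepSpace k ι κ n | x.1 ^ m = 0 ∧ x.2.1 ^ m = 0 ∧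
      ∑ i ∈ Finset.range m, x.1 ^ (m - 1 - i) * x.2.2 i₀ * x.2.1 ^ i = 0} := by
  classical
  convert ((isZariskiIrreducible_blockTriangular (ι := ι) (κ := κ) hm).prod
    isZariskiIrreducible_univ).image
      (isPolyMap_linear (V := _ × (n → Matrix ι κ k)) (blockTuple (k := k) i₀)) using 1
  refine Set.Subset.antisymm (fun ⟨A, B, Z⟩ ⟨hA, hB, hZ⟩ => ?_) ?_
  · refine ⟨(Matrix.fromBlocks A (Z i₀) 0 B, Z), ⟨⟨?_, ?_⟩, trivial⟩, ?_⟩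
    · rw [fromBlocks_zero₂₁_pow, hA, hB, hZ, Matrix.fromBlocks_zero]
    · simp
    · simp [blockTuple]
  · rintro _ ⟨⟨X, Y⟩, ⟨⟨hX, hX₂₁⟩, -⟩, rfl⟩
    rw [← X.fromBlocks_toBlocks, hX₂₁, fromBlocks_zero₂₁_pow, ← Matrix.fromBlocks_zero,
      Matrix.fromBlocks_inj] at hX
    simpa [blockTuple] using ⟨hX.1, hX.2.2.2, hX.2.1⟩

end Matrices

section Coordinates

lemma eval_mem_polyFun {ι : Type*} {c : V → ι → k} (hc : ∀ i, (fun x => c x i) ∈ polyFun k V)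
    (p : MvPolynomial ι k) : (fun x => MvPolynomial.eval (c x) p) ∈ polyFun k V := by
  induction p using MvPolynomial.induction_on with
  | C a => simpa only [MvPolynomial.eval_C] using const_mem_polyFun a
  | add p q hp hq =>
    simp only [map_add]
    exact add_mem hp hq
  | mul_X p i hp =>
    simp only [map_mul, MvPolynomial.eval_X]
    exact mul_mem hp (hc i)

lemma continuous_zariskiTop {K : Type u} [Field K] [Module K V] {ι : Type v} {c : V → ι → K}
    (hc : ∀ i, (fun x => c x i) ∈ polyFun K V) : Continuous[zariski K V, zariskiTop K ι] c := by
  let _ := zariski K V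
  refine continuous_generateFrom_iff.2 ?_
  rintro _ ⟨p, rfl⟩
  exact isOpen_setOf_ne_zero (eval_mem_polyFun hc p)

variable {K : Type u} [Field K] {n d e : ℕ}

lemma aCoords_mem_polyFun (i : AIdx n d e) :
    (fun x : RepSpace K (Fin d) (Fin e) (Fin n) => aCoords (e := e) x i) ∈ polyFun K _ := by
  obtain i | i | i := i
  · exact dual_mem_polyFun (V := RepSpace K (Fin d) (Fin e) (Fin n))
      (Matrix.entryLinearMap K K i.1 i.2 ∘ₗ LinearMap.fst K _ _)
  · exact dual_mem_polyFun (V := RepSpace K (Fin d) (Fin e) (Fin n))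
      (Matrix.entryLinearMap K K i.1 i.2 ∘ₗ LinearMap.fst K _ _ ∘ₗ LinearMap.snd K _ _)
  · exact dual_mem_polyFun (V := RepSpace K (Fin d) (Fin e) (Fin n))
      (Matrix.entryLinearMap K K i.2.1 i.2.2 ∘ₗ LinearMap.proj i.1 ∘ₗ
        LinearMap.snd K _ _ ∘ₗ LinearMap.snd K _ _)

lemma continuous_aTop : @Continuous (RepSpace K (Fin d) (Fin e) (Fin n)) (ASpace K n d e)
    (zariski K _) (aTop K n d e) fun x => x := by
  let _ := zariskiTop K (AIdx n d e)
  exact continuous_induced_rng.2 (continuous_zariskiTop aCoords_mem_polyFun)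

lemma IsZariskiIrreducible.isIrreducible_aTop {T : Set (RepSpace K (Fin d) (Fin e) (Fin n))}
    (hT : IsZariskiIrreducible K T) : @IsIrreducible (ASpace K n d e) (aTop K n d e) T := by
  let _ := zariski K (RepSpace K (Fin d) (Fin e) (Fin n))
  let _ := aTop K n d e
  have h := IsIrreducible.image hT _ continuous_aTop.continuousOn
  exact (congrArg (IsIrreducible (X := ASpace K n d e)) (Set.image_id' T)).mp h

end Coordinates

end GeometricIrreducibility

theorem A_n_m_msubone_geometrically_irreducible_general (k : Type u) [Field k] [Infinite k]
    (m n : ℕ) (hm : m ≠ 0) (i₀ : Fin n) (d e : ℕ) :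
    @IsIrreducible _ (aTop k n d e)
      {x : ASpace k n d e | x.1 ^ m = 0 ∧ x.2.1 ^ m = 0 ∧
        ∑ i ∈ Finset.range m, x.1 ^ (m - 1 - i) * x.2.2 i₀ * x.2.1 ^ i = 0} :=
  (GeometricIrreducibility.isZariskiIrreducible_representations hm i₀).isIrreducible_aTop

/-- For `m ≥ 2` and `n ≥ 1` the algebra `A(n, m, m-1)` is geometrically
irreducible: for all `d, e ∈ ℕ`, the Zariski-closed subset of
`M_{d×d}(k) × M_{e×e}(k) × M_{d×e}(k)^n` consisting of all tuples `(V, U, Z₁, …, Z_n)`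
with `V^m = 0`, `U^m = 0` and `∑_{i=0}^{m-1} V^{m-1-i} Z₁ U^i = 0` is irreducible. -/
theorem A_n_m_msubone_geometrically_irreducible (k : Type u) [Field k] [IsAlgClosed k]
    (m n : ℕ) (hm : 2 ≤ m) (hn : 1 ≤ n) (d e : ℕ) :
    @IsIrreducible _ (aTop k n d e)
      {x : ASpace k n d e | x.1 ^ m = 0 ∧ x.2.1 ^ m = 0 ∧
        ∑ i ∈ Finset.range m, x.1 ^ (m - 1 - i) * x.2.2 ⟨0, hn⟩ * x.2.1 ^ i = 0} :=
  A_n_m_msubone_geometrically_irreducible_general k m n (by omega) ⟨0, hn⟩ d e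
end
end

section
/- For every m ≥ 1, the algebra Λ = k[x]/(x^m) is hom-irreducible and ext-irreducible: for all d, e ∈ ℕ, both of the following Zariski-closed subsets of matrix spaces are irreducible: (i) {(U, V, f) ∈ M_{e×e}(k) × M_{d×d}(k) × M_{d×e}(k) : U^m = 0, V^m = 0, f U = V f}, and (ii) {(U, V, Z) ∈ M_{e×e}(k) × M_{d×d}(k) × M_{d×e}(k) : U^m = 0, V^m = 0, Σ_{i=0}^{m−1} V^{m−1−i} Z U^{i} = 0}. -/
/-!
Formalization of a statement from:
"Algebras with irreducible module varieties: two-vertex case completed"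
-/

universe u v

open Quiver

noncomputable section

/-- The ambient affine space `M_{e×e}(k) × M_{d×d}(k) × M_{d×e}(k)` of triples
`(U, V, f)` (respectively `(U, V, Z)`). -/
def CSpace (k : Type u) [Field k] (d e : ℕ) : Type u :=
  Matrix (Fin e) (Fin e) k × Matrix (Fin d) (Fin d) k × Matrix (Fin d) (Fin e) k

/-- The index type for the affine coordinates on `CSpace`. -/
def CIdx (d e : ℕ) : Type := (Fin e × Fin e) ⊕ (Fin d × Fin d) ⊕ (Fin d × Fin e)

/-- The affine coordinates on `CSpace`. -/
def cCoords {k : Type u} [Field k] {d e : ℕ} (x : CSpace k d e) : CIdx d e → k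
  | Sum.inl i => x.1 i.1 i.2
  | Sum.inr (Sum.inl i) => x.2.1 i.1 i.2
  | Sum.inr (Sum.inr i) => x.2.2 i.1 i.2

/-- The Zariski topology on `CSpace`. -/
def cTop (k : Type u) [Field k] (d e : ℕ) : TopologicalSpace (CSpace k d e) :=
  (zariskiTop k (CIdx d e)).induced cCoords

/-!
Let `W` be a Zariski closed set containing all homomorphisms `f : U → V` between operators of
generic Jordan type, that is, with as many blocks of the maximal size `m` as the dimension allows
and one further block. If `U`, say, is not generic, then a box of its Jordan type can be moved
from a smaller block to a larger one by a rank one deformation `U + t • (ψ ⊗ x)`. Among all such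
moves in `U` and `V` choose one whose two blocks differ least in size; after passing to dual maps
it takes place in `U`. By minimality the blocks of `V` whose sizes lie between those of the two
chosen blocks leave no obstruction to deforming `f` as well, once `f` is replaced by `f + s • g`
for a suitable `g` and almost every `s`: if two blocks of `V` are in between, they have the same
sizes as the two chosen ones, and the same box is moved in `V` too. Hence `f` is the limit of
limits of homomorphisms between less degenerate operators, so it lies in `W` by induction.

The generic locus is thus dense in `H(e, d)`, and any two of its points lie on a polynomial curve
in `H(e, d)`, since their operators are conjugate and the remaining datum `f` ranges over a vector
space. Finally, an element of `E(e, d)` amounts to a nilpotent block triangular matrix, hence to a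
point of `H(d, d + e)` whose homomorphism is the standard inclusion, and the homomorphisms with
invertible upper block form an open subset that retracts polynomially onto these.
-/

section JordanSystem

open Module

variable {k : Type*} [Field k] {M N ι : Type*} [AddCommGroup M] [Module k M]
  [AddCommGroup N] [Module k N]

theorem apply_pow_of_comp_eq {U : End k M} {V : End k N} {f : M →ₗ[k] N}
    (hf : f ∘ₗ U = V ∘ₗ f) (n : ℕ) (v : M) : f ((U ^ n) v) = (V ^ n) (f v) :=
  (LinearMap.congr_fun (End.commute_pow_left_of_commute hf.symm n) v).symm

theorem pow_apply_pow_apply (U : End k M) (r s : ℕ) (v : M) :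
    (U ^ r) ((U ^ s) v) = (U ^ (r + s)) v := by
  rw [pow_add, End.mul_apply]

theorem dualMap_pow (U : End k M) (s : ℕ) : (U ^ s).dualMap = U.dualMap ^ s := by
  induction s with
  | zero => rfl
  | succ s ih =>
    rw [pow_succ, pow_succ', End.mul_eq_comp, ← LinearMap.dualMap_comp_dualMap, ih]
    rfl

/-- The vectors `y i` generate the cyclic summands of a decomposition of the `k[x]`-module
`(M, U)` into Jordan blocks of sizes `a i`: the chains `y i, U (y i), …, U ^ (a i - 1) (y i)`
together form a basis of `M`, and `U ^ a i` kills `y i`. Blocks of size zero are allowed. -/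
structure IsJordanSystem (U : End k M) (a : ι → ℕ) (y : ι → M) : Prop where
  kill : ∀ i, (U ^ a i) (y i) = 0
  linearIndependent : LinearIndependent k fun p : Σ i, Fin (a i) ↦ (U ^ (p.2 : ℕ)) (y p.1)
  span : ⊤ ≤ Submodule.span k (Set.range fun p : Σ i, Fin (a i) ↦ (U ^ (p.2 : ℕ)) (y p.1))

namespace IsJordanSystem

variable {U : End k M} {V : End k N} {a : ι → ℕ} {y : ι → M}

theorem of_basis (b : Basis (Σ i, Fin (a i)) k M) (kill : ∀ i, (U ^ a i) (y i) = 0)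
    (hb : ∀ p, b p = (U ^ (p.2 : ℕ)) (y p.1)) : IsJordanSystem U a y := by
  have hb : ⇑b = fun p : Σ i, Fin (a i) ↦ (U ^ (p.2 : ℕ)) (y p.1) := funext hb
  exact ⟨kill, hb ▸ b.linearIndependent, hb ▸ b.span_eq.ge⟩

/-- The basis of `M` formed by the Jordan chains of a Jordan system. -/
def basis (h : IsJordanSystem U a y) : Basis (Σ i, Fin (a i)) k M :=
  Basis.mk h.linearIndependent h.span

theorem basis_apply (h : IsJordanSystem U a y) (p : Σ i, Fin (a i)) :
    h.basis p = (U ^ (p.2 : ℕ)) (y p.1) := by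
  simp [basis]

theorem pow_apply_eq_zero (h : IsJordanSystem U a y) {i : ι} {n : ℕ} (hn : a i ≤ n) :
    (U ^ n) (y i) = 0 :=
  Module.End.pow_map_zero_of_le hn (h.kill i)

theorem pow_eq_zero (h : IsJordanSystem U a y) {m : ℕ} (ha : ∀ i, a i ≤ m) : U ^ m = 0 := by
  refine h.basis.ext fun p ↦ ?_
  rw [h.basis_apply, pow_apply_pow_apply, h.pow_apply_eq_zero ((ha p.1).trans le_self_add),
    LinearMap.zero_apply]

theorem le_of_pow_eq_zero (h : IsJordanSystem U a y) {m : ℕ} (hU : U ^ m = 0) (i : ι) :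
    a i ≤ m := by
  by_contra! him
  apply h.basis.ne_zero ⟨i, ⟨m, him⟩⟩
  simp [h.basis_apply, hU]

theorem hom_ext (h : IsJordanSystem U a y) {f g : M →ₗ[k] N} (hf : f ∘ₗ U = V ∘ₗ f)
    (hg : g ∘ₗ U = V ∘ₗ g) (hfg : ∀ i, f (y i) = g (y i)) : f = g := by
  refine h.basis.ext fun p ↦ ?_
  rw [h.basis_apply, apply_pow_of_comp_eq hf, apply_pow_of_comp_eq hg, hfg]

theorem exists_lift (h : IsJordanSystem U a y) (V : End k N) (n : ι → N)
    (hn : ∀ i, (V ^ a i) (n i) = 0) :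
    ∃ f : M →ₗ[k] N, f ∘ₗ U = V ∘ₗ f ∧ ∀ i, f (y i) = n i := by
  let f := h.basis.constr k fun p ↦ (V ^ (p.2 : ℕ)) (n p.1)
  have hf (i s) : f ((U ^ s) (y i)) = (V ^ s) (n i) := by
    rcases lt_or_ge s (a i) with hs | hs
    · rw [← h.basis_apply ⟨i, ⟨s, hs⟩⟩, h.basis.constr_basis]
    · rw [h.pow_apply_eq_zero hs, End.pow_map_zero_of_le hs (hn i), map_zero]
  refine ⟨f, h.basis.ext fun p ↦ ?_, fun i ↦ hf i 0⟩
  rw [h.basis_apply, LinearMap.comp_apply, LinearMap.comp_apply, hf, ← End.mul_apply,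
    ← End.mul_apply, ← pow_succ', ← pow_succ', hf]

theorem of_generates [Fintype ι] (kill : ∀ i, (U ^ a i) (y i) = 0)
    (hgen : ∀ W : Submodule k M, (∀ v ∈ W, U v ∈ W) → (∀ i, y i ∈ W) → W = ⊤)
    (hdim : ∑ i, a i = finrank k M) : IsJordanSystem U a y := by
  let W := Submodule.span k (Set.range fun p : Σ i, Fin (a i) ↦ (U ^ (p.2 : ℕ)) (y p.1))
  have mem_W (i s) : (U ^ s) (y i) ∈ W := by
    rcases lt_or_ge s (a i) with hs | hs
    · exact Submodule.subset_span ⟨⟨i, ⟨s, hs⟩⟩, rfl⟩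
    · exact End.pow_map_zero_of_le hs (kill i) ▸ W.zero_mem
  have U_mem_W : W ≤ W.comap U := by
    refine Submodule.span_le.2 ?_
    rintro _ ⟨p, rfl⟩
    change U ((U ^ (p.2 : ℕ)) (y p.1)) ∈ W
    rw [← End.mul_apply, ← pow_succ']
    exact mem_W _ _
  have hspan : ⊤ ≤ W := (hgen W U_mem_W fun i ↦ mem_W i 0).ge
  exact ⟨kill, linearIndependent_of_top_le_span_of_card_eq_finrank hspan (by simp [hdim]), hspan⟩

theorem eq_top_of_forall_mem (h : IsJordanSystem U a y) {W : Submodule k M}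
    (hUW : ∀ v ∈ W, U v ∈ W) (hy : ∀ i, y i ∈ W) : W = ⊤ := by
  refine top_le_iff.1 (h.span.trans (Submodule.span_le.2 ?_))
  rintro _ ⟨p, rfl⟩
  exact End.pow_apply_mem_of_forall_mem _ hUW _ (hy p.1)

theorem finrank_eq [Fintype ι] (h : IsJordanSystem U a y) : finrank k M = ∑ i, a i := by
  simp [finrank_eq_card_basis h.basis]

theorem range_pow (h : IsJordanSystem U a y) (s : ℕ) :
    LinearMap.range (U ^ s) =
      Submodule.span k (Set.range fun p : Σ i, Fin (a i - s) ↦ (U ^ (p.2 + s : ℕ)) (y p.1)) := by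
  apply le_antisymm
  · rw [LinearMap.range_eq_map, ← h.basis.span_eq, Submodule.map_span, Submodule.span_le]
    rintro _ ⟨_, ⟨p, rfl⟩, rfl⟩
    rw [h.basis_apply, pow_apply_pow_apply, add_comm]
    rcases lt_or_ge (p.2 + s : ℕ) (a p.1) with hs | hs
    · exact Submodule.subset_span ⟨⟨p.1, ⟨p.2, Nat.lt_sub_of_add_lt hs⟩⟩, rfl⟩
    · exact h.pow_apply_eq_zero hs ▸ Submodule.zero_mem _
  · rw [Submodule.span_le]
    rintro _ ⟨p, rfl⟩
    exact ⟨(U ^ (p.2 : ℕ)) (y p.1), by rw [pow_apply_pow_apply, add_comm]⟩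

theorem finrank_range_pow [Fintype ι] (h : IsJordanSystem U a y) (s : ℕ) :
    finrank k (LinearMap.range (U ^ s)) = ∑ i, (a i - s) := by
  let shift (p : Σ i, Fin (a i - s)) : Σ i, Fin (a i) :=
    ⟨p.1, ⟨p.2 + s, Nat.add_lt_of_lt_sub p.2.2⟩⟩
  have shift_injective : Function.Injective shift := by
    rintro ⟨i, r⟩ ⟨j, t⟩ hrt
    obtain ⟨rfl, hrt⟩ := Sigma.mk.inj_iff.1 hrt
    simpa [Fin.ext_iff] using hrt
  have hli : LinearIndependent k fun p : Σ i, Fin (a i - s) ↦ (U ^ (p.2 + s : ℕ)) (y p.1) :=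
    h.linearIndependent.comp shift shift_injective
  rw [h.range_pow, finrank_span_eq_card hli]
  simp

theorem map (h : IsJordanSystem U a y) (φ : M ≃ₗ[k] N) (hφ : φ ∘ₗ U = V ∘ₗ φ) :
    IsJordanSystem V a (φ ∘ y) := by
  have hpow (s v) : (V ^ s) (φ v) = φ ((U ^ s) v) := (apply_pow_of_comp_eq hφ s v).symm
  refine of_basis (h.basis.map φ) (fun i ↦ ?_) fun p ↦ ?_
  · rw [Function.comp_apply, hpow, h.kill, map_zero]
  · rw [Basis.map_apply, h.basis_apply, Function.comp_apply, hpow]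

theorem smul (h : IsJordanSystem U a y) (c : ι → kˣ) :
    IsJordanSystem U a fun i ↦ c i • y i := by
  refine of_basis (h.basis.unitsSMul fun p ↦ c p.1) (fun i ↦ ?_) fun p ↦ ?_
  · rw [LinearMap.map_smul_of_tower, h.kill, smul_zero]
  · rw [Basis.unitsSMul_apply, h.basis_apply, LinearMap.map_smul_of_tower]

theorem exists_equiv (h : IsJordanSystem U a y) {z : ι → N} (h' : IsJordanSystem V a z) :
    ∃ φ : M ≃ₗ[k] N, φ ∘ₗ U = V ∘ₗ φ := by
  obtain ⟨f, hf, hfy⟩ := h.exists_lift V z h'.kill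
  obtain ⟨g, hg, hgz⟩ := h'.exists_lift U y h.kill
  have hgf : g ∘ₗ f = LinearMap.id := h.hom_ext (V := U)
    (by rw [LinearMap.comp_assoc, hf, ← LinearMap.comp_assoc, hg, LinearMap.comp_assoc]) rfl
    (by simp [hfy, hgz])
  have hfg : f ∘ₗ g = LinearMap.id := h'.hom_ext (V := V)
    (by rw [LinearMap.comp_assoc, hg, ← LinearMap.comp_assoc, hf, LinearMap.comp_assoc]) rfl
    (by simp [hfy, hgz])
  exact ⟨.ofLinearMap f g hfg hgf, hf⟩

section Socle

/-- The linear form reading off the coefficient of the last vector of the `j`-th Jordan chain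
(zero if that chain is empty). -/
def topForm (h : IsJordanSystem U a y) (j : ι) : Dual k M :=
  if hj : 0 < a j then h.basis.coord ⟨j, ⟨a j - 1, Nat.sub_one_lt_of_lt hj⟩⟩ else 0

open scoped Classical in
theorem topForm_pow_apply (h : IsJordanSystem U a y) (j i : ι) (r : ℕ) :
    h.topForm j ((U ^ r) (y i)) = if i = j ∧ r + 1 = a j then 1 else 0 := by
  unfold topForm
  rcases lt_or_ge r (a i) with hr | hr
  · rw [← h.basis_apply ⟨i, ⟨r, hr⟩⟩]
    split_ifs with hj hij hij
    · obtain ⟨rfl, hij⟩ := hij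
      obtain rfl : r = a i - 1 := Nat.eq_sub_of_add_eq hij
      simp
    · rw [Basis.coord_apply, Basis.repr_self, Finsupp.single_eq_of_ne]
      rintro heq
      obtain ⟨rfl, heq⟩ := Sigma.mk.inj_iff.1 heq
      rw [heq_eq_eq, Fin.mk.injEq] at heq
      exact hij ⟨rfl, by omega⟩
    · omega
    · rfl
  · rw [h.pow_apply_eq_zero hr, map_zero, if_neg (by rintro ⟨rfl, h⟩; omega)]

theorem coord_eq (h : IsJordanSystem U a y) (p : Σ i, Fin (a i)) :
    h.basis.coord p = h.topForm p.1 ∘ₗ U ^ (a p.1 - 1 - p.2) := by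
  classical
  refine h.basis.ext fun q ↦ ?_
  obtain ⟨i, r⟩ := q
  obtain ⟨j, s⟩ := p
  rw [LinearMap.comp_apply, h.basis_apply, pow_apply_pow_apply, h.topForm_pow_apply,
    ← h.basis_apply, Basis.coord_apply, Basis.repr_self, Finsupp.single_apply]
  refine if_congr ?_ rfl rfl
  constructor
  · rintro ⟨⟩
    exact ⟨rfl, by dsimp; omega⟩
  · rintro ⟨rfl : i = j, hs⟩
    dsimp at hs
    obtain rfl : r = s := by omega
    rfl

theorem topForm_comp_pow_eq_zero (h : IsJordanSystem U a y) {j : ι} {n : ℕ} (hn : a j ≤ n) :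
    h.topForm j ∘ₗ U ^ n = 0 := by
  refine h.basis.ext fun p ↦ ?_
  rw [h.basis_apply, LinearMap.comp_apply, pow_apply_pow_apply, h.topForm_pow_apply,
    if_neg (by omega), LinearMap.zero_apply]

theorem mem_range_pow (h : IsJordanSystem U a y) {l : ℕ} {n : M}
    (hn : ∀ j r, a j ≤ r + l → h.topForm j ((U ^ r) n) = 0) : n ∈ LinearMap.range (U ^ l) := by
  rw [← h.basis.linearCombination_repr n, Finsupp.linearCombination_apply]
  refine Submodule.sum_mem _ fun p _ ↦ ?_
  rcases lt_or_ge (p.2 : ℕ) l with hp | hp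
  · have hcoord : h.basis.repr n p = 0 := by
      rw [← Basis.coord_apply, h.coord_eq]
      exact hn _ _ (by omega)
    simp [hcoord]
  · refine Submodule.smul_mem _ _ ⟨(U ^ (p.2 - l : ℕ)) (y p.1), ?_⟩
    rw [h.basis_apply, pow_apply_pow_apply, Nat.add_sub_cancel' hp]

theorem dualMap [Finite ι] (h : IsJordanSystem U a y) :
    IsJordanSystem U.dualMap a h.topForm := by
  classical
  refine of_basis (h.basis.dualBasis.reindex (Equiv.sigmaCongrRight fun _ ↦ Fin.revPerm))
    (fun j ↦ ?_) fun ⟨j, s⟩ ↦ ?_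
  · rw [← dualMap_pow]
    exact h.topForm_comp_pow_eq_zero le_rfl
  · have hs : a j - 1 - (s.rev : ℕ) = s := by rw [Fin.val_rev]; omega
    rw [Basis.reindex_apply, Basis.coe_dualBasis, ← dualMap_pow, ← hs]
    exact h.coord_eq ⟨j, s.rev⟩

end Socle

end IsJordanSystem
end JordanSystem

section JordanType

open Module Polynomial

theorem span_range_directSum_lof_mk_one {R ι : Type*} [CommRing R] [DecidableEq ι]
    (I : ι → Ideal R) :
    Submodule.span R (Set.range fun i ↦
      DirectSum.lof R ι (fun i ↦ R ⧸ I i) i (Submodule.Quotient.mk 1)) = ⊤ := by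
  refine eq_top_iff.2 fun z _ ↦ ?_
  induction z using DirectSum.induction_on with
  | zero => exact Submodule.zero_mem _
  | add z w hz hw => exact Submodule.add_mem _ (hz trivial) (hw trivial)
  | of i x =>
    obtain ⟨p, rfl⟩ := Submodule.Quotient.mk_surjective _ x
    rw [← mul_one p, ← smul_eq_mul, Submodule.Quotient.mk_smul]
    change DirectSum.lof R ι (fun i ↦ R ⧸ I i) i (p • Submodule.Quotient.mk 1) ∈ _
    rw [map_smul]
    exact Submodule.smul_mem _ _ (Submodule.subset_span ⟨i, rfl⟩)

variable {k : Type*} [Field k] {M N : Type*} [AddCommGroup M] [Module k M]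
  [AddCommGroup N] [Module k N]

theorem exists_isJordanSystem_of_isNilpotent [FiniteDimensional k M] {U : End k M}
    (hU : IsNilpotent U) : ∃ (n : ℕ) (a : Fin n → ℕ) (y : Fin n → M), IsJordanSystem U a y := by
  obtain ⟨m, hm⟩ := hU
  have isTorsion : IsTorsion' (AEval' U) (Submonoid.powers (X : k[X])) := fun v ↦ by
    obtain ⟨v, rfl⟩ := (AEval'.of U).surjective v
    refine ⟨⟨X ^ m, m, rfl⟩, ?_⟩
    change (X ^ m : k[X]) • AEval'.of U v = 0
    rw [AEval'.X_pow_smul_of, hm, zero_smul, map_zero]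
  obtain ⟨n, a, ⟨φ⟩⟩ := torsion_by_prime_power_decomposition irreducible_X isTorsion
  let w (i : Fin n) : AEval' U := φ.symm (DirectSum.lof k[X] (Fin n)
    (fun i ↦ k[X] ⧸ Submodule.span k[X] {(X : k[X]) ^ a i}) i (Submodule.Quotient.mk 1))
  have span_w : Submodule.span k[X] (Set.range w) = ⊤ := by
    have := congrArg (Submodule.map φ.symm.toLinearMap)
      (span_range_directSum_lof_mk_one fun i ↦ Submodule.span k[X] {(X : k[X]) ^ a i})
    rwa [Submodule.map_span, ← Set.range_comp, Submodule.map_top, LinearEquiv.range] at this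
  refine ⟨n, a, fun i ↦ (AEval'.of U).symm (w i), .of_generates (fun i ↦ ?_) (fun W hW hw ↦ ?_) ?_⟩
  · apply (AEval'.of U).injective
    change AEval'.of U (U ^ a i • _) = _
    rw [← AEval.X_pow_smul_of, LinearEquiv.apply_symm_apply, ← map_smul, ← map_smul,
      ← Submodule.Quotient.mk_smul, (Submodule.Quotient.mk_eq_zero _).2, map_zero, map_zero,
      map_zero]
    simp
  · have hspan : Submodule.span k[X] (Set.range w) ≤ AEval.mapSubmodule k M U ⟨W, hW⟩ :=
      Submodule.span_le.2 (by rintro _ ⟨i, rfl⟩; exact (AEval.mem_mapSubmodule_apply ..).2 (hw i))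
    refine eq_top_iff.2 fun v _ ↦ ?_
    simpa using (AEval.mem_mapSubmodule_apply ..).1 (hspan (span_w ▸ trivial : AEval'.of U v ∈ _))
  · have (i : Fin n) : Module.Finite k (k[X] ⧸ Submodule.span k[X] {(X : k[X]) ^ a i}) :=
      (monic_X_pow (R := k) (a i)).finite_quotient
    have finrank_block (i : Fin n) :
        finrank k (k[X] ⧸ Submodule.span k[X] {(X : k[X]) ^ a i}) = a i :=
      finrank_quotient_span_eq_natDegree.trans (natDegree_X_pow _)
    rw [(AEval'.of U).finrank_eq, (φ.restrictScalars k).finrank_eq, finrank_directSum]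
    simp only [finrank_block]

/-- The block sizes of the generic `x` with `x ^ m = 0` on an `n`-dimensional space:
`n / m` blocks of the maximal size `m` and one block of size `n % m` (empty if `m ∣ n`). -/
def genericSizes (m n : ℕ) : Option (Fin (n / m)) → ℕ :=
  fun i ↦ i.elim (n % m) fun _ ↦ m

/-- `U` has `finrank k M / m` Jordan blocks of size `m` and one further block, for the
eigenvalue zero. The operators with this property form the dense orbit in `{U | U ^ m = 0}`. -/
def HasGenericJordanType (m : ℕ) (U : End k M) : Prop :=
  ∃ y, IsJordanSystem U (genericSizes m (finrank k M)) y

theorem HasGenericJordanType.exists_equiv {m : ℕ} {U : End k M} {V : End k N}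
    (hU : HasGenericJordanType m U) (hV : HasGenericJordanType m V)
    (hMN : finrank k M = finrank k N) : ∃ φ : M ≃ₗ[k] N, φ ∘ₗ U = V ∘ₗ φ := by
  obtain ⟨y, hy⟩ := hU
  obtain ⟨z, hz⟩ : ∃ z, IsJordanSystem V (genericSizes m (finrank k M)) z := hMN ▸ hV
  exact hy.exists_equiv hz

theorem sum_lt_of_forall_ne_eq_zero {ι : Type*} {T : Finset ι} {a : ι → ℕ} {m : ℕ} (hm : 0 < m)
    (ha : ∀ i ∈ T, a i < m) (hT : ∀ i ∈ T, ∀ j ∈ T, i ≠ j → a i ≠ 0 → a j = 0) :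
    ∑ i ∈ T, a i < m := by
  by_cases h : ∃ i ∈ T, a i ≠ 0
  · obtain ⟨i, hi, hai⟩ := h
    rw [Finset.sum_eq_single_of_mem i hi fun j hj hji ↦ hT i hi j hj hji.symm hai]
    exact ha i hi
  · push Not at h
    rwa [Finset.sum_eq_zero h]

theorem IsJordanSystem.hasGenericJordanType_of_compl {ι : Type*} [Fintype ι] [DecidableEq ι]
    {U : End k M} {a : ι → ℕ} {y : ι → M} (h : IsJordanSystem U a y)
    {m : ℕ} (hm : 0 < m) (S : Finset ι) (hS : ∀ i ∈ S, a i = m) (ha : ∀ i ∈ Sᶜ, a i < m)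
    (hSc : ∀ i ∈ Sᶜ, ∀ j ∈ Sᶜ, i ≠ j → a i ≠ 0 → a j = 0) : HasGenericJordanType m U := by
  have eq_zero {i} (hi : a i = 0) : y i = 0 := h.pow_apply_eq_zero (n := 0) hi.le
  have hdim : finrank k M = ∑ i ∈ Sᶜ, a i + m * S.card := by
    rw [h.finrank_eq, ← Finset.sum_compl_add_sum S, Finset.sum_congr (s₁ := S) rfl hS,
      Finset.sum_const, smul_eq_mul, mul_comm]
  have hlt : ∑ i ∈ Sᶜ, a i < m := sum_lt_of_forall_ne_eq_zero hm ha hSc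
  have hmod : finrank k M % m = ∑ i ∈ Sᶜ, a i := by
    rw [hdim, Nat.add_mul_mod_self_left, Nat.mod_eq_of_lt hlt]
  have hdiv : S.card = finrank k M / m := by
    rw [hdim, Nat.add_mul_div_left _ _ hm, Nat.div_eq_of_lt hlt, zero_add]
  let e : Fin (finrank k M / m) ≃ S := (S.equivFinOfCardEq hdiv).symm
  refine ⟨fun i ↦ i.elim (∑ i ∈ Sᶜ, y i) fun j ↦ y (e j),
    .of_generates ?_ (fun W hW hyW ↦ h.eq_top_of_forall_mem hW fun i ↦ ?_) ?_⟩
  · rintro (_ | j)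
    · change (U ^ (finrank k M % m)) (∑ i ∈ Sᶜ, y i) = 0
      rw [map_sum, hmod]
      exact Finset.sum_eq_zero fun i hi ↦
        h.pow_apply_eq_zero (Finset.single_le_sum (fun _ _ ↦ Nat.zero_le _) hi)
    · exact h.pow_apply_eq_zero (hS _ (e j).2).le
  · by_cases hi : i ∈ S
    · simpa using hyW (some (e.symm ⟨i, hi⟩))
    by_cases hai : a i = 0
    · exact eq_zero hai ▸ W.zero_mem
    · have hi := Finset.mem_compl.2 hi
      have hyi : ∑ j ∈ Sᶜ, y j = y i := Finset.sum_eq_single_of_mem i hi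
        fun j hj hji ↦ eq_zero (hSc i hi j hj hji.symm hai)
      exact hyi ▸ hyW none
  · simp [Fintype.sum_option, genericSizes, Nat.mod_add_div']

theorem IsJordanSystem.hasGenericJordanType {ι : Type*} [Finite ι]
    {U : End k M} {a : ι → ℕ} {y : ι → M} (h : IsJordanSystem U a y) {m : ℕ} (hm : 0 < m)
    (ham : ∀ i, a i ≤ m) (hpair : ∀ i j, i ≠ j → a i < m → a j ≤ a i → a j = 0) :
    HasGenericJordanType m U := by
  classical
  have := Fintype.ofFinite ι
  have lt_of_mem {i} (hi : i ∈ (Finset.univ.filter fun i ↦ a i = m)ᶜ) : a i < m :=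
    lt_of_le_of_ne (ham i) (by simpa using hi)
  refine h.hasGenericJordanType_of_compl hm (Finset.univ.filter fun i ↦ a i = m) (by simp)
    (fun i ↦ lt_of_mem) fun i hi j hj hij hai ↦ ?_
  rcases le_total (a j) (a i) with hle | hle
  · exact hpair i j hij (lt_of_mem hi) hle
  · exact absurd (hpair j i hij.symm (lt_of_mem hj) hle) hai

end JordanType

section Transfer

open Module

section Correction

variable {R M N : Type*} [CommRing R] [AddCommGroup M] [Module R M] [AddCommGroup N] [Module R N]

/-- The first order correction `∑_{r < l} (ψ ∘ U ^ r) ⊗ V ^ (l - 1 - r) δ` of a homomorphism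
`f : (M, U) → (N, V)` that accompanies the deformation `U + t • (ψ ⊗ x)` when
`f x = V ^ l δ`. -/
def homCorrection (U : End R M) (V : End R N) (ψ : Dual R M) (δ : N) (l : ℕ) : M →ₗ[R] N :=
  ∑ r ∈ Finset.range l, (ψ ∘ₗ U ^ r).smulRight ((V ^ (l - 1 - r)) δ)

variable {U : End R M} {V : End R N} {ψ : Dual R M} {δ : N} {l : ℕ}

theorem homCorrection_apply (v : M) : homCorrection U V ψ δ l v =
    ∑ r ∈ Finset.range l, ψ ((U ^ r) v) • (V ^ (l - 1 - r)) δ := by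
  simp [homCorrection]

theorem homCorrection_apply_map_add (hψ : ψ ∘ₗ U ^ l = 0) (v : M) :
    homCorrection U V ψ δ l (U v) + ψ v • (V ^ l) δ = V (homCorrection U V ψ δ l v) := by
  let term (r : ℕ) : N := ψ ((U ^ r) v) • (V ^ (l - r)) δ
  have left : homCorrection U V ψ δ l (U v) = ∑ r ∈ Finset.range l, term (r + 1) := by
    rw [homCorrection_apply]
    refine Finset.sum_congr rfl fun r _ ↦ ?_
    rw [← End.mul_apply, ← pow_succ, Nat.sub_sub, add_comm 1 r]
  have right : V (homCorrection U V ψ δ l v) = ∑ r ∈ Finset.range l, term r := by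
    rw [homCorrection_apply, map_sum]
    refine Finset.sum_congr rfl fun r hr ↦ ?_
    have hrl := Finset.mem_range.1 hr
    rw [map_smul, ← End.mul_apply, ← pow_succ', show l - 1 - r + 1 = l - r by omega]
  have last : term l = 0 := by
    have : ψ ((U ^ l) v) = 0 := LinearMap.congr_fun hψ v
    simp [term, this]
  calc homCorrection U V ψ δ l (U v) + ψ v • (V ^ l) δ
      = ∑ r ∈ Finset.range l, term (r + 1) + term 0 := by rw [left]; rfl
    _ = ∑ r ∈ Finset.range l, term r + term l := by
      rw [← Finset.sum_range_succ', Finset.sum_range_succ]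
    _ = V (homCorrection U V ψ δ l v) := by rw [last, add_zero, right]

theorem add_smul_smulRight_pow_apply (x : M) (t : R) {v : M} {n : ℕ}
    (hv : ∀ r < n, ψ ((U ^ r) v) = 0) :
    ((U + t • ψ.smulRight x) ^ n) v = (U ^ n) v := by
  induction n with
  | zero => rfl
  | succ n ih =>
    rw [pow_succ', End.mul_apply, ih fun r hr ↦ hv r (hr.trans n.lt_succ_self), pow_succ',
      End.mul_apply]
    simp [hv n n.lt_succ_self]

theorem add_homCorrection_comp_eq {f : M →ₗ[R] N} (hf : f ∘ₗ U = V ∘ₗ f)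
    (hψ : ψ ∘ₗ U ^ l = 0) {x : M} (hψx : ∀ r, ψ ((U ^ r) x) = 0) (hfx : f x = (V ^ l) δ) (t : R) :
    (f + t • homCorrection U V ψ δ l) ∘ₗ (U + t • ψ.smulRight x) =
      V ∘ₗ (f + t • homCorrection U V ψ δ l) := by
  have apply_vector : homCorrection U V ψ δ l x = 0 := by simp [homCorrection_apply, hψx]
  ext v
  have hfv : f (U v) = V (f v) := LinearMap.congr_fun hf v
  simp only [LinearMap.comp_apply, LinearMap.add_apply, LinearMap.smul_apply,
    LinearMap.smulRight_apply, map_add, map_smul, hfv, hfx, apply_vector,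
    ← homCorrection_apply_map_add hψ, smul_add, smul_zero]
  abel

end Correction

variable {k : Type*} [Field k] {M ι : Type*} [AddCommGroup M] [Module k M]

open scoped Classical in
/-- The rank one operator `ψ ⊗ x` moves a box of the Jordan type of `U` from the block `i₂` to
the block `i₁`, which is at least as large: `U + t • (ψ ⊗ x)` has the block sizes `a i₁ + 1` and
`a i₂ - 1` in place of `a i₁` and `a i₂` for every `t ≠ 0`. The length `l` between `a i₂` and
`a i₁` can be chosen freely. -/
structure IsTransfer (U : End k M) (a : ι → ℕ) (y : ι → M) (i₁ i₂ : ι) (l : ℕ) (ψ : Dual k M)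
    (x : M) : Prop where
  system : IsJordanSystem U a y
  ne : i₁ ≠ i₂
  pos : 1 ≤ a i₂
  le_length : a i₂ ≤ l
  length_le : l ≤ a i₁
  form_apply : ∀ i r, ψ ((U ^ r) (y i)) =
    if (i = i₁ ∧ r + 1 = l) ∨ (i = i₂ ∧ r + 1 = a i₂) then 1 else 0
  vector_eq : x = (U ^ (a i₂ - 1)) (y i₂) - (U ^ (l - 1)) (y i₁)

open scoped Classical in
/-- The block sizes `a` after a box has moved from the block `i₂` to the block `i₁`. -/
def transferSizes (a : ι → ℕ) (i₁ i₂ : ι) : ι → ℕ :=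
  Function.update (Function.update a i₁ (a i₁ + 1)) i₂ (a i₂ - 1)

theorem transferSizes_left (a : ι → ℕ) {i₁ i₂ : ι} (h : i₁ ≠ i₂) :
    transferSizes a i₁ i₂ i₁ = a i₁ + 1 := by
  simp [transferSizes, h]

theorem transferSizes_right (a : ι → ℕ) (i₁ i₂ : ι) :
    transferSizes a i₁ i₂ i₂ = a i₂ - 1 := by
  simp [transferSizes]

theorem transferSizes_of_ne (a : ι → ℕ) {i₁ i₂ i : ι} (h₁ : i ≠ i₁) (h₂ : i ≠ i₂) :
    transferSizes a i₁ i₂ i = a i := by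
  simp [transferSizes, h₁, h₂]

theorem sum_transferSizes [Fintype ι] (φ : ℕ → ℕ) (a : ι → ℕ) {i₁ i₂ : ι} (h : i₁ ≠ i₂) :
    ∑ i, φ (transferSizes a i₁ i₂ i) + φ (a i₁) + φ (a i₂) =
      ∑ i, φ (a i) + φ (a i₁ + 1) + φ (a i₂ - 1) := by
  classical
  have split (b : ι → ℕ) : ∑ i, b i = b i₁ + b i₂ + ∑ i ∈ ({i₁, i₂} : Finset ι)ᶜ, b i := by
    rw [← Finset.sum_add_sum_compl {i₁, i₂}, Finset.sum_pair h]
  have rest : ∑ i ∈ ({i₁, i₂} : Finset ι)ᶜ, φ (transferSizes a i₁ i₂ i) =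
      ∑ i ∈ ({i₁, i₂} : Finset ι)ᶜ, φ (a i) := Finset.sum_congr rfl fun i hi ↦ by
    have hi : i ≠ i₁ ∧ i ≠ i₂ := by simpa using hi
    rw [transferSizes_of_ne a hi.1 hi.2]
  rw [split, split fun i ↦ φ (a i), rest, transferSizes_left a h, transferSizes_right]
  ring

theorem IsJordanSystem.exists_isTransfer {U : End k M} {a : ι → ℕ} {y : ι → M}
    (h : IsJordanSystem U a y) {i₁ i₂ : ι} (ne : i₁ ≠ i₂) (pos : 1 ≤ a i₂) {l : ℕ}
    (le_length : a i₂ ≤ l) (length_le : l ≤ a i₁) :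
    ∃ ψ, IsTransfer U a y i₁ i₂ l ψ ((U ^ (a i₂ - 1)) (y i₂) - (U ^ (l - 1)) (y i₁)) := by
  classical
  refine ⟨h.topForm i₁ ∘ₗ U ^ (a i₁ - l) + h.topForm i₂, h, ne, pos, le_length, length_le,
    fun i r ↦ ?_, rfl⟩
  rw [LinearMap.add_apply, LinearMap.comp_apply, pow_apply_pow_apply, h.topForm_pow_apply,
    h.topForm_pow_apply]
  have hl : a i₁ - l + r + 1 = a i₁ ↔ r + 1 = l := by omega
  simp only [hl]
  by_cases hi : i = i₁
  · simp [hi, ne]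
  · simp [hi]

namespace IsTransfer

variable {U : End k M} {a : ι → ℕ} {y : ι → M} {i₁ i₂ : ι} {l : ℕ} {ψ : Dual k M} {x : M}

theorem form_pow_vector (h : IsTransfer U a y i₁ i₂ l ψ x) (r : ℕ) : ψ ((U ^ r) x) = 0 := by
  have := h.pos
  have := h.le_length
  have h₁ : r + (a i₂ - 1) + 1 = a i₂ ↔ r = 0 := by omega
  have h₂ : r + (l - 1) + 1 = l ↔ r = 0 := by omega
  simp [h.vector_eq, pow_apply_pow_apply, h.form_apply, h.ne, h.ne.symm, h₁, h₂]

theorem form_comp_pow (h : IsTransfer U a y i₁ i₂ l ψ x) : ψ ∘ₗ U ^ l = 0 := by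
  have := h.le_length
  refine h.system.basis.ext fun p ↦ ?_
  rw [h.system.basis_apply, LinearMap.comp_apply, pow_apply_pow_apply, h.form_apply,
    if_neg (by omega), LinearMap.zero_apply]

/-- A vector on which all powers of `U` agree with those of its deformations along a transfer. -/
def fixedVector (U : End k M) (a : ι → ℕ) (y : ι → M) (i₁ i₂ : ι) (l : ℕ) : M :=
  y i₂ - (U ^ (l - a i₂)) (y i₁)

theorem pow_fixedVector (h : IsTransfer U a y i₁ i₂ l ψ x) :
    (U ^ (a i₂ - 1)) (fixedVector U a y i₁ i₂ l) = x := by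
  have := h.pos
  have := h.le_length
  rw [fixedVector, map_sub, pow_apply_pow_apply, h.vector_eq,
    show a i₂ - 1 + (l - a i₂) = l - 1 by omega]

theorem form_pow_fixedVector (h : IsTransfer U a y i₁ i₂ l ψ x) (r : ℕ) :
    ψ ((U ^ r) (fixedVector U a y i₁ i₂ l)) = 0 := by
  have := h.le_length
  have hr : r + (l - a i₂) + 1 = l ↔ r + 1 = a i₂ := by omega
  simp [fixedVector, pow_apply_pow_apply, h.form_apply, h.ne, h.ne.symm, hr]

theorem deform_pow_fixedVector (h : IsTransfer U a y i₁ i₂ l ψ x) (t : k) (n : ℕ) :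
    ((U + t • ψ.smulRight x) ^ n) (fixedVector U a y i₁ i₂ l) =
      (U ^ n) (fixedVector U a y i₁ i₂ l) :=
  add_smul_smulRight_pow_apply x t fun r _ ↦ h.form_pow_fixedVector r

theorem deform_pow_fixedVector_eq_zero (h : IsTransfer U a y i₁ i₂ l ψ x) (t : k) {n : ℕ}
    (hn : a i₁ + a i₂ ≤ n + l) :
    ((U + t • ψ.smulRight x) ^ n) (fixedVector U a y i₁ i₂ l) = 0 := by
  have := h.length_le
  have := h.le_length
  rw [h.deform_pow_fixedVector, fixedVector, map_sub, pow_apply_pow_apply,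
    h.system.pow_apply_eq_zero (by omega), h.system.pow_apply_eq_zero (by omega), sub_zero]

theorem deform_pow_length (h : IsTransfer U a y i₁ i₂ l ψ x) (t : k) :
    ((U + t • ψ.smulRight x) ^ l) (y i₁) = ((U + t • ψ.smulRight x) ^ (a i₂ - 1))
      (t • fixedVector U a y i₁ i₂ l - (U + t • ψ.smulRight x) (fixedVector U a y i₁ i₂ l)) := by
  have hpos := h.pos
  have hle := h.le_length
  have hT : ((U + t • ψ.smulRight x) ^ (l - 1)) (y i₁) = (U ^ (l - 1)) (y i₁) :=
    add_smul_smulRight_pow_apply x t fun r hr ↦ by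
      rw [h.form_apply, if_neg]
      rintro (⟨-, hr'⟩ | ⟨hi, -⟩)
      exacts [by omega, h.ne hi]
  have hl : (U ^ l) (y i₁) = -(U ^ a i₂) (fixedVector U a y i₁ i₂ l) := by
    rw [fixedVector, map_sub, pow_apply_pow_apply, h.system.kill, Nat.add_sub_cancel' hle,
      zero_sub, neg_neg]
  calc ((U + t • ψ.smulRight x) ^ l) (y i₁)
      = (U ^ l) (y i₁) + t • x := by
        conv_lhs => rw [← Nat.sub_add_cancel (hpos.trans hle), pow_succ', End.mul_apply, hT]
        have hψ : ψ ((U ^ (l - 1)) (y i₁)) = 1 := by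
          rw [h.form_apply, if_pos (Or.inl ⟨rfl, Nat.sub_add_cancel (hpos.trans hle)⟩)]
        rw [LinearMap.add_apply, ← End.mul_apply, ← pow_succ',
          Nat.sub_add_cancel (hpos.trans hle)]
        simp [hψ]
    _ = t • (U ^ (a i₂ - 1)) (fixedVector U a y i₁ i₂ l) -
        (U ^ a i₂) (fixedVector U a y i₁ i₂ l) := by
        rw [hl, h.pow_fixedVector, neg_add_eq_sub]
    _ = _ := by
        rw [map_sub, map_smul, ← End.mul_apply _ _ (fixedVector U a y i₁ i₂ l), ← pow_succ,
          Nat.sub_add_cancel hpos, h.deform_pow_fixedVector, h.deform_pow_fixedVector]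

open scoped Classical in
/-- The generators of the Jordan blocks of `U + t • (ψ ⊗ x)`. -/
def deformGenerators (U : End k M) (a : ι → ℕ) (y : ι → M) (i₁ i₂ : ι) (l : ℕ) (ψ : Dual k M)
    (x : M) (t : k) : ι → M :=
  Function.update y i₂ (t • fixedVector U a y i₁ i₂ l -
    (U + t • ψ.smulRight x) (fixedVector U a y i₁ i₂ l) -
    ((U + t • ψ.smulRight x) ^ (l - a i₂ + 1)) (y i₁))

theorem deformGenerators_kill (h : IsTransfer U a y i₁ i₂ l ψ x) (t : k) (i : ι) :
    ((U + t • ψ.smulRight x) ^ transferSizes a i₁ i₂ i)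
      (deformGenerators U a y i₁ i₂ l ψ x t i) = 0 := by
  classical
  have hpos := h.pos
  have hle := h.le_length
  have hla := h.length_le
  by_cases h₂ : i = i₂
  · subst h₂
    rw [transferSizes_right, deformGenerators, Function.update_self, map_sub, pow_apply_pow_apply,
      show a i - 1 + (l - a i + 1) = l by omega, h.deform_pow_length, sub_self]
  by_cases h₁ : i = i₁
  · subst h₁
    rw [transferSizes_left a h₂, deformGenerators, Function.update_of_ne h₂,
      show a i + 1 = a i + 1 - l + l by omega, ← pow_apply_pow_apply, h.deform_pow_length,
      pow_apply_pow_apply, map_sub, map_smul,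
      ← End.mul_apply _ _ (fixedVector U a y i i₂ l), ← pow_succ,
      h.deform_pow_fixedVector_eq_zero t (by omega),
      h.deform_pow_fixedVector_eq_zero t (by omega), smul_zero, sub_zero]
  · rw [transferSizes_of_ne a h₁ h₂, deformGenerators, Function.update_of_ne h₂,
      add_smul_smulRight_pow_apply x t fun r _ ↦ by simp [h.form_apply, h₁, h₂], h.system.kill]

theorem deformGenerators_generate (h : IsTransfer U a y i₁ i₂ l ψ x) {t : k} (ht : t ≠ 0)
    {W : Submodule k M} (hW : ∀ v ∈ W, (U + t • ψ.smulRight x) v ∈ W)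
    (hyW : ∀ i, deformGenerators U a y i₁ i₂ l ψ x t i ∈ W) : W = ⊤ := by
  classical
  have hy {i} (hi : i ≠ i₂) : y i ∈ W := by
    simpa [deformGenerators, Function.update_of_ne hi] using hyW i
  have hz : t • fixedVector U a y i₁ i₂ l -
      (U + t • ψ.smulRight x) (fixedVector U a y i₁ i₂ l) ∈ W := by
    have h₂ := hyW i₂
    rw [deformGenerators, Function.update_self] at h₂
    exact (Submodule.sub_mem_iff_left _ (End.pow_apply_mem_of_forall_mem _ hW _ (hy h.ne))).1 h₂
  have pow_mem (n : ℕ) : ((U + t • ψ.smulRight x) ^ n) (fixedVector U a y i₁ i₂ l) ∈ W := by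
    rcases le_total (a i₁ + a i₂) n with hn | hn
    · rw [h.deform_pow_fixedVector_eq_zero t (hn.trans le_self_add)]
      exact W.zero_mem
    · induction hn using Nat.decreasingInduction with
      | self =>
        rw [h.deform_pow_fixedVector_eq_zero t le_self_add]
        exact W.zero_mem
      | of_succ n _ ih =>
        have hn := End.pow_apply_mem_of_forall_mem n hW _ hz
        rw [map_sub, ← End.mul_apply _ _ (fixedVector U a y i₁ i₂ l), ← pow_succ, map_smul] at hn
        exact (W.smul_mem_iff ht).1 ((Submodule.sub_mem_iff_left _ ih).1 hn)
  have hx : x ∈ W := by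
    rw [← h.pow_fixedVector, ← h.deform_pow_fixedVector t]
    exact pow_mem _
  have hUW (v) (hv : v ∈ W) : U v ∈ W := by
    have := W.sub_mem (hW v hv) (W.smul_mem (t * ψ v) hx)
    simpa [mul_smul] using this
  refine h.system.eq_top_of_forall_mem hUW fun i ↦ ?_
  by_cases hi : i = i₂
  · have := W.add_mem (pow_mem 0) (End.pow_apply_mem_of_forall_mem (l - a i₂) hUW _ (hy h.ne))
    simpa [fixedVector, hi] using this
  · exact hy hi

theorem isJordanSystem_deform [Finite ι] (h : IsTransfer U a y i₁ i₂ l ψ x) {t : k} (ht : t ≠ 0) :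
    IsJordanSystem (U + t • ψ.smulRight x) (transferSizes a i₁ i₂)
      (deformGenerators U a y i₁ i₂ l ψ x t) := by
  have := Fintype.ofFinite ι
  refine .of_generates (h.deformGenerators_kill t)
    (fun W ↦ h.deformGenerators_generate ht) ?_
  have hsum := sum_transferSizes id a h.ne
  have hpos := h.pos
  have hdim := h.system.finrank_eq
  dsimp only [id] at hsum
  omega

end IsTransfer

/-- The sum of the ranks of `U ^ s` for `s < m`, which measures how degenerate `U` is. -/
def rankSum (m : ℕ) (U : End k M) : ℕ :=
  ∑ s ∈ Finset.range m, finrank k (LinearMap.range (U ^ s))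

theorem rankSum_le [FiniteDimensional k M] (m : ℕ) (U : End k M) :
    rankSum m U ≤ m * finrank k M := by
  simpa [rankSum] using Finset.sum_le_card_nsmul (Finset.range m) _ _
    fun s _ ↦ Submodule.finrank_le (LinearMap.range (U ^ s))

namespace IsTransfer

variable [Finite ι] {U : End k M} {a : ι → ℕ} {y : ι → M} {i₁ i₂ : ι} {l m : ℕ} {ψ : Dual k M}
  {x : M}

theorem rankSum_lt (h : IsTransfer U a y i₁ i₂ l ψ x) (hm : a i₁ < m) {t : k} (ht : t ≠ 0) :
    rankSum m U < rankSum m (U + t • ψ.smulRight x) := by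
  have := Fintype.ofFinite ι
  have := h.pos
  have hle := h.le_length.trans h.length_le
  simp only [rankSum, h.system.finrank_range_pow, (h.isJordanSystem_deform ht).finrank_range_pow]
  refine Finset.sum_lt_sum (fun s _ ↦ ?_) ⟨a i₁, Finset.mem_range.2 hm, ?_⟩
  · have := sum_transferSizes (· - s) a h.ne
    omega
  · have := sum_transferSizes (· - a i₁) a h.ne
    omega

theorem deform_pow_eq_zero (h : IsTransfer U a y i₁ i₂ l ψ x) (hm : a i₁ < m) (hU : U ^ m = 0)
    (t : k) : (U + t • ψ.smulRight x) ^ m = 0 := by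
  rcases eq_or_ne t 0 with rfl | ht
  · simpa using hU
  refine (h.isJordanSystem_deform ht).pow_eq_zero fun i ↦ ?_
  have hle := h.system.le_of_pow_eq_zero hU
  by_cases h₂ : i = i₂
  · rw [h₂, transferSizes_right]
    exact (Nat.sub_le _ _).trans (hle _)
  by_cases h₁ : i = i₁
  · rwa [h₁, transferSizes_left a h.ne]
  · rw [transferSizes_of_ne a h₁ h₂]
    exact hle i

end IsTransfer

end Transfer

section Deformation

open Module Filter

variable {k : Type*} [Field k] {M N ι κ : Type*} [AddCommGroup M] [Module k M]
  [AddCommGroup N] [Module k N]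

/-- `f` is a homomorphism between the representations `U` and `V` of `k[x]/(x^m)`. -/
structure IsHomTriple (m : ℕ) (U : End k M) (V : End k N) (f : M →ₗ[k] N) : Prop where
  left_pow : U ^ m = 0
  right_pow : V ^ m = 0
  comm : f ∘ₗ U = V ∘ₗ f

/-- The homomorphism `f : (M, U) → (N, V)` lies on a line of homomorphisms all of whose other
points have a source or a target that is less degenerate, as measured by `rankSum`. -/
def Deformable (m : ℕ) (U : End k M) (V : End k N) (f : M →ₗ[k] N) : Prop :=
  ∃ A B g, ∀ t : k, IsHomTriple m (U + t • A) (V + t • B) (f + t • g) ∧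
    (t ≠ 0 → rankSum m U + rankSum m V < rankSum m (U + t • A) + rankSum m (V + t • B))

/-- Indices of two distinct nonzero blocks, the larger one of size less than `m`, so that a box
can be moved from the block `i₂` to the block `i₁`. -/
structure IsTransferPair (m : ℕ) (a : ι → ℕ) (i₁ i₂ : ι) : Prop where
  ne : i₁ ≠ i₂
  pos : 1 ≤ a i₂
  le : a i₂ ≤ a i₁
  lt : a i₁ < m

variable {m : ℕ} {U : End k M} {V : End k N} {f : M →ₗ[k] N} {a : ι → ℕ} {y : ι → M} {β : κ → ℕ}
  {c : κ → N} {i₁ i₂ : ι} {j₁ j₂ : κ}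

theorem IsJordanSystem.exists_isTransferPair [Finite ι] (h : IsJordanSystem U a y) (hm : 0 < m)
    (hU : U ^ m = 0) (hgen : ¬HasGenericJordanType m U) :
    ∃ i₁ i₂, IsTransferPair m a i₁ i₂ := by
  by_contra! hpair
  exact hgen <| h.hasGenericJordanType hm (h.le_of_pow_eq_zero hU) fun i j hij hi hji ↦
    Nat.eq_zero_of_not_pos fun hj ↦ hpair i j ⟨hij, hj, hji, hi⟩

theorem IsHomTriple.add_smul (hf : IsHomTriple m U V f) {g : M →ₗ[k] N} (hg : g ∘ₗ U = V ∘ₗ g)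
    (s : k) : IsHomTriple m U V (f + s • g) := by
  refine ⟨hf.left_pow, hf.right_pow, ?_⟩
  rw [LinearMap.add_comp, LinearMap.smul_comp, LinearMap.comp_add, LinearMap.comp_smul, hf.comm, hg]

theorem eventually_injective_add_smul_one [FiniteDimensional k N] (E : End k N) :
    ∀ᶠ s : k in cofinite, Function.Injective ⇑(E + s • (1 : End k N)) := by
  have : ∀ᶠ s : k in cofinite, ¬E.HasEigenvalue (-s) :=
    neg_injective.tendsto_cofinite.eventually E.finite_hasEigenvalue.eventually_cofinite_notMem
  filter_upwards [this] with s hs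
  rw [End.hasEigenvalue_iff, not_not, End.eigenspace_def, LinearMap.ker_eq_bot] at hs
  simpa [sub_neg_eq_add] using hs

theorem IsJordanSystem.exists_lift_pair (h : IsJordanSystem U a y) (V : End k N)
    (ne : i₁ ≠ i₂) {n₁ n₂ : N} (hn₁ : (V ^ a i₁) n₁ = 0) (hn₂ : (V ^ a i₂) n₂ = 0) :
    ∃ g : M →ₗ[k] N, g ∘ₗ U = V ∘ₗ g ∧ g (y i₁) = n₁ ∧ g (y i₂) = n₂ ∧
      ∀ i, i ≠ i₁ → i ≠ i₂ → g (y i) = 0 := by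
  classical
  obtain ⟨g, hgU, hg⟩ := h.exists_lift V (fun i ↦ if i = i₁ then n₁ else if i = i₂ then n₂ else 0)
    fun i ↦ by split_ifs <;> simp_all
  exact ⟨g, hgU, by simp [hg], by simp [hg, ne.symm], fun i h₁ h₂ ↦ by simp [hg, h₁, h₂]⟩

section

variable [Finite ι]

theorem IsTransfer.deformable_of_mem_range {l : ℕ} {ψ : Dual k M} {x : M}
    (h : IsTransfer U a y i₁ i₂ l ψ x) (hf : IsHomTriple m U V f) (hm : a i₁ < m)
    (hx : f x ∈ LinearMap.range (V ^ l)) : Deformable m U V f := by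
  obtain ⟨δ, hδ⟩ := hx
  refine ⟨ψ.smulRight x, 0, homCorrection U V ψ δ l, fun t ↦ ⟨⟨?_, ?_, ?_⟩, fun ht ↦ ?_⟩⟩
  · exact h.deform_pow_eq_zero hm hf.left_pow t
  · simpa using hf.right_pow
  · rw [smul_zero, add_zero]
    exact add_homCorrection_comp_eq hf.comm h.form_comp_pow h.form_pow_vector hδ.symm t
  · rw [smul_zero, add_zero]
    exact Nat.add_lt_add_right (h.rankSum_lt hm ht) _

theorem IsJordanSystem.sub_smul_mem_range_pow (hV : IsJordanSystem V β c) {n₁ n₂ : N} {a b l : ℕ}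
    (hb : 1 ≤ b) (hbl : b ≤ l) (hla : l ≤ a) (hn₁ : (V ^ a) n₁ = 0) (hn₂ : (V ^ b) n₂ = 0) (r : k)
    (hr : ∀ j, b ≤ β j → β j ≤ a → β j = l ∧
      hV.topForm j ((V ^ (b - 1)) n₂) = r * hV.topForm j ((V ^ (l - 1)) n₁)) :
    (V ^ (b - 1)) n₂ - r • (V ^ (l - 1)) n₁ ∈ LinearMap.range (V ^ l) := by
  have vanish {j n} (hn : β j ≤ n) (v) : hV.topForm j ((V ^ n) v) = 0 :=
    LinearMap.congr_fun (hV.topForm_comp_pow_eq_zero hn) v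
  refine hV.mem_range_pow fun j s hs ↦ ?_
  rw [map_sub, map_smul, pow_apply_pow_apply, pow_apply_pow_apply, map_sub, map_smul, smul_eq_mul,
    sub_eq_zero]
  rcases lt_or_ge (β j) b with hβb | hbβ
  · rw [vanish (by omega), vanish (by omega), mul_zero]
  rcases Nat.eq_zero_or_pos s with rfl | hs₀
  · simpa using (hr j hbβ (by omega)).2
  · rw [End.pow_map_zero_of_le (by omega) hn₂, map_zero]
    rcases le_or_gt (β j) a with hβa | haβ
    · rw [vanish (by have := (hr j hbβ hβa).1; omega), mul_zero]
    · rw [End.pow_map_zero_of_le (by omega) hn₁, map_zero, mul_zero]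

theorem IsTransferPair.deformable_of_topForm_eq (hp : IsTransferPair m a i₁ i₂)
    (hU : IsJordanSystem U a y) (hV : IsJordanSystem V β c) (hf : IsHomTriple m U V f) {l : ℕ}
    (le_length : a i₂ ≤ l) (length_le : l ≤ a i₁) (r : kˣ)
    (hr : ∀ j, a i₂ ≤ β j → β j ≤ a i₁ → β j = l ∧
      hV.topForm j ((V ^ (a i₂ - 1)) (f (y i₂))) =
        r * hV.topForm j ((V ^ (l - 1)) (f (y i₁)))) : Deformable m U V f := by
  classical
  obtain ⟨ψ, hψ⟩ := (hU.smul (Function.update 1 i₁ r)).exists_isTransfer hp.ne hp.pos le_length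
    length_le
  refine hψ.deformable_of_mem_range hf hp.lt ?_
  have kill (i) : (V ^ a i) (f (y i)) = 0 := by
    rw [← apply_pow_of_comp_eq hf.comm, hU.kill, map_zero]
  have := hV.sub_smul_mem_range_pow hp.pos le_length length_le (kill i₁) (kill i₂) r hr
  simpa [Function.update_of_ne hp.ne.symm, apply_pow_of_comp_eq hf.comm, Units.smul_def] using this

theorem IsTransferPair.exists_eventually_deformable_of_subsingleton
    (hp : IsTransferPair m a i₁ i₂) (hU : IsJordanSystem U a y) (hV : IsJordanSystem V β c)
    (hf : IsHomTriple m U V f) {j : κ} (hj₂ : a i₂ ≤ β j) (hj₁ : β j ≤ a i₁)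
    (hj : ∀ j', a i₂ ≤ β j' → β j' ≤ a i₁ → j' = j) :
    ∃ g : M →ₗ[k] N, g ∘ₗ U = V ∘ₗ g ∧ ∀ᶠ s : k in cofinite, Deformable m U V (f + s • g) := by
  obtain ⟨g, hgU, hg₁, hg₂, -⟩ := hU.exists_lift_pair V hp.ne (n₁ := c j)
    (n₂ := (V ^ (β j - a i₂)) (c j)) (hV.pow_apply_eq_zero hj₁) (by
      rw [pow_apply_pow_apply, hV.pow_apply_eq_zero (by omega)])
  refine ⟨g, hgU, ?_⟩
  have hpos := hp.pos
  let p := hV.topForm j ((V ^ (β j - 1)) (f (y i₁)))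
  let q := hV.topForm j ((V ^ (a i₂ - 1)) (f (y i₂)))
  filter_upwards [eventually_cofinite_ne (-p), eventually_cofinite_ne (-q)] with s hsp hsq
  have hps : p + s ≠ 0 := fun h ↦ hsp (eq_neg_of_add_eq_zero_right h)
  have hqs : q + s ≠ 0 := fun h ↦ hsq (eq_neg_of_add_eq_zero_right h)
  refine hp.deformable_of_topForm_eq hU hV (hf.add_smul hgU s) hj₂ hj₁
    (Units.mk0 ((q + s) / (p + s)) (div_ne_zero hqs hps)) fun j' hj'₂ hj'₁ ↦ ?_
  obtain rfl := hj j' hj'₂ hj'₁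
  have h₁ : hV.topForm j' ((V ^ (β j' - 1)) ((f + s • g) (y i₁))) = p + s := by
    have : β j' - 1 + 1 = β j' := by omega
    simp [hg₁, hV.topForm_pow_apply, p, this]
  have h₂ : hV.topForm j' ((V ^ (a i₂ - 1)) ((f + s • g) (y i₂))) = q + s := by
    have : a i₂ - 1 + (β j' - a i₂) + 1 = β j' := by omega
    simp [hg₂, hV.topForm_pow_apply, q, pow_apply_pow_apply, this]
  rw [h₁, h₂, Units.val_mk0, div_mul_cancel₀ _ hps]
  exact ⟨rfl, rfl⟩

open scoped Classical in
theorem IsJordanSystem.sub_apply_projection (h : IsJordanSystem U a y) {P : End k M}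
    (hP : P ∘ₗ U = U ∘ₗ P)
    (hrange : ∀ W : Submodule k M, (∀ v ∈ W, U v ∈ W) → y i₁ ∈ W → y i₂ ∈ W →
      LinearMap.range P ≤ W) :
    IsJordanSystem U a fun i ↦ if i = i₁ ∨ i = i₂ then y i else y i - P (y i) := by
  have := Fintype.ofFinite ι
  refine .of_generates (fun i ↦ ?_) (fun W hW hyW ↦ ?_) h.finrank_eq.symm
  · split_ifs
    · exact h.kill i
    · rw [map_sub, ← apply_pow_of_comp_eq hP, h.kill, map_zero, sub_zero]
  · have hPW := hrange W hW (by simpa using hyW i₁) (by simpa using hyW i₂)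
    refine h.eq_top_of_forall_mem hW fun i ↦ ?_
    have hi := hyW i
    split_ifs at hi
    · exact hi
    · exact (W.sub_mem_iff_left (hPW (LinearMap.mem_range_self P _))).1 hi

theorem IsJordanSystem.exists_splitting (hU : IsJordanSystem U a y) (hV : IsJordanSystem V β c)
    (hf : f ∘ₗ U = V ∘ₗ f) (hj : j₁ ≠ j₂) (hβ₁ : β j₁ = a i₁) (hβ₂ : β j₂ = a i₂)
    (hf₁ : f (y i₁) = c j₁) (hf₂ : f (y i₂) = c j₂) :
    ∃ (g : N →ₗ[k] M) (z : ι → M), g ∘ₗ V = U ∘ₗ g ∧ IsJordanSystem U a z ∧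
      z i₁ = y i₁ ∧ z i₂ = y i₂ ∧ (∀ i, i ≠ i₁ → i ≠ i₂ → g (f (z i)) = 0) ∧
      g (c j₁) = z i₁ ∧ g (c j₂) = z i₂ ∧ ∀ j, j ≠ j₁ → j ≠ j₂ → g (c j) = 0 := by
  obtain ⟨g, hgV, hg₁, hg₂, hg₀⟩ := hV.exists_lift_pair U hj (n₁ := y i₁) (n₂ := y i₂)
    (hβ₁ ▸ hU.kill i₁) (hβ₂ ▸ hU.kill i₂)
  have forall_of {Q : κ → Prop} (h₁ : Q j₁) (h₂ : Q j₂) (h₀ : ∀ j, j ≠ j₁ → j ≠ j₂ → Q j) (j) :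
      Q j := by
    by_cases hj₁ : j = j₁
    · exact hj₁ ▸ h₁
    by_cases hj₂ : j = j₂
    exacts [hj₂ ▸ h₂, h₀ j hj₁ hj₂]
  have hgf : (g ∘ₗ f) ∘ₗ U = U ∘ₗ g ∘ₗ f := by
    rw [LinearMap.comp_assoc, hf, ← LinearMap.comp_assoc, hgV, LinearMap.comp_assoc]
  have hgfg : (g ∘ₗ f) ∘ₗ g = g := hV.hom_ext
    (by rw [LinearMap.comp_assoc, hgV, ← LinearMap.comp_assoc, hgf, LinearMap.comp_assoc]) hgV
    (forall_of (by simp [hg₁, hf₁]) (by simp [hg₂, hf₂]) fun j h₁ h₂ ↦ by simp [hg₀ j h₁ h₂])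
  have range_le (W : Submodule k M) (hW : ∀ v ∈ W, U v ∈ W) (h₁ : y i₁ ∈ W) (h₂ : y i₂ ∈ W) :
      LinearMap.range (g ∘ₗ f) ≤ W := by
    have comap_eq_top : W.comap g = ⊤ := hV.eq_top_of_forall_mem
      (fun n hn ↦ (LinearMap.congr_fun hgV n ▸ hW _ hn : g (V n) ∈ W))
      (forall_of (hg₁ ▸ h₁ : g (c j₁) ∈ W) (hg₂ ▸ h₂ : g (c j₂) ∈ W) fun j hj₁ hj₂ ↦
        (hg₀ j hj₁ hj₂ ▸ W.zero_mem : g (c j) ∈ W))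
    rintro _ ⟨v, rfl⟩
    exact (comap_eq_top ▸ trivial : f v ∈ W.comap g)
  refine ⟨g, _, hgV, hU.sub_apply_projection (i₁ := i₁) (i₂ := i₂) hgf range_le, by simp, by simp,
    fun i h₁ h₂ ↦ ?_, by simpa using hg₁, by simpa using hg₂, hg₀⟩
  have : g (f (g (f (y i)))) = g (f (y i)) := LinearMap.congr_fun hgfg (f (y i))
  simp [h₁, h₂, this]

theorem IsTransferPair.exists_compatible_isTransfer (hp : IsTransferPair m a i₁ i₂)
    (hU : IsJordanSystem U a y) (hV : IsJordanSystem V β c) (hf : f ∘ₗ U = V ∘ₗ f)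
    (hj : j₁ ≠ j₂) (hβ₁ : β j₁ = a i₁) (hβ₂ : β j₂ = a i₂) (hf₁ : f (y i₁) = c j₁)
    (hf₂ : f (y i₂) = c j₂) :
    ∃ ψ x z, IsTransfer U a z i₁ i₂ (a i₁) (ψ ∘ₗ f) x ∧
      IsTransfer V β c j₁ j₂ (a i₁) ψ (f x) := by
  obtain ⟨g, z, hgV, hz, hz₁, hz₂, hz₀, hg₁, hg₂, hg₀⟩ :=
    hU.exists_splitting hV hf hj hβ₁ hβ₂ hf₁ hf₂
  obtain ⟨χ, hχ⟩ := hz.exists_isTransfer hp.ne hp.pos hp.le le_rfl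
  refine ⟨χ ∘ₗ g, _, z, ⟨hz, hp.ne, hp.pos, hp.le, le_rfl, fun i r ↦ ?_, rfl⟩,
    ⟨hV, hj, hβ₂ ▸ hp.pos, hβ₂ ▸ hp.le, hβ₁.ge, fun j r ↦ ?_, ?_⟩⟩
  · rw [LinearMap.comp_apply, LinearMap.comp_apply, apply_pow_of_comp_eq hf,
      apply_pow_of_comp_eq hgV]
    by_cases h₁ : i = i₁
    · rw [h₁, hz₁, hf₁, hg₁, hχ.form_apply]
    by_cases h₂ : i = i₂
    · rw [h₂, hz₂, hf₂, hg₂, hχ.form_apply]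
    · simp [h₁, h₂, hz₀ i h₁ h₂]
  · rw [LinearMap.comp_apply, apply_pow_of_comp_eq hgV]
    by_cases h₁ : j = j₁
    · simp [h₁, hg₁, hχ.form_apply, hp.ne, hj]
    by_cases h₂ : j = j₂
    · simp [h₂, hg₂, hχ.form_apply, hp.ne.symm, hj.symm, hβ₂]
    · simp [h₁, h₂, hg₀ j h₁ h₂]
  · rw [map_sub, apply_pow_of_comp_eq hf, apply_pow_of_comp_eq hf, hz₁, hz₂, hf₁, hf₂, hβ₂]

variable [Finite κ]

theorem IsTransferPair.deformable_of_apply_eq (hp : IsTransferPair m a i₁ i₂)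
    (hU : IsJordanSystem U a y) (hV : IsJordanSystem V β c) (hf : IsHomTriple m U V f)
    (hj : j₁ ≠ j₂) (hβ₁ : β j₁ = a i₁) (hβ₂ : β j₂ = a i₂) (hf₁ : f (y i₁) = c j₁)
    (hf₂ : f (y i₂) = c j₂) : Deformable m U V f := by
  obtain ⟨ψ, x, z, hψU, hψV⟩ :=
    hp.exists_compatible_isTransfer hU hV hf.comm hj hβ₁ hβ₂ hf₁ hf₂
  have hm : β j₁ < m := hβ₁ ▸ hp.lt
  refine ⟨(ψ ∘ₗ f).smulRight x, ψ.smulRight (f x), 0, fun t ↦ ⟨⟨?_, ?_, ?_⟩, fun ht ↦ ?_⟩⟩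
  · exact hψU.deform_pow_eq_zero hp.lt hf.left_pow t
  · exact hψV.deform_pow_eq_zero hm hf.right_pow t
  · ext v
    have : f (U v) = V (f v) := LinearMap.congr_fun hf.comm v
    simp [this]
  · exact Nat.add_lt_add (hψU.rankSum_lt hp.lt ht) (hψV.rankSum_lt hm ht)

theorem IsTransferPair.exists_eventually_deformable_of_eq (hp : IsTransferPair m a i₁ i₂)
    (hU : IsJordanSystem U a y) (hV : IsJordanSystem V β c) (hf : IsHomTriple m U V f)
    (hj : j₁ ≠ j₂) (hβ₁ : β j₁ = a i₁) (hβ₂ : β j₂ = a i₂) :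
    ∃ g : M →ₗ[k] N, g ∘ₗ U = V ∘ₗ g ∧ ∀ᶠ s : k in cofinite, Deformable m U V (f + s • g) := by
  have kill (i) : (V ^ a i) (f (y i)) = 0 := by
    rw [← apply_pow_of_comp_eq hf.comm, hU.kill, map_zero]
  obtain ⟨g, hgU, hg₁, hg₂, -⟩ := hU.exists_lift_pair V hp.ne (n₁ := c j₁) (n₂ := c j₂)
    (hβ₁ ▸ hV.kill j₁) (hβ₂ ▸ hV.kill j₂)
  obtain ⟨E, hEV, hE₁, hE₂, -⟩ := hV.exists_lift_pair V hj (n₁ := f (y i₁)) (n₂ := f (y i₂))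
    (hβ₁ ▸ kill i₁) (hβ₂ ▸ kill i₂)
  refine ⟨g, hgU, ?_⟩
  have := Module.Finite.of_basis hV.basis
  filter_upwards [eventually_injective_add_smul_one E] with s hs
  let φ := LinearEquiv.ofInjectiveEndo _ hs
  have hφ (n) : φ n = E n + s • n := by simp [φ]
  refine hp.deformable_of_apply_eq hU (hV.map (V := V) φ ?_) (hf.add_smul hgU s) hj hβ₁ hβ₂ ?_ ?_
  · ext n
    have : E (V n) = V (E n) := LinearMap.congr_fun hEV n
    simp [hφ, this]
  · simp [hφ, hg₁, hE₁]
  · simp [hφ, hg₂, hE₂]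

theorem IsTransferPair.exists_eventually_deformable (hp : IsTransferPair m a i₁ i₂)
    (hU : IsJordanSystem U a y) (hV : IsJordanSystem V β c) (hf : IsHomTriple m U V f)
    (hmin : ∀ j₁ j₂, IsTransferPair m β j₁ j₂ → a i₁ - a i₂ ≤ β j₁ - β j₂) :
    ∃ g : M →ₗ[k] N, g ∘ₗ U = V ∘ₗ g ∧ ∀ᶠ s : k in cofinite, Deformable m U V (f + s • g) := by
  have hpos := hp.pos
  have hlt := hp.lt
  by_cases hex : ∃ j, a i₂ ≤ β j ∧ β j ≤ a i₁
  · obtain ⟨j, hj₂, hj₁⟩ := hex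
    by_cases hsub : ∀ j', a i₂ ≤ β j' → β j' ≤ a i₁ → j' = j
    · exact hp.exists_eventually_deformable_of_subsingleton hU hV hf hj₂ hj₁ hsub
    push Not at hsub
    obtain ⟨j', hj'₂, hj'₁, hne⟩ := hsub
    rcases le_total (β j) (β j') with hle | hle
    · have := hmin j' j ⟨hne, by omega, hle, by omega⟩
      exact hp.exists_eventually_deformable_of_eq hU hV hf hne (by omega) (by omega)
    · have := hmin j j' ⟨hne.symm, by omega, hle, by omega⟩
      exact hp.exists_eventually_deformable_of_eq hU hV hf hne.symm (by omega) (by omega)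
  · push Not at hex
    refine ⟨0, by simp, .of_forall fun s ↦ ?_⟩
    rw [smul_zero, add_zero]
    exact hp.deformable_of_topForm_eq hU hV hf hp.le le_rfl 1 fun j hj₂ hj₁ ↦
      absurd hj₁ (hex j hj₂).not_ge

end
end Deformation

section Duality

open Module Filter

variable {k : Type*} [Field k] {M N : Type*} [AddCommGroup M] [Module k M]
  [AddCommGroup N] [Module k N] {m : ℕ} {U : End k M} {V : End k N} {f : M →ₗ[k] N}

theorem dualMap_add_smul (f g : M →ₗ[k] N) (t : k) :
    (f + t • g).dualMap = f.dualMap + t • g.dualMap := by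
  simp only [LinearMap.dualMap_def, map_add, map_smul]

theorem rankSum_dualMap (m : ℕ) (U : End k M) : rankSum m U.dualMap = rankSum m U := by
  refine Finset.sum_congr rfl fun s _ ↦ ?_
  rw [← dualMap_pow, LinearMap.finrank_range_dualMap_eq_finrank_range]

variable [FiniteDimensional k N]

theorem exists_dualMap_eq (g : Dual k N →ₗ[k] Dual k M) : ∃ f : M →ₗ[k] N, f.dualMap = g := by
  refine ⟨(evalEquiv k N).symm ∘ₗ g.dualMap ∘ₗ Dual.eval k M, ?_⟩
  ext φ v
  simp

variable [FiniteDimensional k M]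

theorem dualMap_inj {f g : M →ₗ[k] N} : f.dualMap = g.dualMap ↔ f = g :=
  ⟨fun h ↦ (dualMap_dualMap_eq_iff k M).1 (congrArg LinearMap.dualMap h), congrArg _⟩

theorem dualMap_pow_eq_zero_iff : U.dualMap ^ m = 0 ↔ U ^ m = 0 := by
  rw [← dualMap_pow, ← dualMap_inj (f := U ^ m), LinearMap.dualMap_def 0, map_zero]

theorem isHomTriple_dualMap :
    IsHomTriple m V.dualMap U.dualMap f.dualMap ↔ IsHomTriple m U V f := by
  have comm : f.dualMap ∘ₗ V.dualMap = U.dualMap ∘ₗ f.dualMap ↔ f ∘ₗ U = V ∘ₗ f := by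
    rw [LinearMap.dualMap_comp_dualMap, LinearMap.dualMap_comp_dualMap, dualMap_inj, eq_comm]
  exact ⟨fun ⟨hV, hU, hf⟩ ↦ ⟨dualMap_pow_eq_zero_iff.1 hU, dualMap_pow_eq_zero_iff.1 hV, comm.1 hf⟩,
    fun ⟨hU, hV, hf⟩ ↦ ⟨dualMap_pow_eq_zero_iff.2 hV, dualMap_pow_eq_zero_iff.2 hU, comm.2 hf⟩⟩

theorem Deformable.of_dualMap (h : Deformable m V.dualMap U.dualMap f.dualMap) :
    Deformable m U V f := by
  obtain ⟨A', B', g', hdef⟩ := h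
  obtain ⟨A, rfl⟩ := exists_dualMap_eq A'
  obtain ⟨B, rfl⟩ := exists_dualMap_eq B'
  obtain ⟨g, rfl⟩ := exists_dualMap_eq g'
  simp only [← dualMap_add_smul, isHomTriple_dualMap, rankSum_dualMap] at hdef
  exact ⟨B, A, g, fun t ↦ ⟨(hdef t).1, fun ht ↦ by have := (hdef t).2 ht; omega⟩⟩

theorem IsHomTriple.exists_eventually_deformable (hf : IsHomTriple m U V f) (hm : 0 < m)
    (hgen : ¬(HasGenericJordanType m U ∧ HasGenericJordanType m V)) :
    ∃ g : M →ₗ[k] N, g ∘ₗ U = V ∘ₗ g ∧ ∀ᶠ s : k in cofinite, Deformable m U V (f + s • g) := by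
  obtain ⟨p, a, y, hy⟩ := exists_isJordanSystem_of_isNilpotent ⟨m, hf.left_pow⟩
  obtain ⟨q, b, z, hz⟩ := exists_isJordanSystem_of_isNilpotent ⟨m, hf.right_pow⟩
  let IsGap (n : ℕ) : Prop := (∃ i₁ i₂, IsTransferPair m a i₁ i₂ ∧ a i₁ - a i₂ = n) ∨
    ∃ j₁ j₂, IsTransferPair m b j₁ j₂ ∧ b j₁ - b j₂ = n
  have hgap : ∃ n, IsGap n := by
    rcases not_and_or.1 hgen with hU | hV
    · obtain ⟨i₁, i₂, hp⟩ := hy.exists_isTransferPair hm hf.left_pow hU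
      exact ⟨_, .inl ⟨i₁, i₂, hp, rfl⟩⟩
    · obtain ⟨j₁, j₂, hp⟩ := hz.exists_isTransferPair hm hf.right_pow hV
      exact ⟨_, .inr ⟨j₁, j₂, hp, rfl⟩⟩
  classical
  have min_gap {n} (hn : IsGap n) : Nat.find hgap ≤ n := Nat.find_min' hgap hn
  rcases Nat.find_spec hgap with ⟨i₁, i₂, hp, hn⟩ | ⟨j₁, j₂, hp, hn⟩
  · exact hp.exists_eventually_deformable hy hz hf fun j₁ j₂ hq ↦
      hn.trans_le (min_gap (.inr ⟨j₁, j₂, hq, rfl⟩))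
  · obtain ⟨g', hg', hdef⟩ := hp.exists_eventually_deformable hz.dualMap hy.dualMap
      (isHomTriple_dualMap.2 hf) fun i₁ i₂ hq ↦
        hn.trans_le (min_gap (.inl ⟨i₁, i₂, hq, rfl⟩))
    obtain ⟨g, rfl⟩ := exists_dualMap_eq g'
    rw [LinearMap.dualMap_comp_dualMap, LinearMap.dualMap_comp_dualMap, dualMap_inj] at hg'
    exact ⟨g, hg'.symm, hdef.mono fun s hs ↦ .of_dualMap (dualMap_add_smul f g s ▸ hs)⟩

/-- A set containing every point `p` such that almost all points of some line through `p` belong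
to the set. Over an infinite field, Zariski closed sets have this property. -/
def IsLineClosed (k : Type*) {E : Type*} [Ring k] [AddCommGroup E] [Module k E] (Z : Set E) :
    Prop :=
  ∀ p q : E, (∀ᶠ t : k in cofinite, p + t • q ∈ Z) → p ∈ Z

theorem IsLineClosed.mem_of_isHomTriple {Z : Set (End k M × End k N × (M →ₗ[k] N))}
    (hZ : IsLineClosed k Z) (hm : 0 < m)
    (generic : ∀ U V f, IsHomTriple m U V f → HasGenericJordanType m U →
      HasGenericJordanType m V → (U, V, f) ∈ Z) (hf : IsHomTriple m U V f) : (U, V, f) ∈ Z := by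
  induction h : m * finrank k M + m * finrank k N - (rankSum m U + rankSum m V)
    using Nat.strong_induction_on generalizing U V f with
  | _ n ih =>
    by_cases hgen : HasGenericJordanType m U ∧ HasGenericJordanType m V
    · exact generic U V f hf hgen.1 hgen.2
    obtain ⟨g, -, hdef⟩ := hf.exists_eventually_deformable hm hgen
    refine hZ (U, V, f) (0, 0, g) (hdef.mono fun s ⟨A, B, h, hline⟩ ↦ ?_)
    have mem : (U, V, f + s • g) ∈ Z := hZ _ (A, B, h) <| by
      filter_upwards [eventually_cofinite_ne (0 : k)] with t ht
      have hlt := (hline t).2 ht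
      have := rankSum_le m (U + t • A)
      have := rankSum_le m (V + t • B)
      exact ih (m * finrank k M + m * finrank k N -
        (rankSum m (U + t • A) + rankSum m (V + t • B))) (by omega) (hline t).1 rfl
    simpa using mem

end Duality

section HomVariety

open Module Filter Polynomial

theorem isIrreducible_of_dense_of_forall_exists {X : Type*} [TopologicalSpace X] {s t : Set X}
    (nonempty : s.Nonempty) (dense : s ⊆ closure t)
    (h : ∀ x ∈ t, ∀ y ∈ t, ∃ S ⊆ s, IsPreirreducible S ∧ x ∈ S ∧ y ∈ S) : IsIrreducible s := by
  refine ⟨nonempty, fun u v hu hv ⟨x, hxs, hxu⟩ ⟨y, hys, hyv⟩ ↦ ?_⟩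
  obtain ⟨x', hx'u, hx't⟩ := mem_closure_iff.1 (dense hxs) u hu hxu
  obtain ⟨y', hy'v, hy't⟩ := mem_closure_iff.1 (dense hys) v hv hyv
  obtain ⟨S, hSs, hS, hx'S, hy'S⟩ := h x' hx't y' hy't
  obtain ⟨z, hzS, hz⟩ := hS u v hu hv ⟨x', hx'S, hx'u⟩ ⟨y', hy'S, hy'v⟩
  exact ⟨z, hSs hzS, hz⟩

variable {k : Type*} [Field k]

attribute [local instance] cTop

theorem isOpen_setOf_aeval_cCoords_ne_zero {d e : ℕ} (p : MvPolynomial (CIdx d e) k) :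
    IsOpen {x : CSpace k d e | MvPolynomial.aeval (cCoords x) p ≠ 0} :=
  @isOpen_induced _ _ (zariskiTop k (CIdx d e)) cCoords _ (.basic _ ⟨p, rfl⟩)

theorem isOpen_setOf_aeval_ne_zero (p : k[X]) :
    IsOpen {t : CofiniteTopology k | aeval (CofiniteTopology.of.symm t) p ≠ 0} := by
  rw [CofiniteTopology.isOpen_iff']
  rcases eq_or_ne p 0 with rfl | hp
  · simp
  · refine Or.inr (((p.rootSet_finite k).image CofiniteTopology.of).subset fun t ht ↦ ?_)
    exact ⟨CofiniteTopology.of.symm t, mem_rootSet.2 ⟨hp, not_not.1 ht⟩, rfl⟩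

/-- The point of `CSpace k d e` obtained from three matrices over a ring `R` by a map `φ : R → k`;
the matrices form a family of points parametrised by such maps. -/
def CSpace.specialize {R : Type*} {d e : ℕ} (φ : R → k) (U : Matrix (Fin e) (Fin e) R)
    (V : Matrix (Fin d) (Fin d) R) (Z : Matrix (Fin d) (Fin e) R) : CSpace k d e :=
  (U.map φ, V.map φ, Z.map φ)

theorem CSpace.continuous_specialize {X R : Type*} [TopologicalSpace X] [CommRing R] [Algebra k R]
    {ev : X → R →ₐ[k] k} (hev : ∀ r, IsOpen {x | ev x r ≠ 0}) {d e : ℕ}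
    (U : Matrix (Fin e) (Fin e) R) (V : Matrix (Fin d) (Fin d) R) (Z : Matrix (Fin d) (Fin e) R) :
    Continuous fun x ↦ CSpace.specialize (ev x) U V Z := by
  let coords : CIdx d e → R :=
    Sum.elim (fun i ↦ U i.1 i.2) (Sum.elim (fun i ↦ V i.1 i.2) fun i ↦ Z i.1 i.2)
  have coords_specialize (x : X) :
      cCoords (CSpace.specialize (ev x) U V Z) = fun i ↦ ev x (coords i) := by
    funext i
    rcases i with i | i | i <;> rfl
  refine continuous_induced_rng.2 (continuous_generateFrom_iff.2 ?_)
  rintro _ ⟨p, rfl⟩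
  convert hev (MvPolynomial.aeval coords p) using 1
  ext x
  simp only [Set.mem_preimage, Function.comp_apply, coords_specialize, Set.mem_ofPred_eq,
    MvPolynomial.comp_aeval_apply, MvPolynomial.aeval_eq_eval]

/-- The point of `CSpace k d e` whose entries are the matrices of three linear maps. -/
def CSpace.ofLinearMaps {d e : ℕ}
    (p : End k (Fin e → k) × End k (Fin d → k) × ((Fin e → k) →ₗ[k] Fin d → k)) : CSpace k d e :=
  (LinearMap.toMatrix' p.1, LinearMap.toMatrix' p.2.1, LinearMap.toMatrix' p.2.2)

/-- The line `A + X • B` of matrices, as a matrix of polynomials in the parameter `X`. -/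
def lineMatrix {n p : Type*} (A B : Matrix n p k) : Matrix n p k[X] :=
  A.map C + (X : k[X]) • B.map C

theorem lineMatrix_map_aeval {n p : Type*} (A B : Matrix n p k) (t : k) :
    (lineMatrix A B).map (aeval t) = A + t • B := by
  ext i j
  simp [lineMatrix, mul_comm t]

theorem CSpace.continuous_line {d e : ℕ}
    (p q : End k (Fin e → k) × End k (Fin d → k) × ((Fin e → k) →ₗ[k] Fin d → k)) :
    Continuous fun t : CofiniteTopology k ↦
      CSpace.ofLinearMaps (p + CofiniteTopology.of.symm t • q) := by
  convert CSpace.continuous_specialize isOpen_setOf_aeval_ne_zero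
    (lineMatrix (LinearMap.toMatrix' p.1) (LinearMap.toMatrix' q.1))
    (lineMatrix (LinearMap.toMatrix' p.2.1) (LinearMap.toMatrix' q.2.1))
    (lineMatrix (LinearMap.toMatrix' p.2.2) (LinearMap.toMatrix' q.2.2)) using 2
  simp only [CSpace.ofLinearMaps, CSpace.specialize, lineMatrix_map_aeval, Prod.fst_add,
    Prod.snd_add, Prod.smul_fst, Prod.smul_snd, map_add, map_smul]
  rfl

theorem isLineClosed_preimage_ofLinearMaps [Infinite k] {d e : ℕ} {Z : Set (CSpace k d e)}
    (hZ : IsClosed Z) : IsLineClosed k (CSpace.ofLinearMaps ⁻¹' Z) := by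
  intro p q hpq
  rcases CofiniteTopology.isClosed_iff.1 (hZ.preimage (CSpace.continuous_line p q)) with h | h
  · have : p + (0 : k) • q ∈ CSpace.ofLinearMaps ⁻¹' Z :=
      Set.eq_univ_iff_forall.1 h (CofiniteTopology.of 0)
    rwa [zero_smul, add_zero] at this
  · obtain ⟨t, ht, ht'⟩ := (hpq.and
      (h.preimage CofiniteTopology.of.injective.injOn).eventually_cofinite_notMem).exists
    exact absurd ht ht'

/-- The matrices `U`, `V`, `f` define a homomorphism of representations of `R[x]/(x^m)`. -/
structure IsHomMatrixTriple {R n p : Type*} [CommRing R] [Fintype n] [DecidableEq n] [Fintype p]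
    [DecidableEq p] (m : ℕ) (U : Matrix p p R) (V : Matrix n n R) (f : Matrix n p R) : Prop where
  left_pow : U ^ m = 0
  right_pow : V ^ m = 0
  comm : f * U = V * f

section Algebra

variable {R S n p : Type*} [CommRing R] [CommRing S] [Fintype n] [DecidableEq n] [Fintype p]
  [DecidableEq p] {m : ℕ} {U : Matrix p p R} {V : Matrix n n R} {f : Matrix n p R}

theorem IsHomMatrixTriple.map (h : IsHomMatrixTriple m U V f) (φ : R →+* S) :
    IsHomMatrixTriple m (U.map φ) (V.map φ) (f.map φ) := by
  refine ⟨?_, ?_, ?_⟩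
  · rw [← Matrix.map_pow, h.left_pow, Matrix.map_zero _ φ.map_zero]
  · rw [← Matrix.map_pow, h.right_pow, Matrix.map_zero _ φ.map_zero]
  · rw [← Matrix.map_mul, h.comm, Matrix.map_mul]

theorem mul_mul_adjugate_pow_succ (G U : Matrix p p R) (r : ℕ) :
    (G * U * G.adjugate) ^ (r + 1) = G.det ^ r • (G * U ^ (r + 1) * G.adjugate) := by
  induction r with
  | zero => simp
  | succ r ih =>
    calc (G * U * G.adjugate) ^ (r + 1 + 1)
        = G.det ^ r • (G * U ^ (r + 1) * (G.adjugate * G) * U * G.adjugate) := by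
          rw [pow_succ, ih]
          simp only [Matrix.smul_mul, Matrix.mul_assoc]
      _ = G.det ^ (r + 1) • (G * U ^ (r + 1 + 1) * G.adjugate) := by
          rw [Matrix.adjugate_mul, pow_succ U (r + 1), pow_succ G.det r]
          simp [Matrix.mul_assoc, smul_smul]

theorem IsHomMatrixTriple.twist (h : IsHomMatrixTriple m U V f) (hm : 0 < m) (G : Matrix p p R)
    (H : Matrix n n R) (r : R) :
    IsHomMatrixTriple m ((r * H.det) • (G * U * G.adjugate)) ((r * G.det) • (H * V * H.adjugate))
      (H * f * G.adjugate) := by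
  obtain ⟨m, rfl⟩ := Nat.exists_eq_add_one.2 hm
  refine ⟨?_, ?_, ?_⟩
  · rw [_root_.smul_pow, mul_mul_adjugate_pow_succ, h.left_pow]
    simp
  · rw [_root_.smul_pow, mul_mul_adjugate_pow_succ, h.right_pow]
    simp
  · calc H * f * G.adjugate * ((r * H.det) • (G * U * G.adjugate))
        = (r * H.det) • (H * f * (G.adjugate * G) * U * G.adjugate) := by
          simp only [Matrix.mul_smul, Matrix.mul_assoc]
      _ = (r * G.det) • (H * V * (H.adjugate * H) * f * G.adjugate) := by
          simp only [Matrix.adjugate_mul, Matrix.mul_smul, Matrix.smul_mul, Matrix.mul_one,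
            smul_smul, Matrix.mul_assoc H, h.comm]
          congr 1; ring
      _ = (r * G.det) • (H * V * H.adjugate) * (H * f * G.adjugate) := by
          simp only [Matrix.smul_mul, Matrix.mul_assoc]

end Algebra

/-- The variety `H_Λ(e, d)` of homomorphisms of representations of `Λ = k[x]/(x^m)`. -/
def homVariety (k : Type*) [Field k] (m d e : ℕ) : Set (CSpace k d e) :=
  {x | x.1 ^ m = 0 ∧ x.2.1 ^ m = 0 ∧ x.2.2 * x.1 = x.2.1 * x.2.2}

variable {m d e : ℕ}

theorem mem_homVariety_iff {x : CSpace k d e} :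
    x ∈ homVariety k m d e ↔ IsHomMatrixTriple m x.1 x.2.1 x.2.2 :=
  ⟨fun ⟨hU, hV, hf⟩ ↦ ⟨hU, hV, hf⟩, fun ⟨hU, hV, hf⟩ ↦ ⟨hU, hV, hf⟩⟩

theorem isHomTriple_toLin'_iff {x : CSpace k d e} :
    IsHomTriple m (Matrix.toLin' x.1) (Matrix.toLin' x.2.1) (Matrix.toLin' x.2.2) ↔
      x ∈ homVariety k m d e := by
  constructor
  · rintro ⟨hU, hV, hf⟩
    refine ⟨?_, ?_, ?_⟩ <;> apply Matrix.toLin'.injective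
    · rw [Matrix.toLin'_pow, hU, map_zero]
    · rw [Matrix.toLin'_pow, hV, map_zero]
    · rw [Matrix.toLin'_mul, hf, Matrix.toLin'_mul]
  · rintro ⟨hU, hV, hf⟩
    refine ⟨?_, ?_, ?_⟩
    · rw [← Matrix.toLin'_pow, hU, map_zero]
    · rw [← Matrix.toLin'_pow, hV, map_zero]
    · rw [← Matrix.toLin'_mul, hf, Matrix.toLin'_mul]

theorem zero_mem_homVariety (hm : 0 < m) :
    ((0, 0, 0) : CSpace k d e) ∈ homVariety k m d e :=
  ⟨zero_pow hm.ne', zero_pow hm.ne', by simp⟩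

/-- The points of `homVariety k m d e` whose two representations have generic Jordan type. -/
def genericHomVariety (k : Type*) [Field k] (m d e : ℕ) : Set (CSpace k d e) :=
  {x ∈ homVariety k m d e |
    HasGenericJordanType m (Matrix.toLin' x.1) ∧ HasGenericJordanType m (Matrix.toLin' x.2.1)}

theorem homVariety_subset_closure_genericHomVariety [Infinite k] (hm : 0 < m) :
    homVariety k m d e ⊆ closure (genericHomVariety k m d e) := by
  intro x hx
  suffices CSpace.ofLinearMaps (Matrix.toLin' x.1, Matrix.toLin' x.2.1, Matrix.toLin' x.2.2) ∈
      closure (genericHomVariety k m d e) by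
    simp only [CSpace.ofLinearMaps, LinearMap.toMatrix'_toLin'] at this
    exact this
  refine (isLineClosed_preimage_ofLinearMaps (k := k) isClosed_closure).mem_of_isHomTriple hm
    (fun U V f h hU hV ↦ Set.mem_preimage.2 (subset_closure ⟨isHomTriple_toLin'_iff.1 ?_, ?_⟩))
    (isHomTriple_toLin'_iff.2 hx)
  · simpa [CSpace.ofLinearMaps] using h
  · simpa [CSpace.ofLinearMaps] using And.intro hU hV

theorem exists_conj_of_hasGenericJordanType {U U' : Matrix (Fin e) (Fin e) k}
    (hU : HasGenericJordanType m (Matrix.toLin' U))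
    (hU' : HasGenericJordanType m (Matrix.toLin' U')) :
    ∃ g : Matrix (Fin e) (Fin e) k, IsUnit g.det ∧ g * U = U' * g := by
  obtain ⟨φ, hφ⟩ := hU.exists_equiv hU' rfl
  refine ⟨LinearMap.toMatrix' φ.toLinearMap, ?_, ?_⟩
  · rw [LinearMap.det_toMatrix']
    exact LinearEquiv.isUnit_det' φ
  · simpa [LinearMap.toMatrix'_comp] using congrArg LinearMap.toMatrix' hφ

theorem IsHomMatrixTriple.line {U : Matrix (Fin e) (Fin e) k} {V : Matrix (Fin d) (Fin d) k}
    {f f' : Matrix (Fin d) (Fin e) k} (h : IsHomMatrixTriple m U V f)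
    (h' : IsHomMatrixTriple m U V f') :
    IsHomMatrixTriple m (U.map C) (V.map C) (lineMatrix f (f' - f)) := by
  have := h.map (C : k →+* k[X])
  have comm_sub : (f' - f).map C * U.map C = V.map C * (f' - f).map C := by
    rw [← Matrix.map_mul, ← Matrix.map_mul, Matrix.sub_mul, Matrix.mul_sub, h.comm, h'.comm]
  refine ⟨this.left_pow, this.right_pow, ?_⟩
  rw [lineMatrix, Matrix.add_mul, Matrix.mul_add, this.comm, Matrix.smul_mul, Matrix.mul_smul,
    comm_sub]

/-- The value under `φ : R → k` of the triple of `IsHomMatrixTriple.twist`. For `R = k` it is a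
rescaling of the transport of `(U, V, f)` along `G` and `H`. -/
def CSpace.twist {R : Type*} [CommRing R] (φ : R →+* k) (G : Matrix (Fin e) (Fin e) R)
    (H : Matrix (Fin d) (Fin d) R) (r : R) (U : Matrix (Fin e) (Fin e) R)
    (V : Matrix (Fin d) (Fin d) R) (f : Matrix (Fin d) (Fin e) R) : CSpace k d e :=
  CSpace.specialize φ ((r * H.det) • (G * U * G.adjugate)) ((r * G.det) • (H * V * H.adjugate))
    (H * f * G.adjugate)

theorem CSpace.twist_eq_twist_map {R : Type*} [CommRing R] (φ : R →+* k)
    (G : Matrix (Fin e) (Fin e) R) (H : Matrix (Fin d) (Fin d) R) (r : R)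
    (U : Matrix (Fin e) (Fin e) R) (V : Matrix (Fin d) (Fin d) R) (f : Matrix (Fin d) (Fin e) R) :
    CSpace.twist φ G H r U V f = CSpace.twist (RingHom.id k) (G.map φ) (H.map φ) (φ r) (U.map φ)
      (V.map φ) (f.map φ) := by
  have map_adjugate {n : Type} [Fintype n] [DecidableEq n] (A : Matrix n n R) :
      A.adjugate.map φ = (A.map φ).adjugate := φ.map_adjugate A
  simp only [CSpace.twist, CSpace.specialize, Matrix.map_smul' φ _ _ (map_mul φ), Matrix.map_mul,
    map_adjugate, map_mul, RingHom.map_det, RingHom.mapMatrix_apply]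
  rfl

theorem CSpace.twist_one (U : Matrix (Fin e) (Fin e) k) (V : Matrix (Fin d) (Fin d) k)
    (f : Matrix (Fin d) (Fin e) k) : CSpace.twist (RingHom.id k) 1 1 1 U V f = (U, V, f) := by
  simp only [CSpace.twist, CSpace.specialize, Matrix.det_one, Matrix.adjugate_one, mul_one,
    one_smul, Matrix.one_mul, Matrix.mul_one]
  rfl

theorem CSpace.twist_of_conj {g U U' : Matrix (Fin e) (Fin e) k} {h V V' : Matrix (Fin d) (Fin d) k}
    (hg : IsUnit g.det) (hh : IsUnit h.det) (hgU : g * U = U' * g) (hhV : h * V = V' * h)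
    (f : Matrix (Fin d) (Fin e) k) :
    CSpace.twist (RingHom.id k) g h (g.det * h.det)⁻¹ U V (g.det⁻¹ • (h⁻¹ * f * g)) =
      (U', V', f) := by
  have hg' := hg.ne_zero
  have hh' := hh.ne_zero
  have left : ((g.det * h.det)⁻¹ * h.det) • (g * U * g.adjugate) = U' := by
    rw [hgU, Matrix.mul_assoc, Matrix.mul_adjugate, Matrix.mul_smul, smul_smul, Matrix.mul_one]
    field_simp
    simp
  have right : ((g.det * h.det)⁻¹ * g.det) • (h * V * h.adjugate) = V' := by
    rw [hhV, Matrix.mul_assoc, Matrix.mul_adjugate, Matrix.mul_smul, smul_smul, Matrix.mul_one]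
    field_simp
    simp
  have hom : h * (g.det⁻¹ • (h⁻¹ * f * g)) * g.adjugate = f := by
    calc h * (g.det⁻¹ • (h⁻¹ * f * g)) * g.adjugate
        = g.det⁻¹ • (h * h⁻¹ * f * (g * g.adjugate)) := by
          simp only [Matrix.mul_smul, Matrix.smul_mul, Matrix.mul_assoc]
      _ = f := by
          simp [Matrix.mul_nonsing_inv h hh, Matrix.mul_adjugate, hg']
  rw [CSpace.twist, CSpace.specialize, left, right, hom]
  rfl

theorem pullback_comm {g U U' : Matrix (Fin e) (Fin e) k} {h V V' : Matrix (Fin d) (Fin d) k}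
    {f : Matrix (Fin d) (Fin e) k} (hh : IsUnit h.det) (hgU : g * U = U' * g)
    (hhV : h * V = V' * h) (hf : f * U' = V' * f) :
    h⁻¹ * f * g * U = V * (h⁻¹ * f * g) := by
  have conj_inv : h⁻¹ * V' = V * h⁻¹ := by
    rw [← Matrix.mul_nonsing_inv_cancel_right h (h⁻¹ * V') hh, Matrix.mul_assoc h⁻¹, ← hhV,
      Matrix.nonsing_inv_mul_cancel_left h V hh]
  calc h⁻¹ * f * g * U = h⁻¹ * (f * U') * g := by simp only [Matrix.mul_assoc, hgU]
    _ = h⁻¹ * V' * f * g := by simp only [hf, Matrix.mul_assoc]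
    _ = V * (h⁻¹ * f * g) := by simp only [conj_inv, Matrix.mul_assoc]

theorem exists_path_of_conj [Infinite k] (hm : 0 < m) {x y : CSpace k d e}
    (hx : x ∈ homVariety k m d e) (hy : y ∈ homVariety k m d e) {g : Matrix (Fin e) (Fin e) k}
    {h : Matrix (Fin d) (Fin d) k} (hg : IsUnit g.det) (hh : IsUnit h.det) (hgU : g * x.1 = y.1 * g)
    (hhV : h * x.2.1 = y.2.1 * h) :
    ∃ S ⊆ homVariety k m d e, IsPreirreducible S ∧ x ∈ S ∧ y ∈ S := by
  rw [mem_homVariety_iff] at hx hy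
  obtain ⟨U, V, f⟩ := x
  obtain ⟨U', V', f'⟩ := y
  have hx' : IsHomMatrixTriple m U V (g.det⁻¹ • (h⁻¹ * f' * g)) := by
    refine ⟨hx.left_pow, hx.right_pow, ?_⟩
    rw [Matrix.smul_mul, Matrix.mul_smul, pullback_comm hh hgU hhV hy.comm]
  let G := lineMatrix 1 (g - 1)
  let H := lineMatrix 1 (h - 1)
  let r : k[X] := 1 + X * C ((g.det * h.det)⁻¹ - 1)
  let F := lineMatrix f (g.det⁻¹ • (h⁻¹ * f' * g) - f)
  let path (t : CofiniteTopology k) : CSpace k d e :=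
    CSpace.twist (aeval (CofiniteTopology.of.symm t) : k[X] →ₐ[k] k) G H r (U.map C) (V.map C) F
  have path_apply (t : k) : path (CofiniteTopology.of t) = CSpace.twist (RingHom.id k)
      (1 + t • (g - 1)) (1 + t • (h - 1)) (1 + t * ((g.det * h.det)⁻¹ - 1)) U V
      (f + t • (g.det⁻¹ • (h⁻¹ * f' * g) - f)) := by
    have map_C {n p : Type} (A : Matrix n p k) : (A.map C).map (aeval t) = A := by ext; simp
    refine (CSpace.twist_eq_twist_map _ G H r _ _ F).trans ?_
    simp only [G, H, r, F, CofiniteTopology.of, RingHom.coe_coe, lineMatrix_map_aeval, map_C,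
      map_add, map_mul, map_one, aeval_X, aeval_C, Algebra.algebraMap_self,
      RingHom.id_apply, Equiv.symm_apply_apply]
  refine ⟨Set.range path, ?_, ?_, ⟨CofiniteTopology.of 0, ?_⟩, ⟨CofiniteTopology.of 1, ?_⟩⟩
  · rintro _ ⟨t, rfl⟩
    exact mem_homVariety_iff.2 (((hx.line hx').twist hm G H r).map _)
  · rw [← Set.image_univ]
    exact (IrreducibleSpace.isIrreducible_univ _).isPreirreducible.image path
      (CSpace.continuous_specialize isOpen_setOf_aeval_ne_zero _ _ _).continuousOn
  · simpa [path_apply] using CSpace.twist_one U V f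
  · simpa [path_apply] using CSpace.twist_of_conj hg hh hgU hhV f'

theorem isIrreducible_homVariety [Infinite k] (hm : 0 < m) :
    IsIrreducible (homVariety k m d e) := by
  refine isIrreducible_of_dense_of_forall_exists ⟨_, zero_mem_homVariety hm⟩
    (homVariety_subset_closure_genericHomVariety hm) fun x hx y hy ↦ ?_
  obtain ⟨g, hg, hgU⟩ := exists_conj_of_hasGenericJordanType hx.2.1 hy.2.1
  obtain ⟨h, hh, hhV⟩ := exists_conj_of_hasGenericJordanType hx.2.2 hy.2.2
  exact exists_path_of_conj hm hx.1 hy.1 hg hh hgU hhV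

end HomVariety

section ExtProjection

open Matrix

variable {R S n l : Type*} [CommRing R] [CommRing S] [Fintype n] [DecidableEq n]

theorem fromBlocks_zero₂₁_pow [Fintype l] [DecidableEq l] (V : Matrix n n R) (Z : Matrix n l R)
    (U : Matrix l l R) (m : ℕ) :
    fromBlocks V Z 0 U ^ m =
      fromBlocks (V ^ m) (∑ i ∈ Finset.range m, V ^ (m - 1 - i) * Z * U ^ i) 0 (U ^ m) := by
  induction m with
  | zero => simp [fromBlocks_one]
  | succ m ih =>
    rw [pow_succ', ih, fromBlocks_multiply]
    congr 1
    · simp [pow_succ']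
    · rw [Finset.sum_range_succ, Matrix.mul_sum]
      congr 1
      · refine Finset.sum_congr rfl fun i hi ↦ ?_
        have : m + 1 - 1 - i = m - 1 - i + 1 := by
          have := Finset.mem_range.1 hi
          omega
        simp only [this, pow_succ', Matrix.mul_assoc]
      · simp
    · simp
    · simp [pow_succ']

theorem fromBlocks_zero₂₁_pow_eq_zero_iff [Fintype l] [DecidableEq l] {V : Matrix n n R}
    {Z : Matrix n l R} {U : Matrix l l R} {m : ℕ} :
    fromBlocks V Z 0 U ^ m = 0 ↔
      U ^ m = 0 ∧ V ^ m = 0 ∧ ∑ i ∈ Finset.range m, V ^ (m - 1 - i) * Z * U ^ i = 0 := by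
  rw [fromBlocks_zero₂₁_pow, ← fromBlocks_zero, fromBlocks_inj]
  tauto

theorem fromRows_one_zero_mul [Fintype l] (V : Matrix n n R) (Z : Matrix n l R)
    (U : Matrix l l R) :
    fromRows 1 (0 : Matrix l n R) * V =
      fromBlocks V Z 0 U * fromRows (1 : Matrix n n R) (0 : Matrix l n R) := by
  rw [fromRows_mul, fromBlocks_mul_fromRows]
  simp

/-- If the upper block `f₁` of `f` is invertible, then a homomorphism `f` from `A` to `X` is
injective with free cokernel, so conjugating `X` makes it block upper triangular with `A` as upper
left block. These are the blocks `(U, V, Z)` of the result, with denominators cleared by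
`det f₁`. -/
def extProjection (A : Matrix n n R) (X : Matrix (n ⊕ l) (n ⊕ l) R) (f : Matrix (n ⊕ l) n R) :
    Matrix l l R × Matrix n n R × Matrix n l R :=
  (f.toRows₁.det • X.toBlocks₂₂ - f.toRows₂ * f.toRows₁.adjugate * X.toBlocks₁₂,
    f.toRows₁.det • A, f.toRows₁.adjugate * X.toBlocks₁₂)

theorem extProjection_map (φ : R →+* S) (A : Matrix n n R) (X : Matrix (n ⊕ l) (n ⊕ l) R)
    (f : Matrix (n ⊕ l) n R) :
    extProjection (A.map φ) (X.map φ) (f.map φ) =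
      ((extProjection A X f).1.map φ, (extProjection A X f).2.1.map φ,
        (extProjection A X f).2.2.map φ) := by
  have map_adjugate (B : Matrix n n R) : B.adjugate.map φ = (B.map φ).adjugate :=
    φ.map_adjugate B
  have rows₁ : (f.map φ).toRows₁ = f.toRows₁.map φ := rfl
  have rows₂ : (f.map φ).toRows₂ = f.toRows₂.map φ := rfl
  have blocks₁₂ : (X.map φ).toBlocks₁₂ = X.toBlocks₁₂.map φ := rfl
  have blocks₂₂ : (X.map φ).toBlocks₂₂ = X.toBlocks₂₂.map φ := rfl
  simp [extProjection, rows₁, rows₂, blocks₁₂, blocks₂₂, map_adjugate, Matrix.map_sub,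
    Matrix.map_smul', RingHom.map_det]

theorem fromBlocks_extProjection_pow_eq_zero [Fintype l] [DecidableEq l] {A : Matrix n n R}
    {X : Matrix (n ⊕ l) (n ⊕ l) R} {f : Matrix (n ⊕ l) n R} {m : ℕ} (hX : X ^ m = 0)
    (hf : f * A = X * f) (hdet : IsUnit f.toRows₁.det) :
    fromBlocks (extProjection A X f).2.1 (extProjection A X f).2.2 0 (extProjection A X f).1 ^ m
      = 0 := by
  set B := fromBlocks (extProjection A X f).2.1 (extProjection A X f).2.2 0 (extProjection A X f).1
  let g : Matrix (n ⊕ l) (n ⊕ l) R := fromBlocks f.toRows₁ 0 f.toRows₂ 1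
  have hg : IsUnit g :=
    isUnit_fromBlocks_zero₁₂.2 ⟨(isUnit_iff_isUnit_det _).2 hdet, isUnit_one⟩
  have semiconj : SemiconjBy g B (f.toRows₁.det • X) := by
    have hf' : fromRows (f.toRows₁ * A) (f.toRows₂ * A) =
        fromRows (X.toBlocks₁₁ * f.toRows₁ + X.toBlocks₁₂ * f.toRows₂)
          (X.toBlocks₂₁ * f.toRows₁ + X.toBlocks₂₂ * f.toRows₂) := by
      rw [← fromRows_mul, ← fromBlocks_mul_fromRows, fromRows_toRows, fromBlocks_toBlocks, hf]
    obtain ⟨hf₁, hf₂⟩ := fromRows_inj hf'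
    rw [SemiconjBy, ← fromBlocks_toBlocks X, fromBlocks_smul, fromBlocks_multiply,
      fromBlocks_multiply]
    simp [extProjection, hf₁, hf₂, ← Matrix.mul_assoc, mul_adjugate]
  have := semiconj.pow_right m
  rw [_root_.smul_pow, hX, smul_zero, SemiconjBy, zero_mul] at this
  exact hg.mul_right_eq_zero.1 this

end ExtProjection

section ExtVariety

open Matrix

variable {k : Type*} [Field k] {m d e : ℕ}

attribute [local instance] cTop

/-- The variety `E_Λ(e, d)` of cocycles of extensions of representations of `Λ = k[x]/(x^m)`. -/
def extVariety (k : Type*) [Field k] (m d e : ℕ) : Set (CSpace k d e) :=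
  {x | x.1 ^ m = 0 ∧ x.2.1 ^ m = 0 ∧
    ∑ i ∈ Finset.range m, x.2.1 ^ (m - 1 - i) * x.2.2 * x.1 ^ i = 0}

/-- The matrix of coordinate functions of the first component of a point of `CSpace k d e`. -/
def genericLeft (k : Type*) [Field k] (d e : ℕ) :
    Matrix (Fin e) (Fin e) (MvPolynomial (CIdx d e) k) :=
  .of fun i j ↦ MvPolynomial.X (Sum.inl (i, j))

/-- The matrix of coordinate functions of the second component of a point of `CSpace k d e`. -/
def genericRight (k : Type*) [Field k] (d e : ℕ) :
    Matrix (Fin d) (Fin d) (MvPolynomial (CIdx d e) k) :=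
  .of fun i j ↦ MvPolynomial.X (Sum.inr (Sum.inl (i, j)))

/-- The matrix of coordinate functions of the third component of a point of `CSpace k d e`. -/
def genericHom (k : Type*) [Field k] (d e : ℕ) :
    Matrix (Fin d) (Fin e) (MvPolynomial (CIdx d e) k) :=
  .of fun i j ↦ MvPolynomial.X (Sum.inr (Sum.inr (i, j)))

theorem genericLeft_map (x : CSpace k d e) :
    (genericLeft k d e).map (MvPolynomial.aeval (cCoords x)) = x.1 :=
  Matrix.ext fun _ _ ↦ MvPolynomial.aeval_X _ _

theorem genericRight_map (x : CSpace k d e) :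
    (genericRight k d e).map (MvPolynomial.aeval (cCoords x)) = x.2.1 :=
  Matrix.ext fun _ _ ↦ MvPolynomial.aeval_X _ _

theorem genericHom_map (x : CSpace k d e) :
    (genericHom k d e).map (MvPolynomial.aeval (cCoords x)) = x.2.2 :=
  Matrix.ext fun _ _ ↦ MvPolynomial.aeval_X _ _

/-- The upper square block of the homomorphism of a point of `homVariety k m (d + e) d`. -/
def CSpace.upperBlock (x : CSpace k (d + e) d) : Matrix (Fin d) (Fin d) k :=
  (x.2.2.submatrix finSumFinEquiv id).toRows₁

/-- The map `extProjection` on points, in block coordinates `Fin d ⊕ Fin e ≃ Fin (d + e)`. -/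
def CSpace.toExt (x : CSpace k (d + e) d) : CSpace k d e :=
  extProjection x.1 (x.2.1.submatrix finSumFinEquiv finSumFinEquiv)
    (x.2.2.submatrix finSumFinEquiv id)

/-- The inclusion of `V` into the extension of `U` by `V` with cocycle `Z`. -/
def CSpace.ofExt (x : CSpace k d e) : CSpace k (d + e) d :=
  (x.2.1, (fromBlocks x.2.1 x.2.2 0 x.1).submatrix finSumFinEquiv.symm finSumFinEquiv.symm,
    (fromRows 1 0).submatrix finSumFinEquiv.symm id)

theorem CSpace.toExt_ofExt (x : CSpace k d e) : x.ofExt.toExt = x := by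
  have submatrix_symm : ((fromBlocks x.2.1 x.2.2 0 x.1).submatrix finSumFinEquiv.symm
      finSumFinEquiv.symm).submatrix finSumFinEquiv finSumFinEquiv =
      fromBlocks x.2.1 x.2.2 0 x.1 := by ext; simp
  simp only [CSpace.toExt, CSpace.ofExt, extProjection, submatrix_symm, submatrix_submatrix,
    Equiv.symm_comp_self, Function.comp_id, submatrix_id_id, toRows₁_fromRows, toRows₂_fromRows,
    toBlocks_fromBlocks₁₂, toBlocks_fromBlocks₂₂, det_one, adjugate_one, one_smul, Matrix.zero_mul,
    Matrix.one_mul, sub_zero]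
  rfl

theorem CSpace.upperBlock_ofExt (x : CSpace k d e) : x.ofExt.upperBlock = 1 := by
  simp [CSpace.upperBlock, CSpace.ofExt]

theorem mem_extVariety_iff {x : CSpace k d e} :
    x ∈ extVariety k m d e ↔ fromBlocks x.2.1 x.2.2 0 x.1 ^ m = 0 :=
  fromBlocks_zero₂₁_pow_eq_zero_iff.symm

theorem submatrix_equiv_pow_eq_zero {n l : Type*} [Fintype n] [DecidableEq n] [Fintype l]
    [DecidableEq l] {X : Matrix n n k} (hX : X ^ m = 0) (σ : l ≃ n) :
    X.submatrix σ σ ^ m = 0 := by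
  have := map_pow (reindexAlgEquiv k k σ.symm) X m
  rw [hX, map_zero] at this
  exact this.symm

theorem CSpace.ofExt_mem_homVariety {x : CSpace k d e} (hx : x ∈ extVariety k m d e) :
    x.ofExt ∈ homVariety k m (d + e) d := by
  refine ⟨hx.2.1, submatrix_equiv_pow_eq_zero (mem_extVariety_iff.1 hx) _, ?_⟩
  obtain ⟨U, V, Z⟩ := x
  exact (congrArg (·.submatrix finSumFinEquiv.symm id) (fromRows_one_zero_mul V Z U)).trans
    (submatrix_mul_equiv (fromBlocks V Z 0 U) (fromRows 1 0) _ finSumFinEquiv.symm id).symm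

theorem CSpace.toExt_mem_extVariety {x : CSpace k (d + e) d} (hx : x ∈ homVariety k m (d + e) d)
    (hdet : x.upperBlock.det ≠ 0) : x.toExt ∈ extVariety k m d e := by
  refine mem_extVariety_iff.2 (fromBlocks_extProjection_pow_eq_zero
    (submatrix_equiv_pow_eq_zero hx.2.1 _) ?_ hdet.isUnit)
  rw [submatrix_mul_equiv, ← hx.2.2]
  rfl

theorem CSpace.continuous_toExt :
    Continuous (CSpace.toExt : CSpace k (d + e) d → CSpace k d e) := by
  let P := extProjection (genericLeft k (d + e) d)
    ((genericRight k (d + e) d).submatrix finSumFinEquiv finSumFinEquiv)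
    ((genericHom k (d + e) d).submatrix finSumFinEquiv id)
  convert CSpace.continuous_specialize isOpen_setOf_aeval_cCoords_ne_zero P.1 P.2.1 P.2.2 using 1
  funext x
  rw [CSpace.toExt, ← genericLeft_map x, ← genericRight_map x, ← genericHom_map x]
  exact extProjection_map (MvPolynomial.aeval (cCoords x) : _ →ₐ[k] k).toRingHom _ _ _

theorem CSpace.isOpen_setOf_det_upperBlock_ne_zero :
    IsOpen {x : CSpace k (d + e) d | x.upperBlock.det ≠ 0} := by
  convert isOpen_setOf_aeval_cCoords_ne_zero
    ((genericHom k (d + e) d).submatrix finSumFinEquiv id).toRows₁.det using 4 with x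
  rw [AlgHom.map_det, CSpace.upperBlock, ← genericHom_map x]
  rfl

theorem image_toExt_homVariety :
    CSpace.toExt '' (homVariety k m (d + e) d ∩ {x | x.upperBlock.det ≠ 0}) =
      extVariety k m d e := by
  refine Set.Subset.antisymm ?_ fun x hx ↦ ?_
  · rintro _ ⟨x, ⟨hx, hdet⟩, rfl⟩
    exact CSpace.toExt_mem_extVariety hx hdet
  · refine ⟨x.ofExt, ⟨CSpace.ofExt_mem_homVariety hx, ?_⟩, x.toExt_ofExt⟩
    simp [CSpace.upperBlock_ofExt]

theorem isPreirreducible_inter_of_isOpen {X : Type*} [TopologicalSpace X] {s u : Set X}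
    (hs : IsPreirreducible s) (hu : IsOpen u) : IsPreirreducible (s ∩ u) := by
  rintro v w hv hw ⟨x, ⟨hxs, hxu⟩, hxv⟩ ⟨y, ⟨hys, hyu⟩, hyw⟩
  obtain ⟨z, hzs, ⟨hzu, hzv⟩, -, hzw⟩ :=
    hs (u ∩ v) (u ∩ w) (hu.inter hv) (hu.inter hw) ⟨x, hxs, hxu, hxv⟩ ⟨y, hys, hyu, hyw⟩
  exact ⟨z, ⟨hzs, hzu⟩, hzv, hzw⟩

theorem isIrreducible_extVariety [Infinite k] (hm : 0 < m) :
    IsIrreducible (extVariety k m d e) := by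
  refine ⟨⟨(0, 0, 0), zero_pow hm.ne', zero_pow hm.ne', by simp⟩, ?_⟩
  rw [← image_toExt_homVariety]
  exact (isPreirreducible_inter_of_isOpen (isIrreducible_homVariety hm).isPreirreducible
    CSpace.isOpen_setOf_det_upperBlock_ne_zero).image _ CSpace.continuous_toExt.continuousOn

end ExtVariety

theorem k_x_mod_xm_hom_and_ext_irreducible_general (k : Type u) [Field k] [Infinite k]
    (m : ℕ) (hm : 1 ≤ m) (d e : ℕ) :
    @IsIrreducible _ (cTop k d e)
      {x : CSpace k d e | x.1 ^ m = 0 ∧ x.2.1 ^ m = 0 ∧ x.2.2 * x.1 = x.2.1 * x.2.2} ∧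
    @IsIrreducible _ (cTop k d e)
      {x : CSpace k d e | x.1 ^ m = 0 ∧ x.2.1 ^ m = 0 ∧
        ∑ i ∈ Finset.range m, x.2.1 ^ (m - 1 - i) * x.2.2 * x.1 ^ i = 0} :=
  ⟨isIrreducible_homVariety hm, isIrreducible_extVariety hm⟩

/-- For every `m ≥ 1` the algebra `Λ = k[x]/(x^m)` is hom-irreducible
and ext-irreducible: for all `d, e ∈ ℕ`, both the variety
`H_Λ(e,d) = {(U, V, f) : U^m = 0, V^m = 0, f U = V f}` and the variety
`E_Λ(e,d) = {(U, V, Z) : U^m = 0, V^m = 0, ∑_{i=0}^{m-1} V^{m-1-i} Z U^i = 0}`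
are irreducible. -/
theorem k_x_mod_xm_hom_and_ext_irreducible (k : Type u) [Field k] [IsAlgClosed k]
    (m : ℕ) (hm : 1 ≤ m) (d e : ℕ) :
    @IsIrreducible _ (cTop k d e)
      {x : CSpace k d e | x.1 ^ m = 0 ∧ x.2.1 ^ m = 0 ∧ x.2.2 * x.1 = x.2.1 * x.2.2} ∧
    @IsIrreducible _ (cTop k d e)
      {x : CSpace k d e | x.1 ^ m = 0 ∧ x.2.1 ^ m = 0 ∧
        ∑ i ∈ Finset.range m, x.2.1 ^ (m - 1 - i) * x.2.2 * x.1 ^ i = 0} := by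
  have : Infinite k := IsAlgClosed.instInfinite
  exact k_x_mod_xm_hom_and_ext_irreducible_general k m hm d e
end
end
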